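/- (Decision-tree complexity of line segment intersection counting in the plane.) There exist constants C and D such that for every n ≥ 1 there is an algebraic decision tree of degree at most D over ℝ^{4n}, whose input encodes n closed line segments in ℝ² by the coordinates of their endpoints, of depth at most C·n^{4/3}, that computes, on every input in general position (all 2n endpoints pairwise distinct and no endpoint of one segment lying on another segment), the number of unordered pairs {i,j} of distinct indices such that segment s_i and segment s_j intersect. -/

import Mathlib

/-!
The number of intersecting pairs is a function of the outcomes of the point-line comparisons,
whether an endpoint lies above the line through a segment, provided that the configuration is
generic. A non-generic input is moved along a polynomial curve whose parameter tends to infinity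
(`Co.path`): it eventually becomes generic (`Co.eventually_generic`), the intersecting pairs are
read off from the comparisons (`Co.eventually_inter_iff`), and the outcome of any comparison of
bounded degree is the sign of a leading coefficient, found by constantly many polynomial sign tests
on the unperturbed input (`Solv.toADT`).

It remains to learn all comparisons between `2 n` points and `n` lines with `O(n ^ (4/3))` tests.
Costs are amortised against the binary logarithm of the number of patterns of test outcomes that
are still possible (`lgPat`), which by a bound of Warren type is initially `O(n log n)` (`warren`).
In this accounting (`Learn`) the position of a value in a sorted list costs only `O(1)` plus the
potential lost (`Learn.search`). Hence `s` points and `N` lines are compared at cost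
`O(N + s ^ 2)` (`Learn.batch`): the slopes of the lines through two of the points are sorted, the
slope of each given line is located among them, which gives the order in which the line of that
slope sweeps over the points, and the line is then located in this order.

With a parameter `ρ` of size about `n ^ (1/120)` there are `40` levels of recursion
(`Tests.levels`). At each level a sample of fewer than `ρ` lines is taken; its vertical
decomposition has `O(ρ ^ 2)` trapezoids, the points are located in the trapezoids, and the lines
crossing each trapezoid are found by the batched comparison with its corners. By the
Clarkson–Shor inequality (`clarkson_shor`) a random sample yields trapezoids crossed by `O(N / ρ)`
lines on average, and one recurses into the trapezoids. As a tree is deterministic, the sample must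
be fixed in advance, so that it is good for all but a small fraction of the patterns. Its
quality is verified in stages of growing cost: if it fails at some stage, the potential has dropped
enough to pay for the work done so far, and one starts over (`findGood`, `sampleGood`, with
Chernoff bounds for the stages). After `40` levels the remaining subproblems are solved by
the batched comparison in groups of `ρ ^ 40` points. The total cost is `O(ρ ^ 160)`, plus `ρ ^ 39`
tests per unit of potential, and so `O(n ^ (4/3))` altogether (`total_le`).
-/

/-- An algebraic decision tree over `ℝ^N` with output values in `β`:
each internal node is labeled by a polynomial in `N` variables and has three
children corresponding to the sign (negative / zero / positive) of the
polynomial at the input; each leaf is labeled by an output value. -/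
inductive ADT (N : ℕ) (β : Type) : Type
  | leaf : β → ADT N β
  | node : MvPolynomial (Fin N) ℝ → ADT N β → ADT N β → ADT N β → ADT N β

namespace ADT

/-- Evaluating an algebraic decision tree on an input `x ∈ ℝ^N`. -/
noncomputable def eval {N : ℕ} {β : Type} : ADT N β → (Fin N → ℝ) → β
  | leaf b, _ => b
  | node p tneg tzero tpos, x =>
      if MvPolynomial.eval x p < 0 then tneg.eval x
      else if MvPolynomial.eval x p = 0 then tzero.eval x
      else tpos.eval x

/-- The depth of an algebraic decision tree: the maximum number of internal
nodes on a root-to-leaf path. -/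
def depth {N : ℕ} {β : Type} : ADT N β → ℕ
  | leaf _ => 0
  | node _ tneg tzero tpos => 1 + max (max tneg.depth tzero.depth) tpos.depth

/-- All node polynomials of the tree have total degree at most `D`. -/
def DegLE {N : ℕ} {β : Type} (D : ℕ) : ADT N β → Prop
  | leaf _ => True
  | node p tneg tzero tpos => p.totalDegree ≤ D ∧ tneg.DegLE D ∧ tzero.DegLE D ∧ tpos.DegLE D

end ADT

open scoped Classical

/-- Index of the `c`-th coordinate (among the four endpoint coordinates)
of the `i`-th segment in the input vector. -/
def segIdx (n : ℕ) (i : Fin n) (c : Fin 4) : Fin (4 * n) :=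
  ⟨4 * (i : ℕ) + (c : ℕ), by have := i.isLt; have := c.isLt; omega⟩

/-- First endpoint of the `i`-th segment. -/
noncomputable def segU (n : ℕ) (x : Fin (4 * n) → ℝ) (i : Fin n) : ℝ × ℝ :=
  (x (segIdx n i 0), x (segIdx n i 1))

/-- Second endpoint of the `i`-th segment. -/
noncomputable def segV (n : ℕ) (x : Fin (4 * n) → ℝ) (i : Fin n) : ℝ × ℝ :=
  (x (segIdx n i 2), x (segIdx n i 3))

set_option linter.unusedSectionVars false

/-! ### Amortised decision trees -/

section Framework

variable {Z ι β : Type} (φ : ι → Z → Prop) (τ : Z → β)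

/-- `Solv φ τ S d`: on inputs known to lie in `S`, a decision tree of depth at most `d` using the
binary tests `φ i` determines the value of `τ`. -/
inductive Solv : Set Z → ℕ → Prop
  | leaf (S : Set Z) (d : ℕ) : (∀ z ∈ S, ∀ z' ∈ S, τ z = τ z') → Solv S d
  | node (S : Set Z) (d : ℕ) (i : ι) : Solv {z | z ∈ S ∧ φ i z} d → Solv {z | z ∈ S ∧ ¬ φ i z} d →
      Solv S (d + 1)

variable {φ τ}

theorem Solv.mono_set {S : Set Z} {d : ℕ} (h : Solv φ τ S d) :
    ∀ {S' : Set Z}, S' ⊆ S → Solv φ τ S' d := by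
  induction h with
  | leaf S d h => intro S' hS; exact .leaf _ _ fun z hz z' hz' => h z (hS hz) z' (hS hz')
  | node S d i _ _ ih1 ih2 =>
    intro S' hS
    exact .node _ _ i (ih1 fun z hz => ⟨hS hz.1, hz.2⟩) (ih2 fun z hz => ⟨hS hz.1, hz.2⟩)

theorem Solv.mono_depth {S : Set Z} {d : ℕ} (h : Solv φ τ S d) :
    ∀ {d' : ℕ}, d ≤ d' → Solv φ τ S d' := by
  induction h with
  | leaf S d h => intro d' _; exact .leaf _ _ h
  | node S d i _ _ ih1 ih2 =>
    intro d' hd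
    obtain ⟨e, rfl⟩ : ∃ e, d' = e + 1 := ⟨d' - 1, by omega⟩
    exact .node _ _ i (ih1 (by omega)) (ih2 (by omega))

variable (φ τ) in
/-- `Solv` with a real bound on the depth. -/
def SolvR (S : Set Z) (D : ℝ) : Prop := ∃ d : ℕ, (d : ℝ) ≤ D ∧ Solv φ τ S d

theorem SolvR.mono {S S' : Set Z} {D D' : ℝ} (h : SolvR φ τ S D) (hS : S' ⊆ S) (hD : D ≤ D') :
    SolvR φ τ S' D' := by
  obtain ⟨d, hd, h⟩ := h
  exact ⟨d, hd.trans hD, h.mono_set hS⟩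

theorem SolvR.nonneg {S : Set Z} {D : ℝ} (h : SolvR φ τ S D) : 0 ≤ D := by
  obtain ⟨d, hd, h⟩ := h
  exact (Nat.cast_nonneg d).trans hd

/-- A single test; a branch that cannot occur needs no continuation. -/
theorem SolvR.node {S : Set Z} {D : ℝ} (i : ι) (hne : S.Nonempty)
    (h1 : {z | z ∈ S ∧ φ i z}.Nonempty → SolvR φ τ {z | z ∈ S ∧ φ i z} D)
    (h2 : {z | z ∈ S ∧ ¬ φ i z}.Nonempty → SolvR φ τ {z | z ∈ S ∧ ¬ φ i z} D) :
    SolvR φ τ S (D + 1) := by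
  have hD : 0 ≤ D := by
    obtain ⟨z, hz⟩ := hne
    by_cases hi : φ i z
    · exact (h1 ⟨z, hz, hi⟩).nonneg
    · exact (h2 ⟨z, hz, hi⟩).nonneg
  have key : ∀ T : Set Z, (T.Nonempty → SolvR φ τ T D) → Solv φ τ T ⌊D⌋₊ := by
    intro T hT
    rcases T.eq_empty_or_nonempty with rfl | hne'
    · exact .leaf _ _ (by simp)
    · obtain ⟨d, hd, h⟩ := hT hne'
      exact h.mono_depth (Nat.le_floor hd)
  refine ⟨⌊D⌋₊ + 1, ?_, .node _ _ i (key _ h1) (key _ h2)⟩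
  push_cast
  linarith [Nat.floor_le hD]

variable (φ) in
/-- The number of patterns of test outcomes that occur on `S`. -/
noncomputable def numPat (S : Set Z) : ℕ := ((fun z => fun i => φ i z) '' S : Set (ι → Prop)).ncard

variable (φ) in
/-- The potential: the binary logarithm of the number of patterns. -/
noncomputable def lgPat (S : Set Z) : ℝ := Real.logb 2 (numPat φ S)

variable [Fintype ι]

theorem numPat_mono {S S' : Set Z} (h : S' ⊆ S) : numPat φ S' ≤ numPat φ S :=
  Set.ncard_le_ncard (Set.image_mono h) (Set.toFinite _)

theorem numPat_pos {S : Set Z} (h : S.Nonempty) : 0 < numPat φ S :=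
  (Set.ncard_pos (Set.toFinite _)).2 (h.image _)

theorem lgPat_mono {S S' : Set Z} (h : S' ⊆ S) (hne : S'.Nonempty) : lgPat φ S' ≤ lgPat φ S := by
  have h0 := numPat_pos (φ := φ) hne
  exact Real.logb_le_logb_of_le (by norm_num) (by exact_mod_cast h0)
    (by exact_mod_cast numPat_mono h)

theorem lgPat_nonneg {S : Set Z} (hne : S.Nonempty) : 0 ≤ lgPat φ S :=
  Real.logb_nonneg (by norm_num) (by exact_mod_cast numPat_pos (φ := φ) hne)

/-- If `S'` carries at most a fraction `η` of the patterns of `S`, then the potential of `S'` is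
smaller by `log₂ (1/η)`. -/
theorem lgPat_drop {S S' : Set Z} {η : ℝ} (hne : S'.Nonempty) (hη : 0 < η)
    (h : (numPat φ S' : ℝ) ≤ η * numPat φ S) : lgPat φ S' ≤ lgPat φ S + Real.logb 2 η := by
  have h0 : (0 : ℝ) < numPat φ S' := by exact_mod_cast numPat_pos (φ := φ) hne
  have h1 : (0 : ℝ) < numPat φ S := by
    by_contra hc
    have : (numPat φ S : ℝ) = 0 := le_antisymm (not_lt.1 hc) (Nat.cast_nonneg _)
    rw [this] at h; linarith
  calc lgPat φ S' ≤ Real.logb 2 (η * numPat φ S) := Real.logb_le_logb_of_le (by norm_num) h0 h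
    _ = _ := by rw [Real.logb_mul hη.ne' h1.ne', add_comm]; rfl

variable (φ τ) in
/-- `Learn φ τ b c S r`: for inputs in `S`, it costs `c` tests, up to `b` further tests per unit of
potential lost, to reach a state in which any two remaining inputs are related by `r`. It is
stated in continuation-passing form: whatever can be done afterwards within
`K + b · potential` tests can be done now within `K + c + b · potential` tests. -/
def Learn (b c : ℝ) (S : Set Z) (r : Z → Z → Prop) : Prop :=
  ∀ S' ⊆ S, S'.Nonempty → ∀ K : ℝ,
    (∀ S'' ⊆ S', S''.Nonempty → (∀ z ∈ S'', ∀ z' ∈ S'', r z z') →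
      SolvR φ τ S'' (K + b * lgPat φ S'')) →
    SolvR φ τ S' (K + c + b * lgPat φ S')

variable {b c : ℝ} {S : Set Z} {r : Z → Z → Prop}

theorem Learn.mono_set (h : Learn φ τ b c S r) {S' : Set Z} (hS : S' ⊆ S) : Learn φ τ b c S' r :=
  fun _ hT => h _ (hT.trans hS)

theorem Learn.mono_cost (h : Learn φ τ b c S r) {c' : ℝ} (hc : c ≤ c') : Learn φ τ b c' S r :=
  fun _ hT hne K hK => (h _ hT hne K hK).mono subset_rfl (by linarith)

theorem Learn.mono_coef (h : Learn φ τ b c S r) {b' : ℝ} (hb : b ≤ b') : Learn φ τ b' c S r := by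
  intro T hT hne K hK
  refine (h T hT hne (K + (b' - b) * lgPat φ T) fun T' hT' hne' hr =>
    (hK T' hT' hne' hr).mono subset_rfl ?_).mono subset_rfl ?_
  · have := mul_le_mul_of_nonneg_left (lgPat_mono (φ := φ) hT' hne') (sub_nonneg.2 hb)
    linarith
  · linarith

theorem Learn.imp (h : Learn φ τ b c S r) {r' : Z → Z → Prop}
    (hr : ∀ z ∈ S, ∀ z' ∈ S, r z z' → r' z z') : Learn φ τ b c S r' :=
  fun T hT hne K hK => h T hT hne K fun T' hT' hne' hrr =>
    hK T' hT' hne' fun z hz z' hz' => hr z (hT (hT' hz)) z' (hT (hT' hz')) (hrr z hz z' hz')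

theorem Learn.const (hr : ∀ z ∈ S, ∀ z' ∈ S, r z z') : Learn φ τ b 0 S r := by
  intro T hT hne K hK
  simpa using hK T subset_rfl hne fun z hz z' hz' => hr z (hT hz) z' (hT hz')

theorem Learn.and {c' : ℝ} {r' : Z → Z → Prop} (h : Learn φ τ b c S r)
    (h' : ∀ T ⊆ S, T.Nonempty → (∀ z ∈ T, ∀ z' ∈ T, r z z') → Learn φ τ b c' T r') :
    Learn φ τ b (c + c') S (fun z z' => r z z' ∧ r' z z') := by
  intro T hT hne K hK
  refine (h T hT hne (K + c') fun T' hT' hne' hr => ?_).mono subset_rfl (by linarith)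
  exact h' T' (hT'.trans hT) hne' hr T' subset_rfl hne' K fun T'' hT'' hne'' hr' =>
    hK T'' (hT''.trans hT') hne'' fun z hz z' hz' =>
      ⟨hr z (hT'' hz) z' (hT'' hz'), hr' z hz z' hz'⟩

theorem Learn.finset {κ : Type} (I : Finset κ) {c : κ → ℝ} {r : κ → Z → Z → Prop}
    (h : ∀ i ∈ I, Learn φ τ b (c i) S (r i)) :
    Learn φ τ b (∑ i ∈ I, c i) S (fun z z' => ∀ i ∈ I, r i z z') := by
  induction I using Finset.induction_on with
  | empty => simpa using Learn.const (by simp)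
  | insert a I ha ih =>
    rw [Finset.sum_insert ha]
    refine ((h a (by simp)).and fun T hT _ _ =>
      (ih fun i hi => h i (by simp [hi])).mono_set hT).imp ?_
    intro z _ z' _ hr i hi
    rcases Finset.mem_insert.1 hi with rfl | hi
    exacts [hr.1, hr.2 i hi]

theorem Learn.finset_const {κ : Type} (I : Finset κ) {r : κ → Z → Z → Prop}
    (h : ∀ i ∈ I, Learn φ τ b c S (r i)) :
    Learn φ τ b (I.card * c) S (fun z z' => ∀ i ∈ I, r i z z') := by
  simpa using Learn.finset I h

variable (φ) in
/-- A predicate which on the inputs in `S` is decided by a single test. -/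
def IsTest (S : Set Z) (ψ : Z → Prop) : Prop := ∃ i, ∀ z ∈ S, (ψ z ↔ φ i z)

theorem IsTest.mono {S S' : Set Z} {ψ : Z → Prop} (h : IsTest φ S ψ) (hS : S' ⊆ S) :
    IsTest φ S' ψ := by
  obtain ⟨i, hi⟩ := h
  exact ⟨i, fun z hz => hi z (hS hz)⟩

theorem IsTest.congr {S : Set Z} {ψ ψ' : Z → Prop} (h : IsTest φ S ψ)
    (h' : ∀ z ∈ S, (ψ' z ↔ ψ z)) : IsTest φ S ψ' := by
  obtain ⟨i, hi⟩ := h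
  exact ⟨i, fun z hz => (h' z hz).trans (hi z hz)⟩

theorem IsTest.node {S : Set Z} {ψ : Z → Prop} (h : IsTest φ S ψ) {D : ℝ} (hne : S.Nonempty)
    (h1 : {z | z ∈ S ∧ ψ z}.Nonempty → SolvR φ τ {z | z ∈ S ∧ ψ z} D)
    (h2 : {z | z ∈ S ∧ ¬ ψ z}.Nonempty → SolvR φ τ {z | z ∈ S ∧ ¬ ψ z} D) :
    SolvR φ τ S (D + 1) := by
  obtain ⟨i, hi⟩ := h
  have e1 : {z | z ∈ S ∧ ψ z} = {z | z ∈ S ∧ φ i z} := by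
    ext z; exact and_congr_right fun hz => hi z hz
  have e2 : {z | z ∈ S ∧ ¬ ψ z} = {z | z ∈ S ∧ ¬ φ i z} := by
    ext z; exact and_congr_right fun hz => not_congr (hi z hz)
  rw [e1] at h1; rw [e2] at h2
  exact SolvR.node i hne h1 h2

theorem Learn.test {ψ : Z → Prop} (hψ : IsTest φ S ψ) (hb : 0 ≤ b) :
    Learn φ τ b 1 S (fun z z' => ψ z ↔ ψ z') := by
  intro T hT hne K hK
  refine ((hψ.mono hT).node (D := K + b * lgPat φ T) hne (fun h => ?_) (fun h => ?_)).mono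
    subset_rfl (by linarith)
  · refine (hK _ (fun z hz => hz.1) h fun z hz z' hz' =>
      iff_of_true hz.2 hz'.2).mono subset_rfl ?_
    have := mul_le_mul_of_nonneg_left (lgPat_mono (φ := φ) (fun z hz => hz.1) h :
      lgPat φ {z | z ∈ T ∧ ψ z} ≤ lgPat φ T) hb
    linarith
  · refine (hK _ (fun z hz => hz.1) h fun z hz z' hz' =>
      iff_of_false hz.2 hz'.2).mono subset_rfl ?_
    have := mul_le_mul_of_nonneg_left (lgPat_mono (φ := φ) (fun z hz => hz.1) h :
      lgPat φ {z | z ∈ T ∧ ¬ ψ z} ≤ lgPat φ T) hb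
    linarith

/-- Splitting a set along a predicate that only depends on the pattern splits the patterns. -/
theorem numPat_split {S : Set Z} {ψ : Z → Prop}
    (hψ : ∀ z ∈ S, ∀ z' ∈ S, (∀ i, φ i z ↔ φ i z') → (ψ z ↔ ψ z')) :
    numPat φ {z | z ∈ S ∧ ψ z} + numPat φ {z | z ∈ S ∧ ¬ ψ z} = numPat φ S := by
  rw [numPat, numPat, numPat, ← Set.ncard_union_eq _ (Set.toFinite _) (Set.toFinite _)]
  · congr 1
    ext p
    constructor
    · rintro (⟨z, hz, rfl⟩ | ⟨z, hz, rfl⟩) <;> exact ⟨z, hz.1, rfl⟩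
    · rintro ⟨z, hz, rfl⟩
      by_cases h : ψ z
      · exact .inl ⟨z, ⟨hz, h⟩, rfl⟩
      · exact .inr ⟨z, ⟨hz, h⟩, rfl⟩
  · rw [Set.disjoint_left]
    rintro p ⟨z, hz, rfl⟩ ⟨z', hz', h⟩
    refine hz'.2 ((hψ z hz.1 z' hz'.1 fun i => ?_).1 hz.2)
    have := congrFun h i
    simp only at this
    rw [this]

end Framework

/-! ### Searching, sorting, and batched point-line comparisons -/

section Search

variable {Z ι β : Type} {φ : ι → Z → Prop} {τ : Z → β} [Fintype ι] {S : Set Z}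

/-- In a chain of outcome sets, whether at least `k` of the tests succeed is decided by one of
the tests. -/
theorem chain_threshold {κ : Type} (J : Finset κ) (ψ : κ → Z → Prop) {T : Set Z}
    (hc : ∀ z ∈ T, ∀ z' ∈ T, (∀ j ∈ J, ψ j z → ψ j z') ∨ (∀ j ∈ J, ψ j z' → ψ j z)) (k : ℕ)
    (h0 : ∃ z ∈ T, (J.filter fun j => ψ j z).card < k)
    (h1 : ∃ z ∈ T, k ≤ (J.filter fun j => ψ j z).card) :
    ∃ j ∈ J, ∀ z ∈ T, (k ≤ (J.filter fun j => ψ j z).card ↔ ψ j z) := by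
  set cnt : Z → ℕ := fun z => (J.filter fun j => ψ j z).card with hcnt
  have hcJ : ∀ z, cnt z ≤ J.card := fun z => Finset.card_filter_le _ _
  -- an input with the fewest successes above the threshold, and one with the most below it
  obtain ⟨z1, ⟨hz1, hk1⟩, hmin⟩ : ∃ z1, (z1 ∈ T ∧ k ≤ cnt z1) ∧
      ∀ z ∈ T, k ≤ cnt z → cnt z1 ≤ cnt z := by
    obtain ⟨z, hz, hzk⟩ := h1
    have hex : ∃ m, ∃ z ∈ T, k ≤ cnt z ∧ cnt z = m := ⟨_, z, hz, hzk, rfl⟩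
    obtain ⟨z1, hz1, hk1, he⟩ := Nat.find_spec hex
    refine ⟨z1, ⟨hz1, hk1⟩, fun z hz hk => ?_⟩
    rw [he]
    exact Nat.find_min' hex ⟨z, hz, hk, rfl⟩
  obtain ⟨z0, ⟨hz0, hk0⟩, hmax⟩ : ∃ z0, (z0 ∈ T ∧ cnt z0 < k) ∧
      ∀ z ∈ T, cnt z < k → cnt z ≤ cnt z0 := by
    obtain ⟨z, hz, hzk⟩ := h0
    have hex : ∃ m, ∃ z ∈ T, cnt z < k ∧ J.card - cnt z = m := ⟨_, z, hz, hzk, rfl⟩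
    obtain ⟨z1, hz1, hk1, he⟩ := Nat.find_spec hex
    refine ⟨z1, ⟨hz1, hk1⟩, fun z hz hk => ?_⟩
    have := Nat.find_min' hex ⟨z, hz, hk, rfl⟩
    have := hcJ z; have := hcJ z1
    omega
  obtain ⟨j, hj1, hj0⟩ : ∃ j ∈ J.filter (fun j => ψ j z1), j ∉ J.filter (fun j => ψ j z0) := by
    by_contra! hcon
    have := Finset.card_le_card (fun j hj => hcon j hj)
    have : cnt z1 ≤ cnt z0 := this
    omega
  simp only [Finset.mem_filter, not_and] at hj1 hj0
  refine ⟨j, hj1.1, fun z hz => ⟨fun hk => ?_, fun hψ => ?_⟩⟩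
  · rcases hc z1 hz1 z hz with h | h
    · exact h j hj1.1 hj1.2
    · have hsub : J.filter (fun j => ψ j z) ⊆ J.filter (fun j => ψ j z1) := by
        intro i hi
        rw [Finset.mem_filter] at hi ⊢
        exact ⟨hi.1, h i hi.1 hi.2⟩
      have := Finset.eq_of_subset_of_card_le hsub (hmin z hz hk)
      have hm : j ∈ J.filter (fun j => ψ j z) := by rw [this]; simp [hj1]
      exact (Finset.mem_filter.1 hm).2
  · by_contra hk
    rw [not_le] at hk
    rcases hc z hz z0 hz0 with h | h
    · exact hj0 hj1.1 (h j hj1.1 hψ)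
    · have hsub : J.filter (fun j => ψ j z0) ⊆ J.filter (fun j => ψ j z) := by
        intro i hi
        rw [Finset.mem_filter] at hi ⊢
        exact ⟨hi.1, h i hi.1 hi.2⟩
      have := Finset.eq_of_subset_of_card_le hsub (hmax z hz hk)
      have hm : j ∈ J.filter (fun j => ψ j z0) := by rw [this]; simp [hj1, hψ]
      exact hj0 hj1.1 (Finset.mem_filter.1 hm).2

/-- Amortised search in a chain: weighted binary search, in which every two tests halve the
number of remaining patterns, learns all outcomes of a chain of tests for an additive cost `2`. -/
theorem Learn.search {κ : Type} (J : Finset κ) (ψ : κ → Z → Prop)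
    (hψ : ∀ j ∈ J, IsTest φ S (ψ j))
    (hc : ∀ z ∈ S, ∀ z' ∈ S, (∀ j ∈ J, ψ j z → ψ j z') ∨ (∀ j ∈ J, ψ j z' → ψ j z)) :
    Learn φ τ 2 2 S (fun z z' => ∀ j ∈ J, ψ j z ↔ ψ j z') := by
  intro T hT hne K hK
  induction hW : numPat φ T using Nat.strong_induction_on generalizing T with
  | _ W ih =>
  subst hW
  set cnt : Z → ℕ := fun z => (J.filter fun j => ψ j z).card with hcnt
  have hcJ : ∀ z, cnt z ≤ J.card := fun z => Finset.card_filter_le _ _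
  have hWpos := numPat_pos (φ := φ) hne
  have hcT : ∀ z ∈ T, ∀ z' ∈ T, (∀ j ∈ J, ψ j z → ψ j z') ∨ (∀ j ∈ J, ψ j z' → ψ j z) :=
    fun z hz z' hz' => hc z (hT hz) z' (hT hz')
  have hdet : ∀ k, ∀ z ∈ T, ∀ z' ∈ T, (∀ i, φ i z ↔ φ i z') → (cnt z < k ↔ cnt z' < k) := by
    intro k z hz z' hz' h
    have : cnt z = cnt z' := by
      simp only [hcnt]
      congr 1
      apply Finset.filter_congr
      intro j hj
      obtain ⟨i, hi⟩ := hψ j hj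
      rw [hi z (hT hz), hi z' (hT hz'), h i]
    rw [this]
  have hsplit := fun k => numPat_split (hdet k)
  set N : ℕ → ℕ := fun k => numPat φ {z | z ∈ T ∧ cnt z < k} with hN
  set k := Nat.findGreatest (fun k => 2 * N k ≤ numPat φ T) J.card with hkdef
  have hN0 : N 0 = 0 := by
    have : {z | z ∈ T ∧ cnt z < 0} = ∅ := by ext z; simp
    simp only [hN, this, numPat]; simp
  have hk : 2 * N k ≤ numPat φ T :=
    Nat.findGreatest_spec (P := fun k => 2 * N k ≤ numPat φ T) (m := 0) (Nat.zero_le _)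
      (by simp [hN0])
  have hk1 : numPat φ T < 2 * N (k + 1) := by
    by_cases hkJ : k + 1 ≤ J.card
    · have := Nat.findGreatest_is_greatest (P := fun k => 2 * N k ≤ numPat φ T)
        (n := J.card) (k := k + 1) (by omega) hkJ
      simpa using this
    · have : {z | z ∈ T ∧ cnt z < k + 1} = T := by
        ext z
        refine ⟨fun h => h.1, fun h => ⟨h, ?_⟩⟩
        have := hcJ z
        omega
      simp only [hN, this]
      omega
  have hhi : 2 * numPat φ {z | z ∈ T ∧ ¬ cnt z < k + 1} ≤ numPat φ T := by
    have := hsplit (k + 1)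
    simp only [hN] at hk1
    omega
  -- the inductive step for a set carrying at most half of the patterns
  have hhalf : ∀ T' ⊆ T, T'.Nonempty → 2 * numPat φ T' ≤ numPat φ T →
      SolvR φ τ T' (K + 2 * lgPat φ T) := by
    intro T' hT' hne' hh
    refine (ih _ (by omega) T' (hT'.trans hT) hne' (fun T'' h => hK T'' (h.trans hT'))
      rfl).mono subset_rfl ?_
    have := lgPat_drop (φ := φ) (S := T) (η := 1 / 2) hne' (by norm_num) (by
      have : (2 * numPat φ T' : ℝ) ≤ numPat φ T := by exact_mod_cast hh
      linarith)
    have h2 : Real.logb 2 (1 / 2) = -1 := by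
      rw [one_div, Real.logb_inv, Real.logb_self_eq_one (by norm_num)]
    linarith
  -- deciding a threshold costs at most one test
  have hthr : ∀ T' ⊆ T, T'.Nonempty → ∀ m D,
      ({z | z ∈ T' ∧ cnt z < m}.Nonempty → SolvR φ τ {z | z ∈ T' ∧ cnt z < m} D) →
      ({z | z ∈ T' ∧ ¬ cnt z < m}.Nonempty → SolvR φ τ {z | z ∈ T' ∧ ¬ cnt z < m} D) →
      SolvR φ τ T' (D + 1) := by
    intro T' hT' hne' m D h1 h2
    by_cases e1 : {z | z ∈ T' ∧ cnt z < m}.Nonempty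
    · by_cases e2 : {z | z ∈ T' ∧ ¬ cnt z < m}.Nonempty
      · obtain ⟨j, hj, hjz⟩ := chain_threshold J ψ (T := T')
          (fun z hz z' hz' => hcT z (hT' hz) z' (hT' hz')) m
          (by obtain ⟨z, hz, h⟩ := e1; exact ⟨z, hz, h⟩)
          (by obtain ⟨z, hz, h⟩ := e2; exact ⟨z, hz, not_lt.1 h⟩)
        refine (((hψ j hj).mono (hT'.trans hT)).congr (ψ' := fun z => ¬ cnt z < m) ?_).node hne'
          h2 (by simpa only [not_not] using h1)
        intro z hz
        rw [not_lt]
        exact hjz z hz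
      · refine (h1 e1).mono (fun z hz => ⟨hz, ?_⟩) (by linarith)
        by_contra hcon
        exact e2 ⟨z, hz, hcon⟩
    · obtain ⟨z, hz⟩ := hne'
      refine (h2 ⟨z, hz, fun h => e1 ⟨z, hz, h⟩⟩).mono
        (fun z hz => ⟨hz, fun h => e1 ⟨z, hz, h⟩⟩) (by linarith)
  have := hthr T subset_rfl hne k (K + 2 * lgPat φ T + 1) (fun h => ?_) (fun h => ?_)
  · exact this.mono subset_rfl (by linarith)
  · exact (hhalf _ (fun z hz => hz.1) h hk).mono subset_rfl (by linarith)
  · refine hthr _ (fun z hz => hz.1) h (k + 1) _ (fun h' => ?_) (fun h' => ?_)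
    · refine (hK _ (fun z hz => hz.1.1) h' ?_).mono subset_rfl ?_
      · have key : ∀ z ∈ T, ∀ z' ∈ T, cnt z = cnt z' → (∀ j ∈ J, ψ j z → ψ j z') →
            ∀ j ∈ J, (ψ j z ↔ ψ j z') := by
          intro z hz z' hz' he hs j hj
          have hsub : J.filter (fun j => ψ j z) ⊆ J.filter (fun j => ψ j z') := by
            intro i hi
            rw [Finset.mem_filter] at hi ⊢
            exact ⟨hi.1, hs i hi.1 hi.2⟩
          have := Finset.eq_of_subset_of_card_le hsub he.ge
          have := Finset.ext_iff.1 this j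
          simpa [hj] using this
        intro z hz z' hz' j hj
        have he : cnt z = cnt z' := by
          have := hz.2; have := hz.1.2; have := hz'.2; have := hz'.1.2; omega
        rcases hcT z hz.1.1 z' hz'.1.1 with hs | hs
        · exact key z hz.1.1 z' hz'.1.1 he hs j hj
        · exact (key z' hz'.1.1 z hz.1.1 he.symm hs j hj).symm
      · have := lgPat_mono (φ := φ) (fun z hz => hz.1.1 :
          {z | z ∈ {z | z ∈ T ∧ ¬ cnt z < k} ∧ cnt z < k + 1} ⊆ T) h'
        linarith
    · refine hhalf _ (fun z hz => hz.1.1) h' (le_trans ?_ hhi)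
      exact Nat.mul_le_mul_left 2 (numPat_mono fun z hz => ⟨hz.1.1, hz.2⟩)

/-- Search for the position of a value among values whose order is known. -/
theorem Learn.locate {κ : Type} (J : Finset κ) (θ : κ → Z → ℝ) (v : Z → ℝ)
    (ho : ∀ z ∈ S, ∀ z' ∈ S, ∀ i ∈ J, ∀ j ∈ J, (θ i z ≤ θ j z ↔ θ i z' ≤ θ j z'))
    (h1 : ∀ j ∈ J, IsTest φ S (fun z => v z ≤ θ j z))
    (h2 : ∀ j ∈ J, IsTest φ S (fun z => θ j z ≤ v z)) :
    Learn φ τ 2 4 S (fun z z' => (∀ j ∈ J, (v z ≤ θ j z ↔ v z' ≤ θ j z')) ∧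
      (∀ j ∈ J, (θ j z ≤ v z ↔ θ j z' ≤ v z'))) := by
  refine ((Learn.search J (fun j z => v z ≤ θ j z) h1 ?_).and fun T hT hne _ =>
    (Learn.search J (fun j z => θ j z ≤ v z) h2 ?_).mono_set hT).mono_cost (by norm_num)
  · intro z hz z' hz'
    by_contra! hcon
    obtain ⟨⟨j, hj, h1, h2⟩, i, hi, h3, h4⟩ := hcon
    have := ho z hz z' hz' j hj i hi
    have h5 : θ j z' ≤ θ i z' := by linarith
    have := this.2 h5
    linarith
  · intro z hz z' hz'
    by_contra! hcon
    obtain ⟨⟨j, hj, h1, h2⟩, i, hi, h3, h4⟩ := hcon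
    have := ho z hz z' hz' i hi j hj
    have h5 : θ i z' ≤ θ j z' := by linarith
    have := this.2 h5
    linarith

theorem Learn.sort {κ : Type} (J : Finset κ) (θ : κ → Z → ℝ)
    (h : ∀ i ∈ J, ∀ j ∈ J, IsTest φ S (fun z => θ i z ≤ θ j z)) :
    Learn φ τ 2 (4 * J.card) S
      (fun z z' => ∀ i ∈ J, ∀ j ∈ J, (θ i z ≤ θ j z ↔ θ i z' ≤ θ j z')) := by
  induction J using Finset.induction_on with
  | empty => simpa using Learn.const (by simp)
  | insert a J ha ih =>
    refine (((ih fun i hi j hj => h i (by simp [hi]) j (by simp [hj])).and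
      (c' := 4) (r' := fun z z' => (∀ j ∈ J, (θ a z ≤ θ j z ↔ θ a z' ≤ θ j z')) ∧
      (∀ j ∈ J, (θ j z ≤ θ a z ↔ θ j z' ≤ θ a z'))) fun T hT hne ho => ?_).imp ?_).mono_cost ?_
    · exact Learn.locate J θ (θ a) ho (fun j hj => (h a (by simp) j (by simp [hj])).mono hT)
        (fun j hj => (h j (by simp [hj]) a (by simp)).mono hT)
    · rintro z _ z' _ ⟨h1, h2, h3⟩ i hi j hj
      rcases Finset.mem_insert.1 hi with rfl | hi' <;>
        rcases Finset.mem_insert.1 hj with rfl | hj'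
      · simp
      · exact h2 j hj'
      · exact h3 i hi'
      · exact h1 i hi' j hj'
    · rw [Finset.card_insert_of_notMem ha]; push_cast; linarith

/-- Batched comparison of a set `I` of points with a set `H` of lines `y = α x + β`. After the
slopes of the lines through pairs of points are sorted, a search for `α` among them determines
the order of the offsets `y - α x` of the points, and a search for `β` among the offsets places
the line. -/
theorem Learn.batch {π lam : Type} (I : Finset π) (H : Finset lam) (X Y : π → Z → ℝ)
    (α β : lam → Z → ℝ)
    (h1 : ∀ i ∈ I, ∀ j ∈ I, IsTest φ S (fun z => X i z ≤ X j z))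
    (h5 : ∀ i ∈ I, ∀ j ∈ I, IsTest φ S (fun z => Y i z ≤ Y j z))
    (h4 : ∀ i ∈ I, ∀ j ∈ I, ∀ k ∈ I, ∀ l ∈ I, IsTest φ S
      (fun z => (Y j z - Y i z) * (X l z - X k z) ≤ (Y l z - Y k z) * (X j z - X i z)))
    (h3 : ∀ a ∈ H, ∀ i ∈ I, ∀ j ∈ I, IsTest φ S
      (fun z => Y i z - α a z * X i z ≤ Y j z - α a z * X j z))
    (h2 : ∀ a ∈ H, ∀ i ∈ I, IsTest φ S (fun z => α a z * X i z + β a z ≤ Y i z))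
    (h2' : ∀ a ∈ H, ∀ i ∈ I, IsTest φ S (fun z => Y i z ≤ α a z * X i z + β a z)) :
    Learn φ τ 2 (6 * (I.card : ℝ) ^ 2 + 8 * H.card) S (fun z z' => ∀ a ∈ H, ∀ i ∈ I,
      (α a z * X i z + β a z ≤ Y i z ↔ α a z' * X i z' + β a z' ≤ Y i z') ∧
      (Y i z ≤ α a z * X i z + β a z ↔ Y i z' ≤ α a z' * X i z' + β a z')) := by
  have hx : Learn φ τ 2 ((I.card : ℝ) ^ 2) S
      (fun z z' => ∀ ij ∈ I ×ˢ I, (X ij.1 z ≤ X ij.2 z ↔ X ij.1 z' ≤ X ij.2 z')) :=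
    (Learn.finset_const (c := 1) (I ×ˢ I) fun ij hij => Learn.test
      (h1 _ (Finset.mem_product.1 hij).1 _ (Finset.mem_product.1 hij).2)
      (by norm_num)).mono_cost (by rw [Finset.card_product]; push_cast; nlinarith)
  have hy : Learn φ τ 2 ((I.card : ℝ) ^ 2) S
      (fun z z' => ∀ ij ∈ I ×ˢ I, (Y ij.1 z ≤ Y ij.2 z ↔ Y ij.1 z' ≤ Y ij.2 z')) :=
    (Learn.finset_const (c := 1) (I ×ˢ I) fun ij hij => Learn.test
      (h5 _ (Finset.mem_product.1 hij).1 _ (Finset.mem_product.1 hij).2)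
      (by norm_num)).mono_cost (by rw [Finset.card_product]; push_cast; nlinarith)
  refine (((hx.and fun T hT _ _ => hy.mono_set hT).and (c' := 4 * (I.card : ℝ) ^ 2 + 8 * H.card)
    (r' := fun z z' => ∀ a ∈ H, ∀ i ∈ I,
      (α a z * X i z + β a z ≤ Y i z ↔ α a z' * X i z' + β a z' ≤ Y i z') ∧
      (Y i z ≤ α a z * X i z + β a z ↔ Y i z' ≤ α a z' * X i z' + β a z'))
    fun T hT hne ho => ?_).imp fun z _ z' _ h => h.2).mono_cost (by linarith)
  have hox : ∀ z ∈ T, ∀ z' ∈ T, ∀ i ∈ I, ∀ j ∈ I, (X i z ≤ X j z ↔ X i z' ≤ X j z') :=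
    fun z hz z' hz' i hi j hj => (ho z hz z' hz').1 (i, j) (by simp [hi, hj])
  have hoy : ∀ z ∈ T, ∀ z' ∈ T, ∀ i ∈ I, ∀ j ∈ I, (Y i z ≤ Y j z ↔ Y i z' ≤ Y j z') :=
    fun z hz z' hz' i hi j hj => (ho z hz z' hz').2 (i, j) (by simp [hi, hj])
  clear ho
  obtain ⟨z0, hz0⟩ := hne
  -- the pairs of points with increasing abscissas, and their slopes
  set Q := (I ×ˢ I).filter fun ij => X ij.1 z0 < X ij.2 z0 with hQ
  have hQc : (Q.card : ℝ) ≤ (I.card : ℝ) ^ 2 := by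
    have := Finset.card_filter_le (I ×ˢ I) fun ij => X ij.1 z0 < X ij.2 z0
    rw [Finset.card_product] at this
    rw [pow_two]
    exact_mod_cast this
  have hlt : ∀ z ∈ T, ∀ ij ∈ Q, X ij.1 z < X ij.2 z := by
    intro z hz ij hij
    simp only [hQ, Finset.mem_filter, Finset.mem_product] at hij
    have := hox z hz z0 hz0 ij.2 hij.1.2 ij.1 hij.1.1
    rw [← not_le, this, not_le]
    exact hij.2
  have hmem : ∀ ij ∈ Q, ij.1 ∈ I ∧ ij.2 ∈ I := by
    intro ij hij
    simp only [hQ, Finset.mem_filter, Finset.mem_product] at hij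
    exact hij.1
  set sl : π × π → Z → ℝ := fun ij z => (Y ij.2 z - Y ij.1 z) / (X ij.2 z - X ij.1 z) with hsl
  have hsort : Learn φ τ 2 (4 * Q.card) T (fun z z' => ∀ p ∈ Q, ∀ q ∈ Q,
      (sl p z ≤ sl q z ↔ sl p z' ≤ sl q z')) := by
    refine Learn.sort Q sl fun p hp q hq => ?_
    refine ((h4 p.1 (hmem p hp).1 p.2 (hmem p hp).2 q.1 (hmem q hq).1 q.2
      (hmem q hq).2).mono hT).congr fun z hz => ?_
    have a1 := hlt z hz p hp
    have a2 := hlt z hz q hq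
    rw [hsl, div_le_div_iff₀ (by linarith) (by linarith)]
  refine ((hsort.and (c' := H.card * 8) (r' := fun z z' => ∀ a ∈ H, ∀ i ∈ I,
      (α a z * X i z + β a z ≤ Y i z ↔ α a z' * X i z' + β a z' ≤ Y i z') ∧
      (Y i z ≤ α a z * X i z + β a z ↔ Y i z' ≤ α a z' * X i z' + β a z'))
    fun T' hT' hne hsl' => ?_).imp fun z _ z' _ h => h.2).mono_cost (by linarith)
  refine Learn.finset_const H fun a ha => ?_
  have e1 : ∀ z ∈ T, ∀ p ∈ Q, (α a z ≤ sl p z ↔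
      Y p.1 z - α a z * X p.1 z ≤ Y p.2 z - α a z * X p.2 z) := by
    intro z hz p hp
    have := hlt z hz p hp
    rw [hsl, le_div_iff₀ (by linarith)]
    constructor <;> intro h <;> linarith
  have e2 : ∀ z ∈ T, ∀ p ∈ Q, (sl p z ≤ α a z ↔
      Y p.2 z - α a z * X p.2 z ≤ Y p.1 z - α a z * X p.1 z) := by
    intro z hz p hp
    have := hlt z hz p hp
    rw [hsl, div_le_iff₀ (by linarith)]
    constructor <;> intro h <;> linarith
  have hloc := Learn.locate (φ := φ) (τ := τ) (S := T') Q sl (α a) hsl'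
    (fun p hp => ((h3 a ha p.1 (hmem p hp).1 p.2 (hmem p hp).2).mono (hT'.trans hT)).congr
      fun z hz => e1 z (hT' hz) p hp)
    (fun p hp => ((h3 a ha p.2 (hmem p hp).2 p.1 (hmem p hp).1).mono (hT'.trans hT)).congr
      fun z hz => e2 z (hT' hz) p hp)
  refine ((hloc.and (c' := 4) (r' := fun z z' =>
      (∀ i ∈ I, (β a z ≤ Y i z - α a z * X i z ↔ β a z' ≤ Y i z' - α a z' * X i z')) ∧
      (∀ i ∈ I, (Y i z - α a z * X i z ≤ β a z ↔ Y i z' - α a z' * X i z' ≤ β a z')))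
    fun T'' hT'' hne hl => ?_).imp ?_).mono_cost (by norm_num)
  · have hTT := hT''.trans (hT'.trans hT)
    refine Learn.locate I (fun i z => Y i z - α a z * X i z) (β a) ?_
      (fun i hi => ((h2 a ha i hi).mono hTT).congr fun z _ => ?_)
      (fun i hi => ((h2' a ha i hi).mono hTT).congr fun z _ => ?_)
    · intro z hz z' hz' i hi j hj
      have hzT := hT' (hT'' hz)
      have hzT' := hT' (hT'' hz')
      rcases lt_trichotomy (X i z0) (X j z0) with hij | hij | hij
      · have hp : (i, j) ∈ Q := by simp [hQ, hi, hj, hij]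
        have := (hl z hz z' hz').1 (i, j) hp
        rwa [e1 z hzT _ hp, e1 z' hzT' _ hp] at this
      · have hXe : ∀ w ∈ T, X i w = X j w := fun w hw => le_antisymm
          ((hox w hw z0 hz0 i hi j hj).2 hij.le) ((hox w hw z0 hz0 j hj i hi).2 hij.ge)
        have := hoy z hzT z' hzT' i hi j hj
        rw [hXe z hzT, hXe z' hzT']
        simpa using this
      · have hp : (j, i) ∈ Q := by simp [hQ, hi, hj, hij]
        have := (hl z hz z' hz').2 (j, i) hp
        rwa [e2 z hzT _ hp, e2 z' hzT' _ hp] at this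
    · constructor <;> intro h <;> linarith
    · constructor <;> intro h <;> linarith
  · rintro z _ z' _ ⟨_, g1, g2⟩ i hi
    have g1 := g1 i hi
    have g2 := g2 i hi
    refine ⟨⟨fun h => ?_, fun h => ?_⟩, ⟨fun h => ?_, fun h => ?_⟩⟩
    · linarith [g1.1 (by linarith)]
    · linarith [g1.2 (by linarith)]
    · linarith [g2.1 (by linarith)]
    · linarith [g2.2 (by linarith)]

end Search

/-! ### Derandomised choice with staged verification -/

section Loop

variable {Z ι β : Type} {φ : ι → Z → Prop} {τ : Z → β} [Fintype ι] {S : Set Z}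

/-- A finite set of representatives of the patterns occurring on `S`. -/
theorem exists_reps (S : Set Z) : ∃ P : Finset Z, (∀ z ∈ P, z ∈ S) ∧ P.card = numPat φ S ∧
    ∀ ψ : Z → Prop, (∀ z ∈ S, ∀ z' ∈ S, (∀ i, φ i z ↔ φ i z') → (ψ z ↔ ψ z')) →
      numPat φ {z | z ∈ S ∧ ψ z} = (P.filter ψ).card := by
  set f : Z → ι → Prop := fun z => fun i => φ i z with hf
  have hfin : (f '' S).Finite := Set.toFinite _
  obtain ⟨P, hPS, hPeq⟩ : ∃ P : Finset Z, (P : Set Z) ⊆ S ∧ Set.BijOn f P (f '' S) := by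
    obtain ⟨u, hu, hb⟩ := (Set.surjOn_image f S).exists_bijOn_subset
    have : u.Finite := Set.Finite.of_finite_image (by rw [hb.image_eq]; exact hfin) hb.injOn
    exact ⟨this.toFinset, by simpa using hu, by simpa using hb⟩
  have himg : ∀ Q : Finset Z, Q ⊆ P → (f '' (Q : Set Z)).ncard = Q.card := by
    intro Q hQ
    rw [Set.InjOn.ncard_image (hPeq.injOn.mono (by exact_mod_cast hQ)), Set.ncard_coe_finset]
  refine ⟨P, fun z hz => hPS hz, ?_, fun ψ hψ => ?_⟩
  · rw [← himg P subset_rfl, hPeq.image_eq]; rfl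
  · rw [← himg _ (Finset.filter_subset _ _)]
    change (f '' _).ncard = _
    congr 1
    ext p
    constructor
    · rintro ⟨z, hz, rfl⟩
      obtain ⟨z', hz', he⟩ := hPeq.surjOn (Set.mem_image_of_mem f hz.1)
      refine ⟨z', ?_, he⟩
      have hi : ∀ i, φ i z' ↔ φ i z := fun i => by
        have := congrFun he i
        simp only [hf] at this
        rw [this]
      simp only [Finset.coe_filter]
      exact ⟨hz', (hψ z' (hPS hz') z hz.1 hi).2 hz.2⟩
    · rintro ⟨z, hz, rfl⟩
      simp only [Finset.coe_filter] at hz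
      exact ⟨z, ⟨hPS hz.1, hz.2⟩, rfl⟩

/-- Choosing a good `ω`. If a random `ω` fails at stage `i` with small probability for every
input, then some fixed `ω` fails at stage `i` only for a small fraction `η i` of the patterns. It
is verified in stages `k, …, 0` of increasing costs `Q i`; a failure discovered at stage `i`
lowers the potential enough to pay for all the work done so far, and one starts over. -/
theorem findGood {Ω : Type} [Fintype Ω] [Nonempty Ω] (k : ℕ) (pass : ℕ → Ω → Z → Prop)
    (Q η : ℕ → ℝ) (B : ℝ) (hB2 : 2 ≤ B)
    (htop : ∀ ω z, pass (k + 1) ω z)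
    (hdet : ∀ i ω, ∀ z ∈ S, ∀ z' ∈ S, (∀ i, φ i z ↔ φ i z') → (pass i ω z ↔ pass i ω z'))
    (hlearn : ∀ i ≤ k, ∀ ω, Learn φ τ 2 (Q i) S (fun z z' => pass i ω z ↔ pass i ω z'))
    (hη : ∀ i, 0 < η i) (hη1 : ∀ i, η i < 1)
    (havg : ∀ z ∈ S, ∑ i ∈ Finset.range (k + 1),
      ((Finset.univ.filter fun ω => pass (i + 1) ω z ∧ ¬ pass i ω z).card : ℝ) / η i
        ≤ Fintype.card Ω)
    (hB : ∀ i ≤ k, ∑ j ∈ Finset.range (k + 1), Q j ≤ ∑ j ∈ Finset.range i, Q j +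
      (B - 2) * - Real.logb 2 (η i)) :
    ∀ S' ⊆ S, S'.Nonempty → ∀ K : ℝ,
      (∀ ω, ∀ S'' ⊆ S', S''.Nonempty → (∀ z ∈ S'', pass 0 ω z) →
        SolvR φ τ S'' (K + B * lgPat φ S'')) →
      SolvR φ τ S' (K + ∑ j ∈ Finset.range (k + 1), Q j + B * lgPat φ S') := by
  intro T hT hne K hK
  induction hW : numPat φ T using Nat.strong_induction_on generalizing T with
  | _ W ih =>
  subst hW
  obtain ⟨P, hPT, hPc, hP⟩ := exists_reps (φ := φ) T
  set bad : ℕ → Ω → Z → Prop := fun i ω z => pass (i + 1) ω z ∧ ¬ pass i ω z with hbad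
  have hbdet : ∀ i ω, ∀ z ∈ T, ∀ z' ∈ T, (∀ i, φ i z ↔ φ i z') → (bad i ω z ↔ bad i ω z') :=
    fun i ω z hz z' hz' h => and_congr (hdet (i + 1) ω z (hT hz) z' (hT hz') h)
      (not_congr (hdet i ω z (hT hz) z' (hT hz') h))
  have hWpos := numPat_pos (φ := φ) hne
  obtain ⟨ω, hω⟩ : ∃ ω, ∀ i ≤ k, (numPat φ {z | z ∈ T ∧ bad i ω z} : ℝ) ≤ η i * numPat φ T := by
    have hsum : ∑ ω : Ω, ∑ i ∈ Finset.range (k + 1),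
        (numPat φ {z | z ∈ T ∧ bad i ω z} : ℝ) / η i ≤ ∑ ω : Ω, (numPat φ T : ℝ) := by
      calc _ = ∑ ω : Ω, ∑ i ∈ Finset.range (k + 1), ∑ z ∈ P,
              (if bad i ω z then (1 : ℝ) else 0) / η i := by
            refine Finset.sum_congr rfl fun ω _ => Finset.sum_congr rfl fun i _ => ?_
            rw [hP _ (hbdet i ω), ← Finset.sum_div, Finset.sum_boole]
            congr
        _ = ∑ z ∈ P, ∑ i ∈ Finset.range (k + 1), ∑ ω : Ω,
              (if bad i ω z then (1 : ℝ) else 0) / η i := by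
            rw [Finset.sum_comm' (t' := Finset.range (k+1)) (s' := fun _ => Finset.univ)
              (by simp)]
            rw [Finset.sum_comm (s := P)]
            refine Finset.sum_congr rfl fun i _ => ?_
            rw [Finset.sum_comm]
        _ ≤ ∑ z ∈ P, (Fintype.card Ω : ℝ) := by
            refine Finset.sum_le_sum fun z hz => ?_
            refine le_trans (le_of_eq ?_) (havg z (hT (hPT z hz)))
            refine Finset.sum_congr rfl fun i _ => ?_
            rw [← Finset.sum_div, Finset.sum_boole]
        _ = _ := by
            simp only [Finset.sum_const, nsmul_eq_mul, hPc, Finset.card_univ]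
            ring
    obtain ⟨ω, _, hω⟩ := Finset.exists_le_of_sum_le Finset.univ_nonempty hsum
    refine ⟨ω, fun i hi => ?_⟩
    have h1 := Finset.single_le_sum
      (f := fun i => (numPat φ {z | z ∈ T ∧ bad i ω z} : ℝ) / η i)
      (fun j _ => div_nonneg (Nat.cast_nonneg _) (hη j).le)
      (Finset.mem_range.2 (Nat.lt_succ_of_le hi))
    have h2 := h1.trans hω
    rwa [div_le_iff₀ (hη i), mul_comm] at h2
  have claim : ∀ i ≤ k + 1, ∀ T' ⊆ T, T'.Nonempty → (∀ z ∈ T', pass i ω z) →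
      SolvR φ τ T' (K + ∑ j ∈ Finset.range i, Q j + (B - 2) * lgPat φ T + 2 * lgPat φ T') := by
    intro i
    induction i with
    | zero =>
      intro _ T' hT' hne' hp
      refine (hK ω T' hT' hne' hp).mono subset_rfl ?_
      have := mul_le_mul_of_nonneg_left (lgPat_mono (φ := φ) hT' hne') (sub_nonneg.2 hB2)
      simp only [Finset.range_zero, Finset.sum_empty]
      linarith
    | succ i ihi =>
      intro hi T' hT' hne' hp
      have hik : i ≤ k := by omega
      refine (hlearn i hik ω T' (hT'.trans hT) hne'
        (K + ∑ j ∈ Finset.range i, Q j + (B - 2) * lgPat φ T) ?_).mono subset_rfl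
        (by rw [Finset.sum_range_succ]; linarith)
      intro T'' hT'' hne'' hag
      obtain ⟨z0, hz0⟩ := hne''
      by_cases h0 : pass i ω z0
      · exact ihi (by omega) T'' (hT''.trans hT') ⟨z0, hz0⟩ fun z hz => (hag z0 hz0 z hz).1 h0
      · have hbadT : T'' ⊆ {z | z ∈ T ∧ bad i ω z} := fun z hz =>
          ⟨hT' (hT'' hz), hp z (hT'' hz), fun h => h0 ((hag z hz z0 hz0).1 h)⟩
        have hle : (numPat φ T'' : ℝ) ≤ η i * numPat φ T :=
          le_trans (by exact_mod_cast numPat_mono hbadT) (hω i hik)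
        have hlt : numPat φ T'' < numPat φ T := by
          have hW' : (0 : ℝ) < numPat φ T := by exact_mod_cast hWpos
          have : (numPat φ T'' : ℝ) < numPat φ T := by nlinarith [hη1 i]
          exact_mod_cast this
        refine (ih _ hlt T'' (hT''.trans (hT'.trans hT)) ⟨z0, hz0⟩ (fun ω' T3 h3 =>
          hK ω' T3 (h3.trans (hT''.trans hT'))) rfl).mono subset_rfl ?_
        have h1 := lgPat_drop (φ := φ) ⟨z0, hz0⟩ (hη i) hle
        have h2 := mul_le_mul_of_nonneg_left h1 (sub_nonneg.2 hB2)
        have h3 := hB i hik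
        linarith
  exact (claim (k + 1) le_rfl T subset_rfl hne fun z _ => htop ω z).mono subset_rfl (by linarith)

end Loop

/-! ### Random sampling with Chernoff bounds -/

section Chernoff

variable {I E : Type} [Fintype I] [DecidableEq I] [Fintype E] [Nonempty E]

theorem sum_prod_le (A : Finset I) (g : E → ℝ) (hg : ∀ e, 0 ≤ g e) {c : ℝ}
    (h : ∑ e, g e ≤ c * Fintype.card E) :
    ∑ x : I → E, ∏ t ∈ A, g (x t) ≤ c ^ A.card * Fintype.card (I → E) := by
  have h1 : ∀ x : I → E, ∏ t ∈ A, g (x t) = ∏ t, (if t ∈ A then g (x t) else 1) := by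
    intro x
    rw [Finset.prod_ite_mem, Finset.univ_inter]
  have h2 : ∑ x : I → E, ∏ t, (if t ∈ A then g (x t) else 1) =
      ∏ t : I, ∑ e : E, (if t ∈ A then g e else 1) := by
    rw [Finset.prod_univ_sum, Fintype.piFinset_univ]
  simp_rw [h1]
  rw [h2]
  calc ∏ t : I, ∑ e : E, (if t ∈ A then g e else 1)
      ≤ ∏ t : I, ((if t ∈ A then c else 1) * (Fintype.card E : ℝ)) := by
        refine Finset.prod_le_prod (fun t _ => Finset.sum_nonneg fun e _ => ?_) fun t _ => ?_
        · split_ifs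
          exacts [hg e, zero_le_one]
        · split_ifs
          · exact h
          · simp
    _ = _ := by
        rw [Finset.prod_mul_distrib, Finset.prod_ite_mem, Finset.univ_inter]
        simp

theorem card_filter_le_of_exp {Ω : Type} [Fintype Ω] (p : Ω → Prop)
    [DecidablePred p] (f : Ω → ℝ)
    (h : ∀ x, p x → 0 ≤ f x) :
    ((Finset.univ.filter p).card : ℝ) ≤ ∑ x, Real.exp (f x) := by
  rw [Finset.card_filter]
  push_cast
  refine Finset.sum_le_sum fun x _ => ?_
  split_ifs with hp
  · exact Real.one_le_exp (h x hp)
  · exact (Real.exp_pos _).le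

theorem exp_neg_le_of_mem {x : ℝ} (h0 : 0 ≤ x) (h1 : x ≤ 1) : Real.exp (-x) ≤ 1 - x / 2 := by
  have h := Real.add_one_le_exp x
  rw [Real.exp_neg, inv_le_comm₀ (Real.exp_pos _) (by linarith)]
  refine le_trans ?_ h
  rw [inv_le_iff_one_le_mul₀ (by linarith)]
  nlinarith

theorem exp_le_of_mem {x : ℝ} (h0 : 0 ≤ x) (h1 : x ≤ 1) : Real.exp x ≤ 1 + 2 * x := by
  have h := Real.abs_exp_sub_one_sub_id_le (x := x) (by rw [abs_of_nonneg h0]; exact h1)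
  have := (abs_le.1 h).2
  nlinarith

/-- A sample mean is rarely at most a quarter of the true mean. -/
theorem chernoff_lower (A : Finset I) (f : E → ℝ) (hf0 : ∀ e, 0 ≤ f e) (hf1 : ∀ e, f e ≤ 1)
    {t : ℝ} (h : 4 * t * Fintype.card E ≤ ∑ e, f e) :
    ((Finset.univ.filter fun x : I → E => ∑ i ∈ A, f (x i) ≤ t * A.card).card : ℝ) ≤
      Real.exp (-(A.card * t)) * Fintype.card (I → E) := by
  refine (card_filter_le_of_exp (fun x : I → E => ∑ i ∈ A, f (x i) ≤ t * A.card)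
    (fun x => t * A.card - ∑ i ∈ A, f (x i)) fun x hx => by linarith).trans ?_
  have h1 : ∀ x : I → E, Real.exp (t * A.card - ∑ i ∈ A, f (x i)) =
      Real.exp (t * A.card) * ∏ i ∈ A, Real.exp (- f (x i)) := by
    intro x
    rw [← Real.exp_sum, ← Real.exp_add, Finset.sum_neg_distrib, sub_eq_add_neg]
  simp_rw [h1]
  rw [← Finset.mul_sum]
  have h2 : ∑ e, Real.exp (- f e) ≤ Real.exp (-(2 * t)) * Fintype.card E := by
    calc ∑ e, Real.exp (- f e) ≤ ∑ e, (1 - f e / 2) :=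
          Finset.sum_le_sum fun e _ => exp_neg_le_of_mem (hf0 e) (hf1 e)
      _ = Fintype.card E - (∑ e, f e) / 2 := by
          rw [Finset.sum_sub_distrib, Finset.sum_div]; simp
      _ ≤ (-(2 * t) + 1) * Fintype.card E := by linarith
      _ ≤ _ := mul_le_mul_of_nonneg_right (Real.add_one_le_exp _) (Nat.cast_nonneg _)
  have h3 := sum_prod_le (I := I) A (fun e => Real.exp (- f e)) (fun e => (Real.exp_pos _).le) h2
  refine (mul_le_mul_of_nonneg_left h3 (Real.exp_pos _).le).trans (le_of_eq ?_)
  rw [← mul_assoc, ← Real.exp_nat_mul, ← Real.exp_add]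
  congr 2
  ring

/-- A sample mean is rarely at least four times the true mean. -/
theorem chernoff_upper (A : Finset I) (f : E → ℝ) (hf0 : ∀ e, 0 ≤ f e) (hf1 : ∀ e, f e ≤ 1)
    {t : ℝ} (h : ∑ e, f e ≤ t / 4 * Fintype.card E) :
    ((Finset.univ.filter fun x : I → E => t * A.card ≤ ∑ i ∈ A, f (x i)).card : ℝ) ≤
      Real.exp (-(A.card * t / 2)) * Fintype.card (I → E) := by
  refine (card_filter_le_of_exp (fun x : I → E => t * A.card ≤ ∑ i ∈ A, f (x i))
    (fun x => ∑ i ∈ A, f (x i) - t * A.card) fun x hx => by linarith).trans ?_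
  have h1 : ∀ x : I → E, Real.exp (∑ i ∈ A, f (x i) - t * A.card) =
      Real.exp (-(t * A.card)) * ∏ i ∈ A, Real.exp (f (x i)) := by
    intro x
    rw [← Real.exp_sum, ← Real.exp_add]
    congr 1
    ring
  simp_rw [h1]
  rw [← Finset.mul_sum]
  have h2 : ∑ e, Real.exp (f e) ≤ Real.exp (t / 2) * Fintype.card E := by
    calc ∑ e, Real.exp (f e) ≤ ∑ e, (1 + 2 * f e) :=
          Finset.sum_le_sum fun e _ => exp_le_of_mem (hf0 e) (hf1 e)
      _ = Fintype.card E + 2 * (∑ e, f e) := by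
          rw [Finset.sum_add_distrib, Finset.mul_sum]; simp
      _ ≤ (t / 2 + 1) * Fintype.card E := by linarith
      _ ≤ _ := mul_le_mul_of_nonneg_right (Real.add_one_le_exp _) (Nat.cast_nonneg _)
  have h3 := sum_prod_le (I := I) A (fun e => Real.exp (f e)) (fun e => (Real.exp_pos _).le) h2
  refine (mul_le_mul_of_nonneg_left h3 (Real.exp_pos _).le).trans (le_of_eq ?_)
  rw [← mul_assoc, ← Real.exp_nat_mul, ← Real.exp_add]
  congr 2
  ring

end Chernoff

section Sample

variable {Z ι β : Type} {φ : ι → Z → Prop} {τ : Z → β} [Fintype ι] {S : Set Z}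

/-- A good `R` (one for which the mean of `w R e z` over `e` is bounded by a constant, for the
actual input `z`) can be found cheaply if a random `R` is good on average. The mean is estimated
by samples of sizes `a k ≤ … ≤ a 1` before it is computed at cost `W`. -/
theorem sampleGood {R E : Type} [Fintype R] [Nonempty R] [Fintype E] [Nonempty E] (k : ℕ)
    (hk : 1 ≤ k) (a : ℕ → ℕ) (w : R → E → Z → ℝ) (M q W B : ℝ) (hM : 0 < M) (hB2 : 2 ≤ B)
    (hq0 : 0 ≤ q)
    (hw0 : ∀ r e z, 0 ≤ w r e z) (hwM : ∀ r e, ∀ z ∈ S, w r e z ≤ M)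
    (hdet : ∀ r e, ∀ z ∈ S, ∀ z' ∈ S, (∀ i, φ i z ↔ φ i z') → w r e z = w r e z')
    (hq : ∀ r e, Learn φ τ 2 q S (fun z z' => w r e z = w r e z'))
    (hW : ∀ r, Learn φ τ 2 W S (fun z z' => ∑ e, w r e z = ∑ e, w r e z'))
    (havg : ∀ z ∈ S, ∑ r, ∑ e, w r e z ≤ Fintype.card R * Fintype.card E)
    (ha : ∀ i, a (i + 1) ≤ a i)
    (hak : Real.exp (-(a k / (2 * M))) ≤ 1 / (2 * k))
    (hB0 : W + k * (a 1 * q) ≤ (B - 2) * (a 1 / (2 * M)))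
    (hB1 : ∀ i, 1 ≤ i → i < k → k * (a i * q) ≤ (B - 2) * (a (i + 1) / (2 * M)))
    (hBk : a k * q ≤ B - 2) :
    ∀ S' ⊆ S, S'.Nonempty → ∀ K : ℝ,
      (∀ r, ∀ S'' ⊆ S', S''.Nonempty →
        (∀ z ∈ S'', ∑ e, w r e z ≤ 4 * 16 ^ k * Fintype.card E) →
        SolvR φ τ S'' (K + B * lgPat φ S'')) →
      SolvR φ τ S' (K + (W + k * (a 1 * q)) + B * lgPat φ S') := by
  intro S' hS' hne K hK
  have hanti : Antitone a := antitone_nat_of_succ_le ha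
  set I := Σ i : Fin (k + 1), Fin (a i) with hI
  set st : ℕ → Finset I := fun i => Finset.univ.filter fun t => (t.1 : ℕ) = i with hst
  have hstc : ∀ i, i ≤ k → (st i).card = a i := by
    intro i hi
    have : st i = Finset.univ.map ⟨fun s : Fin (a i) => (⟨⟨i, by omega⟩, s⟩ : I), by
        intro s s' h
        simpa using h⟩ := by
      ext ⟨⟨j, hj⟩, s⟩
      simp only [hst, Finset.mem_filter, Finset.mem_univ, true_and, Finset.mem_map]
      constructor
      · rintro rfl
        exact ⟨s, rfl⟩
      · rintro ⟨s', h⟩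
        have := congrArg (fun t : I => (t.1 : ℕ)) h
        exact this.symm
    rw [this, Finset.card_map]
    simp
  set T : ℕ → ℝ := fun i => 4 * 16 ^ (k - i) with hT
  have hT4 : ∀ i, 4 ≤ T i := fun i => by
    have : (1 : ℝ) ≤ 16 ^ (k - i) := one_le_pow₀ (by norm_num)
    simp only [hT]; linarith
  have hTs : ∀ i < k, T i = 16 * T (i + 1) := by
    intro i hi
    simp only [hT]
    rw [show k - i = (k - (i + 1)) + 1 by omega, pow_succ]
    ring
  set pass : ℕ → R × (I → E) → Z → Prop := fun i ω z =>
    if i = 0 then ∑ e, w ω.1 e z ≤ T 0 * Fintype.card E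
    else if i ≤ k then ∑ t ∈ st i, w ω.1 (ω.2 t) z ≤ T i * a i else True with hpass
  have hpass0 : ∀ ω z, pass 0 ω z = (∑ e, w ω.1 e z ≤ T 0 * Fintype.card E) := by
    intro ω z; simp [hpass]
  have hpassi : ∀ i, 1 ≤ i → i ≤ k → ∀ ω z,
      pass i ω z = (∑ t ∈ st i, w ω.1 (ω.2 t) z ≤ T i * a i) := by
    intro i hi hik ω z; simp [hpass, hik, show i ≠ 0 by omega]
  set Q : ℕ → ℝ := fun i => if i = 0 then W else a i * q with hQ
  set η : ℕ → ℝ := fun i => if i < k then Real.exp (-(a (i + 1) / (2 * M))) else 1 / 2 with hη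
  have hak0 : (0 : ℝ) < a k := by
    rcases Nat.eq_zero_or_pos (a k) with h | h
    · rw [h] at hak
      simp only [Nat.cast_zero, zero_div, neg_zero, Real.exp_zero] at hak
      have hk' : (1 : ℝ) ≤ k := by exact_mod_cast hk
      rw [le_div_iff₀ (by linarith)] at hak
      linarith
    · exact_mod_cast h
  have hai0 : ∀ i ≤ k, (0 : ℝ) < a i := fun i hi =>
    hak0.trans_le (by exact_mod_cast hanti hi)
  have hQsum : ∑ j ∈ Finset.range (k + 1), Q j ≤ W + k * (a 1 * q) := by
    rw [Finset.sum_range_succ']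
    have : ∑ j ∈ Finset.range k, Q (j + 1) ≤ ∑ j ∈ Finset.range k, (a 1 * q) := by
      refine Finset.sum_le_sum fun j _ => ?_
      simp only [hQ, Nat.succ_ne_zero, if_false]
      exact mul_le_mul_of_nonneg_right (by exact_mod_cast hanti (by omega)) hq0
    simp only [Finset.sum_const, Finset.card_range, nsmul_eq_mul] at this
    simp only [hQ, if_true] at this ⊢
    linarith
  -- failure probabilities
  have hprob : ∀ z ∈ S, ∀ i < k,
      ((Finset.univ.filter fun ω => pass (i + 1) ω z ∧ ¬ pass i ω z).card : ℝ) ≤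
        Real.exp (-(a (i + 1) / M)) * Fintype.card (R × (I → E)) := by
    intro z hz i hi
    have hfib : ((Finset.univ.filter fun ω => pass (i + 1) ω z ∧ ¬ pass i ω z).card : ℝ) =
        ∑ r, ((Finset.univ.filter fun x => pass (i + 1) (r, x) z ∧ ¬ pass i (r, x) z).card : ℝ) := by
      rw [← Nat.cast_sum]
      congr 1
      simp only [Finset.card_filter]
      rw [Fintype.sum_prod_type]
    rw [hfib, Fintype.card_prod, Nat.cast_mul]
    have : ∀ r, ((Finset.univ.filter fun x => pass (i + 1) (r, x) z ∧ ¬ pass i (r, x) z).card : ℝ)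
        ≤ Real.exp (-(a (i + 1) / M)) * Fintype.card (I → E) := by
      intro r
      set f : E → ℝ := fun e => w r e z / M with hf
      have hf0 : ∀ e, 0 ≤ f e := fun e => div_nonneg (hw0 _ _ _) hM.le
      have hf1 : ∀ e, f e ≤ 1 := fun e => by
        rw [hf]; exact (div_le_one hM).2 (hwM r e z hz)
      have hE : (0 : ℝ) < Fintype.card E := by exact_mod_cast Fintype.card_pos
      by_cases hv : 4 * T (i + 1) * Fintype.card E ≤ ∑ e, w r e z
      · have h1 := chernoff_lower (st (i + 1)) f hf0 hf1 (t := T (i + 1) / M) (by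
          rw [hf, ← Finset.sum_div, le_div_iff₀ hM]
          refine le_trans (le_of_eq ?_) hv
          field_simp)
        rw [hstc _ (by omega)] at h1
        refine le_trans ?_ (h1.trans ?_)
        · refine Nat.cast_le.2 (Finset.card_le_card ?_)
          intro x hx
          simp only [Finset.mem_filter, Finset.mem_univ, true_and] at hx ⊢
          have hx1 := hx.1
          rw [hpassi (i + 1) (by omega) (by omega)] at hx1
          rw [hf, ← Finset.sum_div, div_mul_eq_mul_div]
          exact div_le_div_of_nonneg_right hx1 hM.le
        · refine mul_le_mul_of_nonneg_right (Real.exp_le_exp.2 (neg_le_neg ?_)) (Nat.cast_nonneg _)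
          rw [← mul_div_assoc]
          refine div_le_div_of_nonneg_right ?_ hM.le
          nlinarith [hT4 (i + 1), hai0 (i + 1) (by omega)]
      · push Not at hv
        rcases Nat.eq_zero_or_pos i with rfl | hi0
        · -- the exact mean cannot be too large here
          rw [Finset.filter_eq_empty_iff.2]
          · simp only [Finset.card_empty, Nat.cast_zero]
            exact mul_nonneg (Real.exp_pos _).le (Nat.cast_nonneg _)
          · rintro x _ ⟨_, h⟩
            rw [hpass0] at h
            apply h
            rw [hTs 0 hi]
            nlinarith [hT4 1, hv]
        · have h1 := chernoff_upper (st i) f hf0 hf1 (t := T i / M) (by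
            rw [hf, ← Finset.sum_div, div_le_iff₀ hM]
            refine hv.le.trans (le_of_eq ?_)
            rw [hTs i hi]
            field_simp
            ring)
          rw [hstc _ (by omega)] at h1
          refine le_trans ?_ (h1.trans ?_)
          · refine Nat.cast_le.2 (Finset.card_le_card ?_)
            intro x hx
            simp only [Finset.mem_filter, Finset.mem_univ, true_and] at hx ⊢
            have hx1 := hx.2
            rw [hpassi i (by omega) (by omega), not_le] at hx1
            rw [hf, ← Finset.sum_div, div_mul_eq_mul_div]
            exact div_le_div_of_nonneg_right hx1.le hM.le
          · refine mul_le_mul_of_nonneg_right (Real.exp_le_exp.2 (neg_le_neg ?_))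
              (Nat.cast_nonneg _)
            rw [← mul_div_assoc, div_div, mul_comm M 2, ← div_div]
            refine div_le_div_of_nonneg_right ?_ hM.le
            have : (a (i + 1) : ℝ) ≤ a i := by exact_mod_cast ha i
            nlinarith [hT4 i, hai0 i (by omega)]
    refine (Finset.sum_le_sum fun r _ => this r).trans (le_of_eq ?_)
    simp only [Finset.sum_const, Finset.card_univ, nsmul_eq_mul]
    ring
  have hmark : ∀ z ∈ S,
      ((Finset.univ.filter fun ω => pass (k + 1) ω z ∧ ¬ pass k ω z).card : ℝ) ≤
        1 / 4 * Fintype.card (R × (I → E)) := by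
    intro z hz
    have h1 : ∑ ω : R × (I → E), ∑ t ∈ st k, w ω.1 (ω.2 t) z ≤
        a k * Fintype.card (R × (I → E)) := by
      rw [Fintype.sum_prod_type]
      have h2 : ∀ r, ∑ x : I → E, ∑ t ∈ st k, w r (x t) z =
          a k * ((Fintype.card (I → E) / Fintype.card E : ℝ) * ∑ e, w r e z) := by
        intro r
        rw [Finset.sum_comm]
        rw [← hstc k le_rfl, ← nsmul_eq_mul, ← Finset.sum_const]
        refine Finset.sum_congr rfl fun t _ => ?_
        have h3 := Finset.sum_comp (s := (Finset.univ : Finset (I → E))) (fun e => w r e z)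
          (fun x : I → E => x t)
        rw [h3]
        have h3' : Finset.image (fun x : I → E => x t) Finset.univ = Finset.univ :=
          Finset.image_univ_of_surjective (Function.surjective_eval t)
        rw [h3', Finset.mul_sum]
        refine Finset.sum_congr rfl fun e _ => ?_
        rw [nsmul_eq_mul]
        congr 1
        have h4 : (Finset.univ.filter fun x : I → E => x t = e).card * Fintype.card E =
            Fintype.card (I → E) := by
          have hc : ∀ e' : E, (Finset.univ.filter fun x : I → E => x t = e').card =
              (Finset.univ.filter fun x : I → E => x t = e).card := by
            intro e'
            refine Finset.card_bij' (fun x _ => Function.update x t e)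
              (fun x _ => Function.update x t e') ?_ ?_ ?_ ?_
            · intro x hx; simp
            · intro x hx; simp
            · intro x hx
              simp only [Finset.mem_filter, Finset.mem_univ, true_and] at hx
              simp [← hx]
            · intro x hx
              simp only [Finset.mem_filter, Finset.mem_univ, true_and] at hx
              simp [← hx]
          have := Finset.card_eq_sum_card_fiberwise (f := fun x : I → E => x t)
            (s := Finset.univ) (t := Finset.univ) (by simp)
          simp only [hc, Finset.sum_const, Finset.card_univ, smul_eq_mul] at this
          rw [this, mul_comm]
        rw [eq_div_iff (by exact_mod_cast Fintype.card_ne_zero)]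
        exact_mod_cast h4
      simp_rw [h2]
      rw [← Finset.mul_sum, ← Finset.mul_sum]
      refine mul_le_mul_of_nonneg_left ?_ (Nat.cast_nonneg _)
      rw [Fintype.card_prod, Nat.cast_mul, div_mul_eq_mul_div,
        div_le_iff₀ (by exact_mod_cast Fintype.card_pos)]
      nlinarith [havg z hz, (Nat.cast_nonneg (Fintype.card (I → E)) : (0 : ℝ) ≤ _)]
    have h5 : ((Finset.univ.filter fun ω => pass (k + 1) ω z ∧ ¬ pass k ω z).card : ℝ) *
        (4 * a k) ≤ ∑ ω : R × (I → E), ∑ t ∈ st k, w ω.1 (ω.2 t) z := by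
      rw [← nsmul_eq_mul, ← Finset.sum_const]
      refine (Finset.sum_le_sum fun ω hω => ?_).trans (Finset.sum_le_sum_of_subset_of_nonneg
        (Finset.filter_subset _ _) fun ω _ _ => Finset.sum_nonneg fun t _ => hw0 _ _ _)
      have := (Finset.mem_filter.1 hω).2.2
      rw [hpassi k hk le_rfl, not_le] at this
      refine le_trans ?_ this.le
      nlinarith [hT4 k]
    have h6 := h5.trans h1
    nlinarith [h6, hak0]
  have hlogk : ∀ i < k, (a (i + 1) / (2 * M) : ℝ) ≤ - Real.logb 2 (η i) := by
    intro i hi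
    simp only [hη, hi, if_true]
    rw [Real.logb, Real.log_exp, neg_div, neg_neg, le_div_iff₀ (Real.log_pos (by norm_num))]
    have h2 : Real.log 2 ≤ 1 := by linarith [Real.log_two_lt_d9]
    exact mul_le_of_le_one_right (div_nonneg (Nat.cast_nonneg _) (by linarith)) h2
  have main := findGood (φ := φ) (τ := τ) (S := S) k pass Q η B hB2 ?_ ?_ ?_ ?_ ?_ ?_ ?_ S' hS' hne K
    (fun ω S'' hS'' hne'' hp => hK ω.1 S'' hS'' hne'' fun z hz => by
      have := hp z hz
      rw [hpass0] at this
      simpa [hT] using this)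
  · exact main.mono subset_rfl (by linarith)
  · intro ω z
    simp [hpass]
  · intro i ω z hz z' hz' h
    have hw : ∀ e, w ω.1 e z = w ω.1 e z' := fun e => hdet _ e z hz z' hz' h
    simp only [hpass, hw]
  · intro i hi ω
    rcases Nat.eq_zero_or_pos i with rfl | hi0
    · simp only [hQ, if_true, hpass0]
      exact (hW ω.1).imp fun z _ z' _ h => by rw [h]
    · simp only [hpassi i hi0 hi, hQ, show i ≠ 0 by omega, if_false]
      have := Learn.finset_const (st i) (c := q) fun t _ => hq ω.1 (ω.2 t)
      rw [hstc i hi] at this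
      refine this.imp fun z _ z' _ h => ?_
      rw [Finset.sum_congr rfl h]
  · intro i
    simp only [hη]
    split_ifs
    exacts [Real.exp_pos _, by norm_num]
  · intro i
    simp only [hη]
    split_ifs with h
    · rw [Real.exp_lt_one_iff, neg_lt_zero]
      exact div_pos (hai0 _ (by omega)) (by linarith)
    · norm_num
  · intro z hz
    rw [Finset.sum_range_succ]
    have hC : (0 : ℝ) ≤ Fintype.card (R × (I → E)) := Nat.cast_nonneg _
    have h1 : ∑ i ∈ Finset.range k,
        ((Finset.univ.filter fun ω => pass (i + 1) ω z ∧ ¬ pass i ω z).card : ℝ) / η i ≤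
        ∑ i ∈ Finset.range k, (1 / (2 * k) : ℝ) * Fintype.card (R × (I → E)) := by
      refine Finset.sum_le_sum fun i hi => ?_
      have hi := Finset.mem_range.1 hi
      simp only [hη, hi, if_true]
      rw [div_le_iff₀ (Real.exp_pos _)]
      refine (hprob z hz i hi).trans ?_
      have e1 : Real.exp (-(a (i + 1) / M)) =
          Real.exp (-(a (i + 1) / (2 * M))) * Real.exp (-(a (i + 1) / (2 * M))) := by
        rw [← Real.exp_add]; congr 1; field_simp; ring
      have e2 : Real.exp (-(a (i + 1) / (2 * M))) ≤ 1 / (2 * k) := by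
        refine le_trans (Real.exp_le_exp.2 (neg_le_neg ?_)) hak
        exact div_le_div_of_nonneg_right (by exact_mod_cast hanti (by omega)) (by linarith)
      rw [e1]
      have e3 := mul_le_mul_of_nonneg_right e2
        (mul_nonneg (Real.exp_pos (-(a (i + 1) / (2 * M)))).le hC)
      linarith
    have h2 := hmark z hz
    simp only [Finset.sum_const, Finset.card_range, nsmul_eq_mul] at h1
    have hk' : (0 : ℝ) < k := by exact_mod_cast hk
    have h3 : (k : ℝ) * (1 / (2 * k) * Fintype.card (R × (I → E))) =
        Fintype.card (R × (I → E)) / 2 := by field_simp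
    rw [h3] at h1
    have hηk : η k = 1 / 2 := by simp [hη]
    rw [hηk]
    have h4 := add_le_add h1 (div_le_div_of_nonneg_right (c := 1 / 2) h2 (by norm_num))
    rw [show (Fintype.card (R × (I → E)) : ℝ) / 2 +
      1 / 4 * (Fintype.card (R × (I → E)) : ℝ) / (1 / 2) = Fintype.card (R × (I → E)) by ring] at h4
    refine (le_of_eq ?_).trans h4
    congr!
  · intro i hi
    rcases Nat.eq_zero_or_pos i with rfl | hi0
    · simp only [Finset.range_zero, Finset.sum_empty, zero_add]
      refine hQsum.trans (hB0.trans ?_)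
      exact mul_le_mul_of_nonneg_left (hlogk 0 (by omega)) (by linarith)
    · have hsp := Finset.sum_range_add_sum_Ico Q (show i ≤ k + 1 by omega)
      rw [← hsp]
      gcongr
      rcases lt_or_eq_of_le hi with hik | rfl
      · have h1 : ∑ j ∈ Finset.Ico i (k + 1), Q j ≤ ∑ j ∈ Finset.Ico i (k + 1), a i * q := by
          refine Finset.sum_le_sum fun j hj => ?_
          have := Finset.mem_Ico.1 hj
          simp only [hQ, show j ≠ 0 by omega, if_false]
          exact mul_le_mul_of_nonneg_right (by exact_mod_cast hanti this.1) hq0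
        refine h1.trans ?_
        simp only [Finset.sum_const, Nat.card_Ico, nsmul_eq_mul]
        have h2 : ((k + 1 - i : ℕ) : ℝ) ≤ k := by exact_mod_cast (by omega)
        refine (mul_le_mul_of_nonneg_right h2 (mul_nonneg (Nat.cast_nonneg _) hq0)).trans ?_
        refine (hB1 i hi0 hik).trans ?_
        exact mul_le_mul_of_nonneg_left (hlogk i hik) (by linarith)
      · simp only [Nat.Ico_succ_singleton, Finset.sum_singleton, hQ, show i ≠ 0 by omega,
          if_false, hη, lt_irrefl]
        rw [one_div, Real.logb_inv, Real.logb_self_eq_one (by norm_num)]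
        linarith

end Sample

/-! ### Trapezoids in an arrangement of lines -/

section Geometry

/-- Lines `y = α x + β` indexed by `L` and points `(X, Y)` indexed by `P` in general position,
with a box `[-m, m] × [-M, M]` which contains all points and all crossings, and which the lines
leave only through its vertical sides. -/
structure Arr (L P : Type) where
  α : L → ℝ
  β : L → ℝ
  X : P → ℝ
  Y : P → ℝ
  m : ℝ
  M : ℝ
  m_pos : 0 < m
  α_inj : Function.Injective α
  conc : ∀ i j k, i ≠ j → i ≠ k → j ≠ k →
    (β j - β i) / (α i - α j) ≠ (β k - β i) / (α i - α k)
  cross_lt : ∀ i j, i ≠ j → |(β j - β i) / (α i - α j)| < m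
  X_lt : ∀ p, |X p| < m
  Y_lt : ∀ p, |Y p| < M
  line_lt : ∀ i x, |x| ≤ m → |α i * x + β i| < M
  M_pos : 0 < M

/-- A line of the arrangement, or the top (`true`) or bottom (`false`) side of the box. -/
abbrev Ln (L : Type) := L ⊕ Bool

/-- A vertical line: the left (`false`) or right (`true`) side of the box, or the vertical line
through the crossing of two lines. -/
abbrev Wall (L : Type) := Bool ⊕ (L × L)

/-- A given point, or a point of a vertical wall on a line. -/
abbrev Pt (L P : Type) := P ⊕ (Wall L × Ln L)

/-- A combinatorial trapezoid: the top and bottom line, and for the left and the right side either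
`none` (a side of the box) or `some (s, c)`, meaning that the side passes through the crossing of
the line `c` with the top line (`s = true`) or bottom line (`s = false`). -/
abbrev Cfg (L : Type) := (Ln L × Ln L) × (Option (Bool × L) × Option (Bool × L))

namespace Cfg

variable {L : Type} (σ : Cfg L)

def top : Ln L := σ.1.1
def bot : Ln L := σ.1.2
def lf : Option (Bool × L) := σ.2.1
def rt : Option (Bool × L) := σ.2.2

def side (s : Bool) : Ln L := if s then σ.top else σ.bot

/-- The wall described by `o`; `d` tells which side of the box `none` stands for. -/
def wall (d : Bool) : Option (Bool × L) → Wall L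
  | none => .inl d
  | some (s, c) => match σ.side s with
    | .inl i => .inr (i, c)
    | .inr _ => .inl d

def lw : Wall L := σ.wall false σ.lf
def rw : Wall L := σ.wall true σ.rt

/-- The crossings that `σ` refers to are crossings of two distinct lines of the arrangement. -/
def Valid : Prop := ∀ s c, (σ.lf = some (s, c) ∨ σ.rt = some (s, c)) →
  ∃ i, σ.side s = .inl i ∧ i ≠ c

noncomputable def lnSet : Ln L → Finset L
  | .inl i => {i}
  | .inr _ => ∅

noncomputable def optSet : Option (Bool × L) → Finset L
  | some (_, c) => {c}
  | none => ∅

/-- The at most four lines of the arrangement that define `σ`. -/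
noncomputable def defs : Finset L :=
  (lnSet σ.top ∪ lnSet σ.bot) ∪ (optSet σ.lf ∪ optSet σ.rt)

theorem card_defs : σ.defs.card ≤ 4 := by
  have h1 : ∀ g : Ln L, (lnSet g).card ≤ 1 := by rintro (i | s) <;> simp [lnSet]
  have h2 : ∀ o : Option (Bool × L), (optSet o).card ≤ 1 := by
    rintro (_ | ⟨s, c⟩) <;> simp [optSet]
  have e1 := Finset.card_union_le (lnSet σ.top) (lnSet σ.bot)
  have e2 := Finset.card_union_le (optSet σ.lf) (optSet σ.rt)
  have e3 := Finset.card_union_le (lnSet σ.top ∪ lnSet σ.bot) (optSet σ.lf ∪ optSet σ.rt)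
  have := h1 σ.top; have := h1 σ.bot; have := h2 σ.lf; have := h2 σ.rt
  unfold defs
  omega

theorem top_mem {i : L} (h : σ.top = .inl i) : i ∈ σ.defs := by simp [defs, h, lnSet]
theorem bot_mem {i : L} (h : σ.bot = .inl i) : i ∈ σ.defs := by simp [defs, h, lnSet]
theorem lf_mem {s : Bool} {c : L} (h : σ.lf = some (s, c)) : c ∈ σ.defs := by
  simp [defs, h, optSet]
theorem rt_mem {s : Bool} {c : L} (h : σ.rt = some (s, c)) : c ∈ σ.defs := by
  simp [defs, h, optSet]

end Cfg

namespace Arr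

variable {L P : Type} (A : Arr L P)

def sl : Ln L → ℝ
  | .inl i => A.α i
  | .inr _ => 0

noncomputable def ic : Ln L → ℝ
  | .inl i => A.β i
  | .inr s => if s then A.M else -A.M

noncomputable def ev (g : Ln L) (x : ℝ) : ℝ := A.sl g * x + A.ic g

/-- The abscissa of a wall. -/
noncomputable def wx : Wall L → ℝ
  | .inl s => if s then A.m else -A.m
  | .inr (i, j) => (A.β j - A.β i) / (A.α i - A.α j)

noncomputable def px : Pt L P → ℝ
  | .inl p => A.X p
  | .inr (w, _) => A.wx w

noncomputable def py : Pt L P → ℝ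
  | .inl p => A.Y p
  | .inr (w, g) => A.ev g (A.wx w)

noncomputable def xl (σ : Cfg L) : ℝ := A.wx σ.lw
noncomputable def xr (σ : Cfg L) : ℝ := A.wx σ.rw

/-- `σ` is a non-degenerate trapezoid. -/
def Ok (σ : Cfg L) : Prop := σ.Valid ∧ A.xl σ < A.xr σ ∧
  A.ev σ.bot (A.xl σ) ≤ A.ev σ.top (A.xl σ) ∧ A.ev σ.bot (A.xr σ) ≤ A.ev σ.top (A.xr σ) ∧
  σ.top ≠ σ.bot

/-- The line `g` does not pass through the interior of `σ`. -/
def Avoid (σ : Cfg L) (g : Ln L) : Prop :=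
  (A.ev g (A.xl σ) ≤ A.ev σ.bot (A.xl σ) ∧ A.ev g (A.xr σ) ≤ A.ev σ.bot (A.xr σ)) ∨
  (A.ev σ.top (A.xl σ) ≤ A.ev g (A.xl σ) ∧ A.ev σ.top (A.xr σ) ≤ A.ev g (A.xr σ))

/-- The half-open trapezoid of `σ`. -/
def Region (σ : Cfg L) (x y : ℝ) : Prop :=
  A.xl σ ≤ x ∧ x < A.xr σ ∧ A.ev σ.bot x ≤ y ∧ y < A.ev σ.top x

/-- The trapezoids of the vertical decomposition of the arrangement of the lines in `R`. -/
def IsCell (R : Finset L) (σ : Cfg L) : Prop :=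
  A.Ok σ ∧ σ.defs ⊆ R ∧ ∀ i ∈ R, A.Avoid σ (.inl i)

variable {A}

/-- Affine functions that compare at two points compare in between. -/
theorem ev_le_between {g h : Ln L} {u v x : ℝ} (h1 : A.ev g u ≤ A.ev h u)
    (h2 : A.ev g v ≤ A.ev h v) (hu : u ≤ x) (hv : x ≤ v) : A.ev g x ≤ A.ev h x := by
  simp only [ev] at *
  rcases eq_or_lt_of_le (hu.trans hv) with h | h
  · have : x = u := by linarith
    rw [this]; exact h1
  · nlinarith [mul_le_mul_of_nonneg_left h1 (sub_nonneg.2 hv),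
      mul_le_mul_of_nonneg_left h2 (sub_nonneg.2 hu)]

theorem wx_abs (w : Wall L) (h : ∀ i j, w = .inr (i, j) → i ≠ j) : |A.wx w| ≤ A.m := by
  rcases w with s | ⟨i, j⟩
  · have := A.m_pos
    cases s <;> simp [wx, abs_of_pos this]
  · exact (A.cross_lt i j (h i j rfl)).le

theorem Ok.xl_abs {σ : Cfg L} (h : σ.Valid) : |A.xl σ| ≤ A.m := by
  refine wx_abs _ fun i j he => ?_
  unfold Cfg.lw at he
  rcases hl : σ.lf with _ | ⟨s, c⟩
  · simp [Cfg.wall, hl] at he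
  · obtain ⟨i', hi, hne⟩ := h s c (.inl hl)
    simp [Cfg.wall, hl, hi] at he
    rw [← he.1, ← he.2]; exact hne

theorem Ok.xr_abs {σ : Cfg L} (h : σ.Valid) : |A.xr σ| ≤ A.m := by
  refine wx_abs _ fun i j he => ?_
  unfold Cfg.rw at he
  rcases hl : σ.rt with _ | ⟨s, c⟩
  · simp [Cfg.wall, hl] at he
  · obtain ⟨i', hi, hne⟩ := h s c (.inr hl)
    simp [Cfg.wall, hl, hi] at he
    rw [← he.1, ← he.2]; exact hne

theorem ev_inl (i : L) (x : ℝ) : A.ev (.inl i) x = A.α i * x + A.β i := rfl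

theorem ev_true (x : ℝ) : A.ev (.inr true) x = A.M := by simp [ev, sl, ic]
theorem ev_false (x : ℝ) : A.ev (.inr false) x = -A.M := by simp [ev, sl, ic]

theorem ev_le_M (g : Ln L) {x : ℝ} (h : |x| ≤ A.m) : A.ev g x ≤ A.M := by
  have := A.M_pos
  rcases g with i | s
  · exact (abs_lt.1 (A.line_lt i x h)).2.le
  · cases s
    · rw [ev_false]; linarith
    · rw [ev_true]

theorem neg_M_le_ev (g : Ln L) {x : ℝ} (h : |x| ≤ A.m) : -A.M ≤ A.ev g x := by
  have := A.M_pos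
  rcases g with i | s
  · exact (abs_lt.1 (A.line_lt i x h)).1.le
  · cases s
    · rw [ev_false]
    · rw [ev_true]; linarith

/-- Two lines which agree at two abscissas of the box are equal. -/
theorem ln_eq {g h : Ln L} {u v : ℝ} (hu : |u| ≤ A.m) (huv : u < v)
    (h1 : A.ev g u = A.ev h u) (h2 : A.ev g v = A.ev h v) : g = h := by
  have hM := A.M_pos
  rcases g with i | s <;> rcases h with j | t
  · congr 1
    apply A.α_inj
    simp only [ev_inl] at h1 h2
    have : (A.α i - A.α j) * (v - u) = 0 := by linarith
    rcases mul_eq_zero.1 this with h | h <;> linarith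
  · have := abs_lt.1 (A.line_lt i u hu)
    rw [ev_inl] at h1
    cases t
    · rw [ev_false] at h1; linarith
    · rw [ev_true] at h1; linarith
  · have := abs_lt.1 (A.line_lt j u hu)
    rw [ev_inl] at h1
    cases s
    · rw [ev_false] at h1; linarith
    · rw [ev_true] at h1; linarith
  · cases s <;> cases t <;> simp only [ev_true, ev_false] at h1 <;> first | rfl | linarith

theorem avoid_dummy {σ : Cfg L} (h : A.Ok σ) (s : Bool) : A.Avoid σ (.inr s) := by
  have h1 := Ok.xl_abs (A := A) h.1
  have h2 := Ok.xr_abs (A := A) h.1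
  cases s
  · left; simp only [ev_false]; exact ⟨neg_M_le_ev _ h1, neg_M_le_ev _ h2⟩
  · right; simp only [ev_true]; exact ⟨ev_le_M _ h1, ev_le_M _ h2⟩

theorem IsCell.avoid {R : Finset L} {σ : Cfg L} (h : A.IsCell R σ) (g : Ln L)
    (hg : ∀ i, g = .inl i → i ∈ R) : A.Avoid σ g := by
  rcases g with i | s
  · exact h.2.2 i (hg i rfl)
  · exact avoid_dummy h.1 s

theorem Region.abs_lt {σ : Cfg L} (hσ : σ.Valid) {x y : ℝ} (h : A.Region σ x y) : |x| ≤ A.m := by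
  have h1 := abs_le.1 (Ok.xl_abs (A := A) hσ)
  have h2 := abs_le.1 (Ok.xr_abs (A := A) hσ)
  exact abs_le.2 ⟨by linarith [h.1], by linarith [h.2.1]⟩

/-- A line avoiding a trapezoid is below or above all of it. -/
theorem Avoid.above {σ : Cfg L} {g : Ln L} (h : A.Avoid σ g) {x y : ℝ} (hr : A.Region σ x y) :
    (A.ev g x ≤ y ↔
      (A.ev g (A.xl σ) ≤ A.ev σ.bot (A.xl σ) ∧ A.ev g (A.xr σ) ≤ A.ev σ.bot (A.xr σ))) := by
  constructor
  · intro hx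
    refine h.resolve_right fun h2 => ?_
    have := ev_le_between h2.1 h2.2 hr.1 hr.2.1.le
    linarith [hr.2.2.2]
  · rintro h1
    exact (ev_le_between h1.1 h1.2 hr.1 hr.2.1.le).trans hr.2.2.1

/-- An affine function touching another one from below inside an interval coincides with it. -/
theorem touch {g h : Ln L} {u v t : ℝ} (hu : |u| ≤ A.m) (hv : |v| ≤ A.m)
    (h1 : A.ev g u ≤ A.ev h u) (h2 : A.ev g v ≤ A.ev h v) (hut : u < t) (htv : t < v)
    (ht : A.ev g t = A.ev h t) : g = h := by
  have key : A.ev g u = A.ev h u := by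
    refine le_antisymm h1 ?_
    simp only [ev] at *
    by_contra hc
    push Not at hc
    nlinarith [mul_pos (sub_pos.2 hc) (sub_pos.2 htv), mul_nonneg (sub_nonneg.2 h2)
      (sub_pos.2 hut).le]
  have := abs_le.1 hu
  have := abs_le.1 hv
  exact ln_eq (A := A) hu hut key ht

theorem Ok.bot_lt_top {σ : Cfg L} (h : A.Ok σ) {x : ℝ} (h1 : A.xl σ < x) (h2 : x < A.xr σ) :
    A.ev σ.bot x < A.ev σ.top x := by
  obtain ⟨hv, hx, hl, hr, hne⟩ := h
  refine lt_of_le_of_ne (ev_le_between hl hr h1.le h2.le) fun he => hne ?_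
  exact (touch (Ok.xl_abs hv) (Ok.xr_abs hv) hl hr h1 h2 he).symm

theorem ev_cross {i j : L} (h : i ≠ j) :
    A.ev (.inl j) (A.wx (.inr (i, j))) = A.ev (.inl i) (A.wx (.inr (i, j))) := by
  have : A.α i - A.α j ≠ 0 := sub_ne_zero.2 fun e => h (A.α_inj e)
  simp only [ev_inl, wx]
  field_simp
  ring

/-- No line of `R` crosses the top or bottom side of a cell in its relative interior. -/
theorem IsCell.no_cross {R : Finset L} {σ : Cfg L} (h : A.IsCell R σ) {t : ℝ}
    (h1 : A.xl σ < t) (h2 : t < A.xr σ) {s : Bool} {i c : L} (hc : c ∈ R) (hic : i ≠ c)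
    (hs : σ.side s = .inl i) (he : A.ev (.inl c) t = A.ev (.inl i) t) : False := by
  have hbt := h.1.bot_lt_top h1 h2
  have hv := h.1.1
  cases s
  · simp only [Cfg.side, Bool.false_eq_true, if_false] at hs
    rcases h.2.2 c hc with ⟨a, b⟩ | ⟨a, b⟩
    · have := touch (Ok.xl_abs hv) (Ok.xr_abs hv) a b h1 h2 (by rw [hs, he])
      rw [hs] at this
      exact hic (Sum.inl.inj this).symm
    · have := ev_le_between a b h1.le h2.le
      rw [hs] at hbt
      linarith
  · simp only [Cfg.side, if_true] at hs
    rcases h.2.2 c hc with ⟨a, b⟩ | ⟨a, b⟩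
    · have := ev_le_between a b h1.le h2.le
      rw [hs] at hbt
      linarith
    · have := touch (Ok.xl_abs hv) (Ok.xr_abs hv) a b h1 h2 (by rw [hs, he])
      rw [hs] at this
      exact hic (Sum.inl.inj this)

theorem xl_none {σ : Cfg L} (h : σ.lf = none) : A.xl σ = -A.m := by
  simp [xl, Cfg.lw, h, Cfg.wall, wx]

theorem xr_none {σ : Cfg L} (h : σ.rt = none) : A.xr σ = A.m := by
  simp [xr, Cfg.rw, h, Cfg.wall, wx]

theorem xl_some {σ : Cfg L} {s : Bool} {c i : L} (h : σ.lf = some (s, c))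
    (hi : σ.side s = .inl i) : A.xl σ = A.wx (.inr (i, c)) := by
  simp [xl, Cfg.lw, h, Cfg.wall, hi]

theorem xr_some {σ : Cfg L} {s : Bool} {c i : L} (h : σ.rt = some (s, c))
    (hi : σ.side s = .inl i) : A.xr σ = A.wx (.inr (i, c)) := by
  simp [xr, Cfg.rw, h, Cfg.wall, hi]

theorem xl_le_of_same {R : Finset L} {σ σ' : Cfg L} (h : A.IsCell R σ) (h' : A.IsCell R σ')
    (ht : σ.top = σ'.top) (hb : σ.bot = σ'.bot) (hlt : A.xl σ' < A.xr σ) :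
    A.xl σ' ≤ A.xl σ := by
  by_contra hc
  push Not at hc
  rcases hl : σ'.lf with _ | ⟨s, c⟩
  · have := abs_le.1 (Ok.xl_abs (A := A) h.1.1)
    rw [xl_none hl] at hc
    linarith
  · obtain ⟨i, hi, hne⟩ := h'.1.1 s c (.inl hl)
    rw [xl_some hl hi] at hc hlt
    refine h.no_cross hc hlt (s := s) (h'.2.1 (σ'.lf_mem hl)) hne ?_ (ev_cross hne)
    rw [← hi]; simp [Cfg.side, ht, hb]

theorem xr_le_of_same {R : Finset L} {σ σ' : Cfg L} (h : A.IsCell R σ) (h' : A.IsCell R σ')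
    (ht : σ.top = σ'.top) (hb : σ.bot = σ'.bot) (hlt : A.xl σ < A.xr σ') :
    A.xr σ ≤ A.xr σ' := by
  by_contra hc
  push Not at hc
  rcases hl : σ'.rt with _ | ⟨s, c⟩
  · have := abs_le.1 (Ok.xr_abs (A := A) h.1.1)
    rw [xr_none hl] at hc
    linarith
  · obtain ⟨i, hi, hne⟩ := h'.1.1 s c (.inr hl)
    rw [xr_some hl hi] at hc hlt
    refine h.no_cross hlt hc (s := s) (h'.2.1 (σ'.rt_mem hl)) hne ?_ (ev_cross hne)
    rw [← hi]; simp [Cfg.side, ht, hb]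

theorem top_le_of_share {R : Finset L} {σ σ' : Cfg L} (h : A.IsCell R σ) (h' : A.IsCell R σ')
    {x y : ℝ} (hx : A.Region σ x y) (hx' : A.Region σ' x y) {t : ℝ} (h1 : A.xl σ ≤ t)
    (h2 : t ≤ A.xr σ) : A.ev σ.top t ≤ A.ev σ'.top t ∧ A.ev σ'.bot t ≤ A.ev σ.bot t := by
  constructor
  · rcases h.avoid σ'.top (fun i hi => h'.2.1 (σ'.top_mem hi)) with ⟨a, b⟩ | ⟨a, b⟩
    · have := ev_le_between a b hx.1 hx.2.1.le
      linarith [hx.2.2.1, hx'.2.2.2]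
    · exact ev_le_between a b h1 h2
  · rcases h.avoid σ'.bot (fun i hi => h'.2.1 (σ'.bot_mem hi)) with ⟨a, b⟩ | ⟨a, b⟩
    · exact ev_le_between a b h1 h2
    · have := ev_le_between a b hx.1 hx.2.1.le
      linarith [hx.2.2.2, hx'.2.2.1]

/-- Cells sharing a point coincide as sets. -/
theorem cell_unique {R : Finset L} {σ σ' : Cfg L} (h : A.IsCell R σ) (h' : A.IsCell R σ')
    {x y : ℝ} (hx : A.Region σ x y) (hx' : A.Region σ' x y) :
    σ.top = σ'.top ∧ σ.bot = σ'.bot ∧ A.xl σ = A.xl σ' ∧ A.xr σ = A.xr σ' := by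
  obtain ⟨v, hv1, hv2⟩ := exists_between (lt_min hx.2.1 hx'.2.1)
  have a1 := hv2.trans_le (min_le_left _ _)
  have a2 := hv2.trans_le (min_le_right _ _)
  have hxm := Region.abs_lt h.1.1 hx
  have p1 := top_le_of_share h h' hx hx' hx.1 hx.2.1.le
  have p2 := top_le_of_share h' h hx' hx hx'.1 hx'.2.1.le
  have p3 := top_le_of_share h h' hx hx' (hx.1.trans hv1.le) a1.le
  have p4 := top_le_of_share h' h hx' hx (hx'.1.trans hv1.le) a2.le
  have ht : σ.top = σ'.top := ln_eq hxm hv1 (le_antisymm p1.1 p2.1) (le_antisymm p3.1 p4.1)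
  have hb : σ.bot = σ'.bot := ln_eq hxm hv1 (le_antisymm p2.2 p1.2) (le_antisymm p4.2 p3.2)
  refine ⟨ht, hb, le_antisymm ?_ ?_, le_antisymm ?_ ?_⟩
  · exact xl_le_of_same h' h ht.symm hb.symm (hx.1.trans_lt hx'.2.1)
  · exact xl_le_of_same h h' ht hb (hx'.1.trans_lt hx.2.1)
  · exact xr_le_of_same h h' ht hb (hx.1.trans_lt hx'.2.1)
  · exact xr_le_of_same h' h ht.symm hb.symm (hx'.1.trans_lt hx.2.1)

theorem side_congr {σ σ' : Cfg L} (ht : σ.top = σ'.top) (hb : σ.bot = σ'.bot) (s : Bool) :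
    σ.side s = σ'.side s := by simp [Cfg.side, ht, hb]

theorem lf_eq {σ σ' : Cfg L} (h : σ.Valid) (h' : σ'.Valid)
    (ht : σ.top = σ'.top) (hb : σ.bot = σ'.bot) (hx : A.xl σ = A.xl σ')
    (hm : σ.lf.map Prod.fst = σ'.lf.map Prod.fst) : σ.lf = σ'.lf := by
  rcases hl : σ.lf with _ | ⟨s, c⟩ <;> rcases hl' : σ'.lf with _ | ⟨s', c'⟩
  · rfl
  · simp [hl, hl'] at hm
  · simp [hl, hl'] at hm
  · obtain rfl : s = s' := by simpa [hl, hl'] using hm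
    obtain ⟨i, hi, hne⟩ := h s c (.inl hl)
    obtain ⟨i', hi', hne'⟩ := h' s c' (.inl hl')
    rw [side_congr ht hb, hi'] at hi
    obtain rfl := Sum.inl.inj hi
    rw [xl_some hl ((side_congr ht hb s).trans hi'), xl_some hl' hi'] at hx
    by_contra hc
    exact A.conc i' c c' hne hne' (fun e => hc (by rw [e])) hx

theorem rt_eq {σ σ' : Cfg L} (h : σ.Valid) (h' : σ'.Valid)
    (ht : σ.top = σ'.top) (hb : σ.bot = σ'.bot) (hx : A.xr σ = A.xr σ')
    (hm : σ.rt.map Prod.fst = σ'.rt.map Prod.fst) : σ.rt = σ'.rt := by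
  rcases hl : σ.rt with _ | ⟨s, c⟩ <;> rcases hl' : σ'.rt with _ | ⟨s', c'⟩
  · rfl
  · simp [hl, hl'] at hm
  · simp [hl, hl'] at hm
  · obtain rfl : s = s' := by simpa [hl, hl'] using hm
    obtain ⟨i, hi, hne⟩ := h s c (.inr hl)
    obtain ⟨i', hi', hne'⟩ := h' s c' (.inr hl')
    rw [side_congr ht hb, hi'] at hi
    obtain rfl := Sum.inl.inj hi
    rw [xr_some hl ((side_congr ht hb s).trans hi'), xr_some hl' hi'] at hx
    by_contra hc
    exact A.conc i' c c' hne hne' (fun e => hc (by rw [e])) hx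

theorem cfg_ext {σ σ' : Cfg L} (h1 : σ.top = σ'.top) (h2 : σ.bot = σ'.bot) (h3 : σ.lf = σ'.lf)
    (h4 : σ.rt = σ'.rt) : σ = σ' :=
  Prod.ext (Prod.ext h1 h2) (Prod.ext h3 h4)

section Count

variable [Fintype L]

variable (A) in
noncomputable def cells (R : Finset L) : Finset (Cfg L) := Finset.univ.filter (A.IsCell R)

theorem mem_cells {R : Finset L} {σ : Cfg L} : σ ∈ A.cells R ↔ A.IsCell R σ := by
  simp [cells]

/-- A point lies in at most nine cells: they agree as sets, and a wall of a cell has at most three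
names. -/
theorem card_cells_at (R : Finset L) (x y : ℝ) :
    ((A.cells R).filter fun σ => A.Region σ x y).card ≤ 9 := by
  have : Fintype.card (Option Bool × Option Bool) = 9 := by simp
  rw [← this, ← Finset.card_univ]
  refine Finset.card_le_card_of_injOn (fun σ => (σ.lf.map Prod.fst, σ.rt.map Prod.fst))
    (fun _ _ => Finset.mem_coe.2 (Finset.mem_univ _)) ?_
  intro σ hσ σ' hσ' he
  simp only [Finset.coe_filter, Set.mem_ofPred_eq, mem_cells] at hσ hσ'
  simp only [Prod.mk.injEq] at he
  obtain ⟨h1, h2, h3, h4⟩ := cell_unique hσ.1 hσ'.1 hσ.2 hσ'.2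
  exact cfg_ext h1 h2 (lf_eq hσ.1.1.1 hσ'.1.1.1 h1 h2 h3 he.1)
    (rt_eq hσ.1.1.1 hσ'.1.1.1 h1 h2 h4 he.2)

/-- The side of a cell on which the crossing defining its left wall lies. -/
def lpos : Option (Bool × L) → Bool
  | none => true
  | some (s, _) => s

/-- Cells with the same left wall, touching it along the same line, overlap. -/
theorem share_of_key {R : Finset L} {σ σ' : Cfg L} (h : A.IsCell R σ) (h' : A.IsCell R σ')
    (hl : σ.lf = σ'.lf) (hs : σ.side (lpos σ.lf) = σ'.side (lpos σ.lf)) :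
    ∃ x y, A.Region σ x y ∧ A.Region σ' x y := by
  have hx : A.xl σ = A.xl σ' := by
    rcases e : σ.lf with _ | ⟨s, c⟩
    · rw [xl_none e, xl_none (hl ▸ e)]
    · obtain ⟨i, hi, hne⟩ := h.1.1 s c (.inl e)
      rw [e] at hs
      rw [xl_some e hi, xl_some (hl ▸ e) (i := i) (by rw [← hi]; exact hs.symm)]
  obtain ⟨x, hx1, hx2⟩ := exists_between
    (lt_min h.1.2.1 (hx ▸ h'.1.2.1 : A.xl σ < A.xr σ'))
  have a1 := hx2.trans_le (min_le_left _ _)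
  have a2 := hx2.trans_le (min_le_right _ _)
  have b1 := h.1.bot_lt_top hx1 a1
  have b2 := h'.1.bot_lt_top (hx ▸ hx1) a2
  cases e : lpos σ.lf
  · rw [e] at hs
    simp only [Cfg.side, Bool.false_eq_true, if_false] at hs
    refine ⟨x, A.ev σ.bot x, ⟨hx1.le, a1, le_rfl, b1⟩, ⟨hx ▸ hx1.le, a2, ?_, ?_⟩⟩
    · rw [hs]
    · rw [hs]; exact b2
  · rw [e] at hs
    simp only [Cfg.side, if_true] at hs
    refine ⟨x, max (A.ev σ.bot x) (A.ev σ'.bot x), ⟨hx1.le, a1, le_max_left _ _, ?_⟩,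
      ⟨hx ▸ hx1.le, a2, le_max_right _ _, ?_⟩⟩
    · exact max_lt b1 (by rw [hs]; exact b2)
    · exact max_lt (by rw [← hs]; exact b1) b2

theorem card_cells (R : Finset L) : (A.cells R).card ≤ 6 * (R.card + 2) ^ 2 := by
  let T : Finset (Option (Bool × L) × Ln L × Option Bool) :=
    (insert none ((Finset.univ ×ˢ R).image some)) ×ˢ
      ((R.image Sum.inl ∪ Finset.univ.image Sum.inr) ×ˢ Finset.univ)
  have hT : T.card ≤ 6 * (R.card + 2) ^ 2 := by
    have h1 : (insert none (((Finset.univ : Finset Bool) ×ˢ R).image some)).card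
        ≤ 2 * R.card + 1 := by
      refine (Finset.card_insert_le _ _).trans ?_
      have := Finset.card_image_le (s := (Finset.univ : Finset Bool) ×ˢ R) (f := some)
      simp only [Finset.card_product, Finset.card_univ, Fintype.card_bool] at this
      omega
    have h2 : (R.image Sum.inl ∪ (Finset.univ : Finset Bool).image Sum.inr : Finset (Ln L)).card
        ≤ R.card + 2 := by
      refine (Finset.card_union_le _ _).trans ?_
      have e1 := Finset.card_image_le (s := R) (f := (Sum.inl : L → Ln L))
      have e2 := Finset.card_image_le (s := (Finset.univ : Finset Bool)) (f := (Sum.inr : Bool → Ln L))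
      simp only [Finset.card_univ, Fintype.card_bool] at e2
      omega
    have h3 : (Finset.univ : Finset (Option Bool)).card = 3 := by simp
    calc T.card = _ * (_ * _) := by rw [Finset.card_product, Finset.card_product]
      _ ≤ (2 * R.card + 1) * ((R.card + 2) * 3) := by
        rw [h3]; gcongr
      _ ≤ _ := by nlinarith
  refine le_trans (Finset.card_le_card_of_injOn
    (fun σ => (σ.lf, σ.side (lpos σ.lf), σ.rt.map Prod.fst)) ?_ ?_) hT
  · intro σ hσ
    have hσ := mem_cells.1 (Finset.mem_coe.1 hσ)
    simp only [T, Finset.coe_product, Set.mem_prod, Finset.mem_coe]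
    refine ⟨?_, ?_, Finset.mem_univ _⟩
    · rcases e : σ.lf with _ | ⟨s, c⟩
      · simp
      · have := hσ.2.1 (σ.lf_mem e)
        simp [this]
    · have : ∀ g : Ln L, Cfg.lnSet g ⊆ R →
          g ∈ (R.image Sum.inl ∪ Finset.univ.image Sum.inr : Finset (Ln L)) := by
        rintro (i | s) hg
        · simpa [Cfg.lnSet] using hg
        · simp
      apply this
      have h0 := hσ.2.1
      unfold Cfg.defs at h0
      cases lpos σ.lf
      · exact (Finset.subset_union_right.trans Finset.subset_union_left).trans h0
      · exact (Finset.subset_union_left.trans Finset.subset_union_left).trans h0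
  · intro σ hσ σ' hσ' he
    have hσ := mem_cells.1 (Finset.mem_coe.1 hσ)
    have hσ' := mem_cells.1 (Finset.mem_coe.1 hσ')
    simp only [Prod.mk.injEq] at he
    obtain ⟨e1, e2, e3⟩ := he
    rw [← e1] at e2
    obtain ⟨x, y, hx, hx'⟩ := share_of_key hσ hσ' e1 e2
    obtain ⟨h1, h2, h3, h4⟩ := cell_unique hσ hσ' hx hx'
    exact cfg_ext h1 h2 e1 (rt_eq hσ.1.1 hσ'.1.1 h1 h2 h4 e3)

end Count

end Arr

end Geometry

section Geometry
namespace Arr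

variable {L P : Type} {A : Arr L P}

theorem wx_comm (i j : L) : A.wx (.inr (i, j)) = A.wx (.inr (j, i)) := by
  simp only [wx]
  rw [← neg_div_neg_eq]
  congr 1 <;> ring

theorem ev_sub_cross {i j : L} (h : i ≠ j) (x : ℝ) :
    A.ev (.inl j) x - A.ev (.inl i) x = (A.α j - A.α i) * (x - A.wx (.inr (i, j))) := by
  have := ev_cross (A := A) h
  simp only [ev_inl] at *
  linear_combination this

/-- If `g` is below `h` immediately to the right of `x`, and the two do not cross between `x` and
the walls `u ≤ x < v`, then `g` is below `h` at both walls. -/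
theorem order_ends {g h : Ln L} {x u v : ℝ}
    (hlex : A.ev g x < A.ev h x ∨ (A.ev g x = A.ev h x ∧ A.sl g ≤ A.sl h))
    (hx : |x| ≤ A.m) (hu : |u| ≤ A.m) (hv : |v| ≤ A.m) (hux : u ≤ x) (hxv : x < v)
    (H : ∀ i j, g = .inl i → h = .inl j → i ≠ j →
      (A.wx (.inr (i, j)) ≤ x → A.wx (.inr (i, j)) ≤ u) ∧
      (x < A.wx (.inr (i, j)) → v ≤ A.wx (.inr (i, j)))) :
    A.ev g u ≤ A.ev h u ∧ A.ev g v ≤ A.ev h v := by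
  have hM := A.M_pos
  have hle : A.ev g x ≤ A.ev h x := hlex.elim le_of_lt fun e => e.1.le
  rcases g with i | s
  · rcases h with j | t
    · by_cases hij : i = j
      · subst hij; exact ⟨le_rfl, le_rfl⟩
      have e1 := ev_sub_cross (A := A) hij u
      have e2 := ev_sub_cross (A := A) hij v
      have e3 := ev_sub_cross (A := A) hij x
      obtain ⟨H1, H2⟩ := H i j rfl rfl hij
      rcases le_or_gt (A.wx (.inr (i, j))) x with ht | ht
      · have hs : A.α i ≤ A.α j := by
          rcases hlex with hl | hl
          · by_contra hc
            push Not at hc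
            nlinarith [mul_nonneg (sub_pos.2 hc).le (sub_nonneg.2 ht)]
          · exact hl.2
        have a := mul_nonneg (sub_nonneg.2 hs) (sub_nonneg.2 (H1 ht))
        have b := mul_nonneg (sub_nonneg.2 hs) (sub_nonneg.2 ((H1 ht).trans (hux.trans hxv.le)))
        constructor <;> linarith
      · have hs : A.α j ≤ A.α i := by
          by_contra hc
          push Not at hc
          nlinarith [mul_pos (sub_pos.2 hc) (sub_pos.2 ht)]
        have b := mul_nonneg (sub_nonneg.2 hs) (sub_nonneg.2 (H2 ht))
        have a := mul_nonneg (sub_nonneg.2 hs) (sub_nonneg.2 ((hux.trans hxv.le).trans (H2 ht)))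
        constructor <;> nlinarith
    · cases t
      · have := abs_lt.1 (A.line_lt i x hx)
        rw [ev_inl, ev_false] at hle
        linarith
      · rw [ev_true, ev_true]
        exact ⟨ev_le_M _ hu, ev_le_M _ hv⟩
  · cases s
    · rw [ev_false, ev_false]
      exact ⟨neg_M_le_ev _ hu, neg_M_le_ev _ hv⟩
    · rcases h with j | t
      · have := abs_lt.1 (A.line_lt j x hx)
        rw [ev_inl, ev_true] at hle
        linarith
      · cases t
        · rw [ev_true, ev_false] at hle; linarith
        · exact ⟨le_rfl, le_rfl⟩

/-- The cells of `R` cover the box. -/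
theorem exists_cell [Fintype L] (R : Finset L) {x y : ℝ} (hx : |x| < A.m) (hy : |y| < A.M) :
    ∃ σ, A.IsCell R σ ∧ A.Region σ x y := by
  have hxm := abs_lt.1 hx
  have hyM := abs_lt.1 hy
  let G : Finset (Ln L) := R.image Sum.inl ∪ Finset.univ.image Sum.inr
  have hGR : ∀ i, (.inl i : Ln L) ∈ G ↔ i ∈ R := by intro i; simp [G]
  have hGd : ∀ s, (.inr s : Ln L) ∈ G := by intro s; simp [G]
  obtain ⟨top, htop, htmin⟩ := Finset.exists_min_image (G.filter fun g => y < A.ev g x)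
    (fun g => toLex (A.ev g x, A.sl g))
    ⟨.inr true, Finset.mem_filter.2 ⟨hGd _, by rw [ev_true]; exact hyM.2⟩⟩
  obtain ⟨bot, hbot, hbmax⟩ := Finset.exists_max_image (G.filter fun g => A.ev g x ≤ y)
    (fun g => toLex (A.ev g x, A.sl g))
    ⟨.inr false, Finset.mem_filter.2 ⟨hGd _, by rw [ev_false]; exact hyM.1.le⟩⟩
  obtain ⟨htG, hty⟩ := Finset.mem_filter.1 htop
  obtain ⟨hbG, hby⟩ := Finset.mem_filter.1 hbot
  let σ₀ : Cfg L := ((top, bot), (none, none))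
  let good : Option (Bool × L) → Prop := fun o => ∀ s c, o = some (s, c) →
    c ∈ R ∧ ∃ i, σ₀.side s = .inl i ∧ i ≠ c
  obtain ⟨lf, hlf, hlmax⟩ := Finset.exists_max_image
    (Finset.univ.filter fun o => good o ∧ A.wx (σ₀.wall false o) ≤ x)
    (fun o => A.wx (σ₀.wall false o))
    ⟨none, by
      refine Finset.mem_filter.2 ⟨Finset.mem_univ _, by simp [good], ?_⟩
      simp only [Cfg.wall, wx, Bool.false_eq_true, if_false]; exact hxm.1.le⟩
  obtain ⟨rt, hrt, hrmin⟩ := Finset.exists_min_image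
    (Finset.univ.filter fun o => good o ∧ x < A.wx (σ₀.wall true o))
    (fun o => A.wx (σ₀.wall true o))
    ⟨none, by
      refine Finset.mem_filter.2 ⟨Finset.mem_univ _, by simp [good], ?_⟩
      simp only [Cfg.wall, wx, if_true]; exact hxm.2⟩
  obtain ⟨-, hlg, hlx⟩ := Finset.mem_filter.1 hlf
  obtain ⟨-, hrg, hrx⟩ := Finset.mem_filter.1 hrt
  let σ : Cfg L := ((top, bot), (lf, rt))
  have hwall : ∀ d o, σ.wall d o = σ₀.wall d o := fun d o => rfl
  have hxl : A.xl σ = A.wx (σ₀.wall false lf) := rfl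
  have hxr : A.xr σ = A.wx (σ₀.wall true rt) := rfl
  have hvalid : σ.Valid := by
    rintro s c (h | h)
    · exact (hlg s c h).2
    · exact (hrg s c h).2
  have hul := Ok.xl_abs (A := A) hvalid
  have hur := Ok.xr_abs (A := A) hvalid
  rw [← hxl] at hlx
  rw [← hxr] at hrx
  -- crossings of a side with a line of `R` are not strictly between `x` and the walls
  have hcand : ∀ s i c, σ₀.side s = .inl i → c ∈ R → i ≠ c →
      (A.wx (.inr (i, c)) ≤ x → A.wx (.inr (i, c)) ≤ A.xl σ) ∧
      (x < A.wx (.inr (i, c)) → A.xr σ ≤ A.wx (.inr (i, c))) := by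
    intro s i c hs hc hne
    have hg : good (some (s, c)) := by
      intro s' c' he
      obtain ⟨rfl, rfl⟩ : s = s' ∧ c = c' := by simpa using he
      exact ⟨hc, i, hs, hne⟩
    have hw : ∀ d, σ₀.wall d (some (s, c)) = .inr (i, c) := by
      intro d; simp [Cfg.wall, hs]
    constructor
    · intro h
      have := hlmax (some (s, c)) (Finset.mem_filter.2 ⟨Finset.mem_univ _, hg, by rw [hw]; exact h⟩)
      rwa [hw] at this
    · intro h
      have := hrmin (some (s, c)) (Finset.mem_filter.2 ⟨Finset.mem_univ _, hg, by rw [hw]; exact h⟩)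
      rwa [hw] at this
  have hlexd : ∀ g h : Ln L, toLex (A.ev g x, A.sl g) ≤ toLex (A.ev h x, A.sl h) →
      A.ev g x < A.ev h x ∨ (A.ev g x = A.ev h x ∧ A.sl g ≤ A.sl h) := by
    intro g h hle
    simpa [Prod.Lex.toLex_le_toLex] using hle
  have hbt := order_ends (A := A) (g := bot) (h := top) (x := x) (u := A.xl σ) (v := A.xr σ)
    (.inl (hby.trans_lt hty)) hx.le hul hur hlx hrx (by
      intro i j hi hj hne
      exact hcand false i j hi ((hGR j).1 (hj ▸ htG)) hne)
  have hup : ∀ g ∈ G, y < A.ev g x →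
      A.ev top (A.xl σ) ≤ A.ev g (A.xl σ) ∧ A.ev top (A.xr σ) ≤ A.ev g (A.xr σ) := by
    intro g hg hgy
    refine order_ends (hlexd _ _ (htmin g (Finset.mem_filter.2 ⟨hg, hgy⟩))) hx.le hul hur hlx hrx ?_
    intro i j hi hj hne
    exact hcand true i j hi ((hGR j).1 (hj ▸ hg)) hne
  have hdn : ∀ g ∈ G, A.ev g x ≤ y →
      A.ev g (A.xl σ) ≤ A.ev bot (A.xl σ) ∧ A.ev g (A.xr σ) ≤ A.ev bot (A.xr σ) := by
    intro g hg hgy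
    refine order_ends (hlexd _ _ (hbmax g (Finset.mem_filter.2 ⟨hg, hgy⟩))) hx.le hul hur hlx hrx ?_
    intro i j hi hj hne
    rw [wx_comm]
    exact hcand false j i hj ((hGR i).1 (hi ▸ hg)) hne.symm
  refine ⟨σ, ⟨⟨hvalid, hlx.trans_lt hrx, hbt.1, hbt.2, ?_⟩, ?_, ?_⟩, hlx, hrx, hby, hty⟩
  · rintro (h : top = bot)
    rw [h] at hty
    linarith
  · have h1 : ∀ g ∈ G, Cfg.lnSet g ⊆ R := by
      rintro (i | s) hg
      · simpa [Cfg.lnSet] using (hGR i).1 hg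
      · simp [Cfg.lnSet]
    have h2 : ∀ o, good o → Cfg.optSet o ⊆ R := by
      rintro (_ | ⟨s, c⟩) ho
      · simp [Cfg.optSet]
      · simpa [Cfg.optSet] using (ho s c rfl).1
    exact Finset.union_subset (Finset.union_subset (h1 _ htG) (h1 _ hbG))
      (Finset.union_subset (h2 _ hlg) (h2 _ hrg))
  · intro i hi
    rcases le_or_gt (A.ev (.inl i) x) y with h | h
    · exact .inl (hdn _ ((hGR i).2 hi) h)
    · exact .inr (hup _ ((hGR i).2 hi) h)

end Arr
end Geometry

/-! ### Random samples of lines -/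

section Geometry
namespace Arr

variable {L P : Type} {A : Arr L P} [Fintype L]

/-- A cell of a sequence with its `i`-th line removed is a cell of every subsequence which avoids `i`
and contains certain at most four lines. -/
theorem cell_of_between {H : Type} {r : ℕ} (e : H → L) (Q : Fin (r + 1) → H)
    {σ : Cfg L} {i : Fin (r + 1)}
    (hσ : A.IsCell (Finset.univ.image fun j => e (Q (i.succAbove j))) σ) :
    ∃ J : Finset (Fin (r + 1)), J.card ≤ 4 ∧ J ⊆ Finset.univ.erase i ∧
      ∀ I, J ⊆ I → I ⊆ Finset.univ.erase i → A.IsCell (I.image fun j => e (Q j)) σ := by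
  have hex : ∀ c ∈ σ.defs, ∃ j, j ≠ i ∧ e (Q j) = c := by
    intro c hc
    obtain ⟨j, -, hj⟩ := Finset.mem_image.1 (hσ.2.1 hc)
    exact ⟨i.succAbove j, Fin.succAbove_ne i j, hj⟩
  choose! f hf1 hf2 using hex
  refine ⟨σ.defs.image f, Finset.card_image_le.trans σ.card_defs, ?_, ?_⟩
  · intro j hj
    obtain ⟨c, hc, rfl⟩ := Finset.mem_image.1 hj
    exact Finset.mem_erase.2 ⟨hf1 c hc, Finset.mem_univ _⟩
  · intro I hJ hI
    refine ⟨hσ.1, ?_, ?_⟩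
    · intro c hc
      exact Finset.mem_image.2 ⟨f c, hJ (Finset.mem_image_of_mem f hc), hf2 c hc⟩
    · intro c hc
      obtain ⟨j, hj, rfl⟩ := Finset.mem_image.1 hc
      apply hσ.2.2
      obtain ⟨k, rfl⟩ := Fin.exists_succAbove_eq (Finset.ne_of_mem_erase (hI hj))
      exact Finset.mem_image.2 ⟨k, Finset.mem_univ _, rfl⟩

variable (A) in
/-- The number of cells of `R` in the family `F` that the line `l` passes through. -/
noncomputable def confl (F : Finset (Cfg L)) (R : Finset L) (l : L) : ℕ :=
  ((F ∩ A.cells R).filter fun σ => ¬ A.Avoid σ (.inl l)).card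

/-- The Clarkson–Shor inequality for a fixed sequence of lines: removing one line at a time, only
few of the cells that arise conflict with the removed line. Such a cell is determined by four of
the lines, and so survives in at least a `1/32` fraction of all subsequences. -/
theorem clarkson_shor_seq {H : Type} {r : ℕ} (e : H → L) (Q : Fin (r + 1) → H)
    (F : Finset (Cfg L)) (Bd : ℕ)
    (hBd : ∀ R : Finset L, R.card ≤ r + 1 → (F ∩ A.cells R).card ≤ Bd) :
    ∑ i : Fin (r + 1), A.confl F (Finset.univ.image fun j => e (Q (i.succAbove j))) (e (Q i))
      ≤ 32 * Bd := by
  let Gi : Fin (r + 1) → Finset (Cfg L) := fun i =>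
    (F ∩ A.cells (Finset.univ.image fun j => e (Q (i.succAbove j)))).filter
      fun σ => ¬ A.Avoid σ (.inl (e (Q i)))
  have hdisj : ∀ i ∈ Finset.univ, ∀ j ∈ Finset.univ, i ≠ j → Disjoint (Gi i) (Gi j) := by
    intro i _ j _ hij
    rw [Finset.disjoint_left]
    intro σ hi hj
    have h1 := mem_cells.1 (Finset.mem_inter.1 (Finset.mem_filter.1 hi).1).2
    refine (Finset.mem_filter.1 hj).2 (h1.2.2 _ ?_)
    obtain ⟨k, rfl⟩ := Fin.exists_succAbove_eq hij.symm
    exact Finset.mem_image.2 ⟨k, Finset.mem_univ _, rfl⟩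
  have hcard : ∑ i, A.confl F (Finset.univ.image fun j => e (Q (i.succAbove j))) (e (Q i))
      = (Finset.univ.biUnion Gi).card := (Finset.card_biUnion hdisj).symm
  rw [hcard]
  set G := Finset.univ.biUnion Gi with hG
  have hmany : ∀ σ ∈ G, 2 ^ (r + 1) ≤ 32 * (Finset.univ.filter fun I : Finset (Fin (r + 1)) =>
      σ ∈ F ∩ A.cells (I.image fun j => e (Q j))).card := by
    intro σ hσ
    obtain ⟨i, -, hi⟩ := Finset.mem_biUnion.1 hσ
    have h1 := Finset.mem_inter.1 (Finset.mem_filter.1 hi).1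
    obtain ⟨J, hJ4, hJi, hJ⟩ := cell_of_between e Q (mem_cells.1 h1.2)
    have hsub : Finset.Icc J (Finset.univ.erase i) ⊆ Finset.univ.filter
        fun I : Finset (Fin (r + 1)) => σ ∈ F ∩ A.cells (I.image fun j => e (Q j)) := by
      intro I hI
      obtain ⟨a, b⟩ := Finset.mem_Icc.1 hI
      exact Finset.mem_filter.2 ⟨Finset.mem_univ _,
        Finset.mem_inter.2 ⟨h1.1, mem_cells.2 (hJ I a b)⟩⟩
    have h2 := Finset.card_le_card hsub
    rw [Finset.card_Icc_finset hJi] at h2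
    have h3 : (Finset.univ.erase i : Finset (Fin (r + 1))).card = r := by simp
    have h4 := Finset.card_le_card hJi
    rw [h3] at h2 h4
    calc 2 ^ (r + 1) = 2 * (2 ^ (r - J.card) * 2 ^ J.card) := by
          rw [← pow_add, Nat.sub_add_cancel h4, pow_succ]; ring
      _ ≤ 2 * (2 ^ (r - J.card) * 2 ^ 4) := by
          gcongr; norm_num
      _ = 32 * 2 ^ (r - J.card) := by ring
      _ ≤ _ := by gcongr
  have h1 : G.card * 2 ^ (r + 1) ≤ ∑ σ ∈ G, 32 * (Finset.univ.filter
      fun I : Finset (Fin (r + 1)) => σ ∈ F ∩ A.cells (I.image fun j => e (Q j))).card := by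
    rw [← smul_eq_mul, ← Finset.sum_const]
    exact Finset.sum_le_sum hmany
  have h2 : ∑ σ ∈ G, (Finset.univ.filter
      fun I : Finset (Fin (r + 1)) => σ ∈ F ∩ A.cells (I.image fun j => e (Q j))).card
      ≤ 2 ^ (r + 1) * Bd := by
    have := Finset.sum_card_bipartiteAbove_eq_sum_card_bipartiteBelow (s := G)
      (t := (Finset.univ : Finset (Finset (Fin (r + 1)))))
      (r := fun σ I => σ ∈ F ∩ A.cells (I.image fun j => e (Q j)))
    unfold Finset.bipartiteAbove Finset.bipartiteBelow at this
    rw [this]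
    calc _ ≤ ∑ I : Finset (Fin (r + 1)), Bd := by
          refine Finset.sum_le_sum fun I _ => ?_
          refine le_trans (Finset.card_le_card ?_) (hBd (I.image fun j => e (Q j))
            (Finset.card_image_le.trans ((Finset.card_le_univ _).trans (by simp))))
          intro σ hσ
          exact (Finset.mem_filter.1 hσ).2
      _ = _ := by simp
  rw [← Finset.mul_sum] at h1
  have h3 : G.card * 2 ^ (r + 1) ≤ (32 * Bd) * 2 ^ (r + 1) := by
    calc _ ≤ _ := h1
      _ ≤ 32 * (2 ^ (r + 1) * Bd) := by gcongr
      _ = _ := by ring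
  exact Nat.le_of_mul_le_mul_right h3 (by positivity)

/-- The Clarkson–Shor inequality on average over random samples with replacement. -/
theorem clarkson_shor {H : Type} [Fintype H] (r : ℕ) (e : H → L)
    (F : Finset (Cfg L)) (Bd : ℕ)
    (hBd : ∀ R : Finset L, R.card ≤ r + 1 → (F ∩ A.cells R).card ≤ Bd) :
    (r + 1) * ∑ R : Fin r → H, ∑ h : H, A.confl F (Finset.univ.image fun j => e (R j)) (e h)
      ≤ Fintype.card H ^ (r + 1) * (32 * Bd) := by
  have key : ∀ i : Fin (r + 1),
      ∑ Q : Fin (r + 1) → H,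
        A.confl F (Finset.univ.image fun j => e (Q (i.succAbove j))) (e (Q i)) =
      ∑ R : Fin r → H, ∑ h : H, A.confl F (Finset.univ.image fun j => e (R j)) (e h) := by
    intro i
    rw [← (Fin.insertNthEquiv (fun _ => H) i).sum_comp, Fintype.sum_prod_type, Finset.sum_comm]
    simp
  calc _ = ∑ i : Fin (r + 1), ∑ Q : Fin (r + 1) → H,
        A.confl F (Finset.univ.image fun j => e (Q (i.succAbove j))) (e (Q i)) := by
        rw [Finset.sum_congr rfl fun i _ => key i]
        simp
    _ = ∑ Q : Fin (r + 1) → H, ∑ i : Fin (r + 1),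
        A.confl F (Finset.univ.image fun j => e (Q (i.succAbove j))) (e (Q i)) := Finset.sum_comm
    _ ≤ ∑ Q : Fin (r + 1) → H, 32 * Bd :=
        Finset.sum_le_sum fun Q _ => clarkson_shor_seq e Q F Bd hBd
    _ = _ := by simp

end Arr
end Geometry

/-! ### Learning the cells of a sample -/

section Recursion

variable {Z ι β : Type} {φ : ι → Z → Prop} {τ : Z → β} [Fintype ι]
variable {L P : Type} [Fintype L] [Fintype P] {A : Z → Arr L P}

variable (φ A) in
/-- The primitive comparisons of points and lines are tests. -/
structure Tests : Prop where
  t1 : ∀ q q' : Pt L P, IsTest φ Set.univ fun z => (A z).px q ≤ (A z).px q'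
  t5 : ∀ q q' : Pt L P, IsTest φ Set.univ fun z => (A z).py q ≤ (A z).py q'
  t4 : ∀ i j k l : Pt L P, IsTest φ Set.univ fun z =>
    ((A z).py j - (A z).py i) * ((A z).px l - (A z).px k) ≤
      ((A z).py l - (A z).py k) * ((A z).px j - (A z).px i)
  t3 : ∀ (g : Ln L) (i j : Pt L P), IsTest φ Set.univ fun z =>
    (A z).py i - (A z).sl g * (A z).px i ≤ (A z).py j - (A z).sl g * (A z).px j
  t2 : ∀ (g : Ln L) (q : Pt L P), IsTest φ Set.univ fun z =>
    (A z).sl g * (A z).px q + (A z).ic g ≤ (A z).py q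
  t2' : ∀ (g : Ln L) (q : Pt L P), IsTest φ Set.univ fun z =>
    (A z).py q ≤ (A z).sl g * (A z).px q + (A z).ic g

variable (φ τ) in
/-- A predicate that is determined by the pattern of test outcomes and can be learned with `c`
tests. -/
def Known (c : ℝ) (ψ : Z → Prop) : Prop :=
  (∀ z z', (∀ i, φ i z ↔ φ i z') → (ψ z ↔ ψ z')) ∧
    Learn φ τ 2 c Set.univ fun z z' => ψ z ↔ ψ z'

namespace Known

variable {c c' : ℝ} {ψ ψ' : Z → Prop}

theorem test (h : IsTest φ Set.univ ψ) : Known φ τ 1 ψ := by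
  refine ⟨fun z z' hz => ?_, Learn.test h (by norm_num)⟩
  obtain ⟨i, hi⟩ := h
  rw [hi z trivial, hi z' trivial, hz i]

theorem const (p : Prop) : Known φ τ 0 fun _ => p :=
  ⟨fun _ _ _ => Iff.rfl, Learn.const fun _ _ _ _ => Iff.rfl⟩

theorem not (h : Known φ τ c ψ) : Known φ τ c fun z => ¬ ψ z :=
  ⟨fun z z' hz => not_congr (h.1 z z' hz), h.2.imp fun _ _ _ _ h => not_congr h⟩

theorem lt {f g : Z → ℝ} (h : Known φ τ c fun z => g z ≤ f z) :
    Known φ τ c fun z => f z < g z := by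
  simpa only [not_le] using h.not

theorem and (h : Known φ τ c ψ) (h' : Known φ τ c' ψ') : Known φ τ (c + c') fun z => ψ z ∧ ψ' z :=
  ⟨fun z z' hz => and_congr (h.1 z z' hz) (h'.1 z z' hz),
    (h.2.and fun _ hT _ _ => h'.2.mono_set hT).imp fun _ _ _ _ h => and_congr h.1 h.2⟩

theorem or (h : Known φ τ c ψ) (h' : Known φ τ c' ψ') : Known φ τ (c + c') fun z => ψ z ∨ ψ' z :=
  ⟨fun z z' hz => or_congr (h.1 z z' hz) (h'.1 z z' hz),
    (h.2.and fun _ hT _ _ => h'.2.mono_set hT).imp fun _ _ _ _ h => or_congr h.1 h.2⟩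

theorem forall_mem {κ : Type} (I : Finset κ) {ψ : κ → Z → Prop} (h : ∀ i, Known φ τ c (ψ i)) :
    Known φ τ (I.card * c) fun z => ∀ i ∈ I, ψ i z :=
  ⟨fun z z' hz => forall_congr' fun i => imp_congr_right fun _ => (h i).1 z z' hz,
    (Learn.finset_const I fun i _ => (h i).2).imp fun _ _ _ _ h =>
      forall_congr' fun i => imp_congr_right fun hi => h i hi⟩

theorem mono (h : Known φ τ c ψ) (hc : c ≤ c') : Known φ τ c' ψ := ⟨h.1, h.2.mono_cost hc⟩

end Known

namespace Arr

/-- The line `g` passes below `σ`. -/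
def Blw (A : Arr L P) (σ : Cfg L) (g : Ln L) : Prop :=
  A.ev g (A.xl σ) ≤ A.ev σ.bot (A.xl σ) ∧ A.ev g (A.xr σ) ≤ A.ev σ.bot (A.xr σ)

/-- The line `g` passes above `σ`. -/
def Abv (A : Arr L P) (σ : Cfg L) (g : Ln L) : Prop :=
  A.ev σ.top (A.xl σ) ≤ A.ev g (A.xl σ) ∧ A.ev σ.top (A.xr σ) ≤ A.ev g (A.xr σ)

end Arr

namespace Tests

theorem evw (hT : Tests φ A) (w : Wall L) (g h : Ln L) :
    Known φ τ 1 fun z => (A z).ev g ((A z).wx w) ≤ (A z).ev h ((A z).wx w) :=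
  Known.test (hT.t5 (.inr (w, g)) (.inr (w, h)))

theorem avoid (hT : Tests φ A) (σ : Cfg L) (g : Ln L) :
    Known φ τ 4 fun z => (A z).Avoid σ g :=
  (((hT.evw σ.lw g σ.bot).and (hT.evw σ.rw g σ.bot)).or
    ((hT.evw σ.lw σ.top g).and (hT.evw σ.rw σ.top g))).mono (by norm_num)

theorem region (hT : Tests φ A) (σ : Cfg L) (p : P) :
    Known φ τ 4 fun z => (A z).Region σ ((A z).X p) ((A z).Y p) := by
  have h1 : Known φ τ 1 fun z => (A z).xl σ ≤ (A z).X p :=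
    Known.test (hT.t1 (.inr (σ.lw, σ.top)) (.inl p))
  have h2 : Known φ τ 1 fun z => (A z).X p < (A z).xr σ :=
    (Known.test (hT.t1 (.inr (σ.rw, σ.top)) (.inl p))).lt
  have h3 : Known φ τ 1 fun z => (A z).ev σ.bot ((A z).X p) ≤ (A z).Y p :=
    Known.test (hT.t2 σ.bot (.inl p))
  have h4 : Known φ τ 1 fun z => (A z).Y p < (A z).ev σ.top ((A z).X p) :=
    (Known.test (hT.t2 σ.top (.inl p))).lt
  exact (h1.and (h2.and (h3.and h4))).mono (by norm_num)

theorem isCell (hT : Tests φ A) (R : Finset L) (σ : Cfg L) :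
    Known φ τ (3 + 4 * R.card) fun z => (A z).IsCell R σ := by
  have h2 : Known φ τ 1 fun z => (A z).xl σ < (A z).xr σ :=
    (Known.test (hT.t1 (.inr (σ.rw, σ.top)) (.inr (σ.lw, σ.top)))).lt
  exact (((Known.const _).and (h2.and ((hT.evw σ.lw σ.bot σ.top).and
    ((hT.evw σ.rw σ.bot σ.top).and (Known.const _))))).and ((Known.const _).and
      (Known.forall_mem R fun i => hT.avoid σ (.inl i)))).mono (by linarith)

end Tests

/-- The configurations defined by lines of `R`. -/
noncomputable def cfgs (R : Finset L) : Finset (Cfg L) := Finset.univ.filter fun σ => σ.defs ⊆ R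

theorem card_cfgs (R : Finset L) : (cfgs R).card ≤ 4 * (R.card + 2) ^ 4 := by
  let G : Finset (Ln L) := R.image Sum.inl ∪ Finset.univ.image Sum.inr
  let O : Finset (Option (Bool × L)) := insert none ((Finset.univ ×ˢ R).image some)
  have h1 : O.card ≤ 2 * R.card + 1 := by
    refine (Finset.card_insert_le _ _).trans ?_
    have := Finset.card_image_le (s := (Finset.univ : Finset Bool) ×ˢ R) (f := some)
    simp only [Finset.card_product, Finset.card_univ, Fintype.card_bool] at this
    omega
  have h2 : G.card ≤ R.card + 2 := by
    refine (Finset.card_union_le _ _).trans ?_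
    have e1 := Finset.card_image_le (s := R) (f := (Sum.inl : L → Ln L))
    have e2 := Finset.card_image_le (s := (Finset.univ : Finset Bool)) (f := (Sum.inr : Bool → Ln L))
    simp only [Finset.card_univ, Fintype.card_bool] at e2
    omega
  have hsub : cfgs R ⊆ (G ×ˢ G) ×ˢ (O ×ˢ O) := by
    rintro ⟨⟨t, b⟩, ⟨l, r⟩⟩ hσ
    have hd := (Finset.mem_filter.1 hσ).2
    have hG : ∀ g : Ln L, Cfg.lnSet g ⊆ R → g ∈ G := by
      rintro (i | s) hg
      · simpa [Cfg.lnSet, G] using hg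
      · simp [G]
    have hO : ∀ o : Option (Bool × L), Cfg.optSet o ⊆ R → o ∈ O := by
      rintro (_ | ⟨s, c⟩) ho
      · simp [O]
      · simpa [Cfg.optSet, O] using ho
    obtain ⟨hd1, hd2⟩ := Finset.union_subset_iff.1 hd
    obtain ⟨a1, a2⟩ := Finset.union_subset_iff.1 hd1
    obtain ⟨a3, a4⟩ := Finset.union_subset_iff.1 hd2
    simp only [Finset.mem_product]
    exact ⟨⟨hG _ a1, hG _ a2⟩, ⟨hO _ a3, hO _ a4⟩⟩
  calc (cfgs R).card ≤ _ := Finset.card_le_card hsub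
    _ = (G.card * G.card) * (O.card * O.card) := by simp only [Finset.card_product]
    _ ≤ ((R.card + 2) * (R.card + 2)) * ((2 * R.card + 1) * (2 * R.card + 1)) := by gcongr
    _ ≤ ((R.card + 2) * (R.card + 2)) * ((2 * R.card + 4) * (2 * R.card + 4)) := by gcongr <;> omega
    _ = _ := by ring

theorem Tests.cells (hT : Tests φ A) (R : Finset L) :
    Learn φ τ 2 ((cfgs R).card * (3 + 4 * R.card)) Set.univ
      fun z z' => (A z).cells R = (A z').cells R := by
  refine (Learn.finset_const (cfgs R) fun σ _ => (hT.isCell R σ).2).imp fun z _ z' _ h => ?_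
  ext σ
  rw [Arr.mem_cells, Arr.mem_cells]
  by_cases hσ : σ.defs ⊆ R
  · exact h σ (Finset.mem_filter.2 ⟨Finset.mem_univ _, hσ⟩)
  · exact iff_of_false (fun h => hσ h.2.1) fun h => hσ h.2.1

namespace Arr

/-- The configurations containing the point `p`. -/
noncomputable def around (A : Arr L P) (p : P) : Finset (Cfg L) :=
  Finset.univ.filter fun σ => A.Region σ (A.X p) (A.Y p)

/-- The weight of the pair of a line `l` and a point `p` for a sample `R` of size about `ρ`: its
sum over all pairs controls both the sizes of the conflict lists of the cells and the total number
of incidences of points with conflict lists. -/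
noncomputable def wt (A : Arr L P) (ρ : ℝ) (R : Finset L) (l : L) (p : P) : ℝ :=
  A.confl Finset.univ R l / (3456 * ρ) + ρ * A.confl (A.around p) R l / 576

theorem wt_nonneg (A : Arr L P) {ρ : ℝ} (hρ : 0 ≤ ρ) (R : Finset L) (l : L) (p : P) :
    0 ≤ A.wt ρ R l p := by unfold wt; positivity

theorem card_around (A : Arr L P) (R : Finset L) (p : P) : (A.around p ∩ A.cells R).card ≤ 9 := by
  refine le_trans (Finset.card_le_card ?_) (card_cells_at (A := A) R (A.X p) (A.Y p))
  intro σ hσ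
  obtain ⟨h1, h2⟩ := Finset.mem_inter.1 hσ
  exact Finset.mem_filter.2 ⟨h2, (Finset.mem_filter.1 h1).2⟩

theorem wt_le (A : Arr L P) {r : ℕ} {R : Finset L} (hR : R.card ≤ r) (l : L) (p : P) :
    A.wt (r + 1) R l p ≤ r + 1 := by
  have h1 : A.confl Finset.univ R l ≤ 6 * (r + 2) ^ 2 := by
    refine (Finset.card_filter_le _ _).trans ?_
    rw [Finset.univ_inter]
    refine (card_cells R).trans ?_
    gcongr
  have h2 : A.confl (A.around p) R l ≤ 9 :=
    (Finset.card_filter_le _ _).trans (A.card_around R p)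
  have h1' : (A.confl Finset.univ R l : ℝ) ≤ 6 * (r + 2) ^ 2 := by exact_mod_cast h1
  have h2' : (A.confl (A.around p) R l : ℝ) ≤ 9 := by exact_mod_cast h2
  have hr : (0 : ℝ) ≤ r := Nat.cast_nonneg r
  unfold wt
  have e1 : (A.confl Finset.univ R l : ℝ) / (3456 * (r + 1)) ≤ (r + 1) / 2 := by
    rw [div_le_iff₀ (by positivity)]
    nlinarith
  have e2 : ((r : ℝ) + 1) * A.confl (A.around p) R l / 576 ≤ (r + 1) / 2 := by
    nlinarith
  linarith

theorem wt_avg (A : Arr L P) (r : ℕ) (H : Finset L) (Q : Finset P) :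
    ∑ R : Fin r → H, ∑ e : H × Q, A.wt (r + 1) (Finset.univ.image fun j => (R j : L)) e.1 e.2
      ≤ Fintype.card (Fin r → H) * Fintype.card (H × Q) := by
  have c1 := clarkson_shor (A := A) r (Subtype.val : H → L) Finset.univ (6 * (r + 3) ^ 2) (by
    intro R hR
    rw [Finset.univ_inter]
    exact (card_cells R).trans
      (Nat.mul_le_mul_left _ (Nat.pow_le_pow_left (by omega) 2)))
  have c2 : ∀ p : P, _ := fun p => clarkson_shor (A := A) r (Subtype.val : H → L) (A.around p) 9
    fun R _ => A.card_around R p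
  have c1' : ((r : ℝ) + 1) * ∑ R : Fin r → H, ∑ h : H,
      (A.confl Finset.univ (Finset.univ.image fun j => (R j : L)) h : ℝ)
      ≤ (H.card : ℝ) ^ (r + 1) * (32 * (6 * (r + 3) ^ 2)) := by
    have := (Nat.cast_le (α := ℝ)).2 c1
    push_cast at this
    simpa using this
  have c2' : ∀ p : P, ((r : ℝ) + 1) * ∑ R : Fin r → H, ∑ h : H,
      (A.confl (A.around p) (Finset.univ.image fun j => (R j : L)) h : ℝ)
      ≤ (H.card : ℝ) ^ (r + 1) * (32 * 9) := by
    intro p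
    have := (Nat.cast_le (α := ℝ)).2 (c2 p)
    push_cast at this
    simp only [Fintype.card_coe] at this
    linarith
  have hr : (0 : ℝ) < r + 1 := by positivity
  have e : ∑ R : Fin r → H, ∑ e : H × Q,
      A.wt (r + 1) (Finset.univ.image fun j => (R j : L)) e.1 e.2
      = Q.card * ((∑ R : Fin r → H, ∑ h : H,
        (A.confl Finset.univ (Finset.univ.image fun j => (R j : L)) h : ℝ)) / (3456 * (r + 1))) +
        ∑ p : Q, (r + 1) * (∑ R : Fin r → H, ∑ h : H,
        (A.confl (A.around p) (Finset.univ.image fun j => (R j : L)) h : ℝ)) / 576 := by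
    simp only [wt, Fintype.sum_prod_type, Finset.sum_add_distrib]
    congr 1
    · simp only [Finset.sum_const, Finset.card_univ, Fintype.card_coe, nsmul_eq_mul,
        Finset.sum_div, Finset.mul_sum]
    · simp only [Finset.mul_sum, Finset.sum_div]
      rw [Finset.sum_comm' (s := Finset.univ) (t := fun _ => Finset.univ) (s' := fun _ => Finset.univ)
        (t' := Finset.univ) (by simp)]
      rw [Finset.sum_congr rfl fun h _ => Finset.sum_comm]
      rw [Finset.sum_comm]
      exact Finset.sum_congr rfl fun p _ => Finset.sum_comm
  rw [e]
  have f1 : (∑ R : Fin r → H, ∑ h : H,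
      (A.confl Finset.univ (Finset.univ.image fun j => (R j : L)) h : ℝ)) / (3456 * (r + 1))
      ≤ (H.card : ℝ) ^ (r + 1) / 2 := by
    rw [div_le_iff₀ (by positivity)]
    have hN : (0 : ℝ) ≤ (H.card : ℝ) ^ (r + 1) := by positivity
    have h9 : ((r : ℝ) + 3) ^ 2 ≤ 9 * (r + 1) ^ 2 := by
      have : (0 : ℝ) ≤ r := Nat.cast_nonneg r
      nlinarith
    refine le_of_mul_le_mul_left (c1'.trans ?_) hr
    calc (H.card : ℝ) ^ (r + 1) * (32 * (6 * (r + 3) ^ 2))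
        ≤ (H.card : ℝ) ^ (r + 1) * (32 * (6 * (9 * (r + 1) ^ 2))) := by gcongr
      _ = _ := by ring
  have f2 : ∀ p : Q, ((r : ℝ) + 1) * (∑ R : Fin r → H, ∑ h : H,
        (A.confl (A.around p) (Finset.univ.image fun j => (R j : L)) h : ℝ)) / 576
      ≤ (H.card : ℝ) ^ (r + 1) / 2 := by
    intro p
    have := c2' p
    linarith
  calc _ ≤ Q.card * ((H.card : ℝ) ^ (r + 1) / 2) + ∑ p : Q, (H.card : ℝ) ^ (r + 1) / 2 :=
        add_le_add (mul_le_mul_of_nonneg_left f1 (by positivity)) (Finset.sum_le_sum fun p _ => f2 p)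
    _ = _ := by
        simp only [Finset.sum_const, Finset.card_univ, Fintype.card_coe, nsmul_eq_mul,
          Fintype.card_fun, Fintype.card_fin, Fintype.card_prod]
        push_cast
        ring

end Arr

end Recursion

section Recursion

variable {Z ι β : Type} {φ : ι → Z → Prop} {τ : Z → β} [Fintype ι]
variable {L P : Type} [Fintype L] [Fintype P] {A : Z → Arr L P}

/-- The weights only depend on the cells, on which of them contain the point, and on which of them
meet the line. -/
theorem Arr.wt_congr {A A' : Arr L P} {ρ : ℝ} {R : Finset L} {l : L} {p : P}
    (h1 : A.cells R = A'.cells R)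
    (h2 : ∀ σ ∈ A.cells R, (A.Region σ (A.X p) (A.Y p) ↔ A'.Region σ (A'.X p) (A'.Y p)))
    (h3 : ∀ σ ∈ A.cells R, (A.Avoid σ (.inl l) ↔ A'.Avoid σ (.inl l))) :
    A.wt ρ R l p = A'.wt ρ R l p := by
  have e1 : A.confl Finset.univ R l = A'.confl Finset.univ R l := by
    unfold Arr.confl
    rw [Finset.univ_inter, Finset.univ_inter, ← h1]
    congr 1
    exact Finset.filter_congr fun σ hσ => not_congr (h3 σ hσ)
  have e2 : A.confl (A.around p) R l = A'.confl (A'.around p) R l := by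
    unfold Arr.confl
    congr 1
    ext σ
    simp only [Finset.mem_filter, Finset.mem_inter, Arr.around, Finset.mem_univ, true_and, ← h1]
    constructor
    · rintro ⟨⟨a, b⟩, c⟩
      exact ⟨⟨(h2 σ b).1 a, b⟩, fun d => c ((h3 σ b).2 d)⟩
    · rintro ⟨⟨a, b⟩, c⟩
      exact ⟨⟨(h2 σ b).2 a, b⟩, fun d => c ((h3 σ b).1 d)⟩
  unfold Arr.wt
  rw [e1, e2]

variable (A) in
/-- The inputs `z` and `z'` agree on the cells of `R` and their position relative to the points in
`Q` and the lines in `H`. -/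
def Inf (R H : Finset L) (Q : Finset P) (z z' : Z) : Prop :=
  (A z).cells R = (A z').cells R ∧ ∀ σ ∈ (A z).cells R,
    (∀ p ∈ Q, ((A z).Region σ ((A z).X p) ((A z).Y p) ↔
      (A z').Region σ ((A z').X p) ((A z').Y p))) ∧
    ∀ h ∈ H, ((A z).Blw σ (.inl h) ↔ (A z').Blw σ (.inl h)) ∧
      ((A z).Avoid σ (.inl h) ↔ (A z').Avoid σ (.inl h))

theorem cells_cost {R : Finset L} {r : ℕ} (hR : R.card ≤ r) :
    ((cfgs R).card : ℝ) ≤ 64 * ((r : ℝ) + 1) ^ 4 := by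
  have h1 : ((cfgs R).card : ℝ) ≤ 4 * ((R.card : ℝ) + 2) ^ 4 := by
    exact_mod_cast card_cfgs R
  have h2 : (R.card : ℝ) ≤ r := by exact_mod_cast hR
  have h3 : (R.card : ℝ) + 2 ≤ 2 * (r + 1) := by linarith [(Nat.cast_nonneg r : (0 : ℝ) ≤ r)]
  calc _ ≤ _ := h1
    _ ≤ 4 * (2 * ((r : ℝ) + 1)) ^ 4 := by gcongr
    _ = _ := by ring

/-- The cells of `R` are found by brute force, and so are the cells of the points; the position of
the lines relative to the corners of the cells is found by the batched algorithm. -/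
theorem Tests.info (hT : Tests φ A) {r : ℕ} {R : Finset L} (hR : R.card ≤ r) (H : Finset L)
    (Q : Finset P) :
    Learn φ τ 2 (56000 * (H.card + Q.card * ((r : ℝ) + 1) ^ 2 + ((r : ℝ) + 1) ^ 5)) Set.univ
      (Inf A R H Q) := by
  have hr : (1 : ℝ) ≤ r + 1 := by linarith [(Nat.cast_nonneg r : (0 : ℝ) ≤ r)]
  have hRr : (R.card : ℝ) ≤ r := by exact_mod_cast hR
  have hc1 : ((cfgs R).card : ℝ) * (3 + 4 * R.card) ≤ 256 * ((r : ℝ) + 1) ^ 5 := by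
    calc _ ≤ 64 * ((r : ℝ) + 1) ^ 4 * (4 * (r + 1)) := by
          gcongr
          · exact cells_cost hR
          · linarith
      _ = _ := by ring
  refine ((hT.cells R).and (c' := 96 * Q.card * ((r : ℝ) + 1) ^ 2 +
      (55296 * ((r : ℝ) + 1) ^ 4 + 8 * H.card)) (r' := fun z z' => ∀ σ ∈ (A z).cells R,
    (∀ p ∈ Q, ((A z).Region σ ((A z).X p) ((A z).Y p) ↔
      (A z').Region σ ((A z').X p) ((A z').Y p))) ∧
    ∀ h ∈ H, ((A z).Blw σ (.inl h) ↔ (A z').Blw σ (.inl h)) ∧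
      ((A z).Avoid σ (.inl h) ↔ (A z').Avoid σ (.inl h))) fun T _ hne hcell => ?_).mono_cost ?_
  · obtain ⟨z₀, hz₀⟩ := hne
    set C := (A z₀).cells R with hC
    have hCz : ∀ z ∈ T, (A z).cells R = C := fun z hz => hcell z hz z₀ hz₀
    have hCc : (C.card : ℝ) ≤ 24 * ((r : ℝ) + 1) ^ 2 := by
      have h1 : (C.card : ℝ) ≤ 6 * ((R.card : ℝ) + 2) ^ 2 := by
        exact_mod_cast Arr.card_cells (A := A z₀) R
      calc _ ≤ _ := h1
        _ ≤ 6 * (2 * ((r : ℝ) + 1)) ^ 2 := by gcongr; linarith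
        _ = _ := by ring
    let I : Finset (Pt L P) := (C ×ˢ (Finset.univ : Finset (Bool × Bool))).image fun x =>
      .inr (if x.2.1 then x.1.lw else x.1.rw, if x.2.2 then x.1.top else x.1.bot)
    have hIm : ∀ σ ∈ C, ∀ a b : Bool,
        (.inr (if a then σ.lw else σ.rw, if b then σ.top else σ.bot) : Pt L P) ∈ I := by
      intro σ hσ a b
      exact Finset.mem_image.2 ⟨(σ, (a, b)), by simp [hσ], rfl⟩
    have hIc : (I.card : ℝ) ≤ 96 * ((r : ℝ) + 1) ^ 2 := by
      have h1 : I.card ≤ C.card * 4 := by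
        refine Finset.card_image_le.trans ?_
        rw [Finset.card_product]
        simp
      have h2 : (I.card : ℝ) ≤ C.card * 4 := by exact_mod_cast h1
      linarith
    have hreg := Learn.finset_const (φ := φ) (τ := τ) (b := 2) (c := 4) (S := Set.univ) (C ×ˢ Q)
      (r := fun x z z' => ((A z).Region x.1 ((A z).X x.2) ((A z).Y x.2) ↔
      (A z').Region x.1 ((A z').X x.2) ((A z').Y x.2))) fun x _ => (hT.region x.1 x.2).2
    have hbat := Learn.batch (φ := φ) (τ := τ) (S := Set.univ) I H (fun q z => (A z).px q)
      (fun q z => (A z).py q) (fun h z => (A z).sl (.inl h)) (fun h z => (A z).ic (.inl h))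
      (fun i _ j _ => hT.t1 i j) (fun i _ j _ => hT.t5 i j)
      (fun i _ j _ k _ l _ => hT.t4 i j k l) (fun a _ i _ j _ => hT.t3 (.inl a) i j)
      (fun a _ i _ => hT.t2 (.inl a) i) (fun a _ i _ => hT.t2' (.inl a) i)
    refine (((hreg.and fun _ hT' _ _ => hbat.mono_set hT').mono_set (Set.subset_univ T)).imp
      ?_).mono_cost ?_
    · intro z hz z' hz' h σ hσ
      rw [hCz z hz] at hσ
      refine ⟨fun p hp => h.1 (σ, p) (Finset.mem_product.2 ⟨hσ, hp⟩), fun a ha => ?_⟩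
      have k1 := h.2 a ha _ (hIm σ hσ true true)
      have k2 := h.2 a ha _ (hIm σ hσ true false)
      have k3 := h.2 a ha _ (hIm σ hσ false true)
      have k4 := h.2 a ha _ (hIm σ hσ false false)
      have hb : (A z).Blw σ (.inl a) ↔ (A z').Blw σ (.inl a) := and_congr k2.1 k4.1
      have ha : (A z).Abv σ (.inl a) ↔ (A z').Abv σ (.inl a) := and_congr k1.2 k3.2
      exact ⟨hb, or_congr hb ha⟩
    · rw [Finset.card_product]
      push_cast
      have e1 : (C.card : ℝ) * Q.card * 4 ≤ 96 * Q.card * ((r : ℝ) + 1) ^ 2 := by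
        have := mul_le_mul_of_nonneg_right hCc (Nat.cast_nonneg (α := ℝ) Q.card)
        linarith
      have e2 : 6 * (I.card : ℝ) ^ 2 ≤ 55296 * ((r : ℝ) + 1) ^ 4 := by
        calc 6 * (I.card : ℝ) ^ 2 ≤ 6 * (96 * ((r : ℝ) + 1) ^ 2) ^ 2 := by gcongr
          _ = _ := by ring
      linarith
  · have h45 : ((r : ℝ) + 1) ^ 4 ≤ ((r : ℝ) + 1) ^ 5 := pow_le_pow_right₀ hr (by norm_num)
    have h5 : (0 : ℝ) ≤ Q.card * ((r : ℝ) + 1) ^ 2 := by positivity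
    have h6 : (0 : ℝ) ≤ (r + 1) ^ 4 := by positivity
    have h7 : (0 : ℝ) ≤ H.card := by positivity
    linarith

theorem Tests.wt_det (hT : Tests φ A) (ρ : ℝ) (R : Finset L) (l : L) (p : P) {z z' : Z}
    (hz : ∀ i, φ i z ↔ φ i z') : (A z).wt ρ R l p = (A z').wt ρ R l p := by
  refine Arr.wt_congr ?_ (fun σ _ => (hT.region (τ := fun _ : Z => ()) σ p).1 z z' hz)
    (fun σ _ => (hT.avoid (τ := fun _ : Z => ()) σ (.inl l)).1 z z' hz)
  ext σ
  rw [Arr.mem_cells, Arr.mem_cells]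
  exact (hT.isCell (τ := fun _ : Z => ()) R σ).1 z z' hz

theorem Tests.wt_learn (hT : Tests φ A) {r : ℕ} (ρ : ℝ) {R : Finset L} (hR : R.card ≤ r) (l : L)
    (p : P) : Learn φ τ 2 (1000 * ((r : ℝ) + 1) ^ 5) Set.univ
      fun z z' => (A z).wt ρ R l p = (A z').wt ρ R l p := by
  have hr : (1 : ℝ) ≤ r + 1 := by linarith [(Nat.cast_nonneg r : (0 : ℝ) ≤ r)]
  have hRr : (R.card : ℝ) ≤ r := by exact_mod_cast hR
  have h1 := Learn.finset_const (cfgs R) fun σ _ =>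
    ((hT.region (τ := τ) σ p).2.and fun _ h _ _ => (hT.avoid σ (.inl l)).2.mono_set h)
  refine (((hT.cells R).and fun _ h _ _ => h1.mono_set h).imp ?_).mono_cost ?_
  · intro z _ z' _ h
    have hsub : ∀ σ ∈ (A z).cells R, σ ∈ cfgs R := fun σ hσ =>
      Finset.mem_filter.2 ⟨Finset.mem_univ _, (Arr.mem_cells.1 hσ).2.1⟩
    exact Arr.wt_congr h.1 (fun σ hσ => (h.2 σ (hsub σ hσ)).1) fun σ hσ => (h.2 σ (hsub σ hσ)).2
  · calc ((cfgs R).card : ℝ) * (3 + 4 * R.card) + (cfgs R).card * (4 + 4)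
        = (cfgs R).card * (11 + 4 * R.card) := by ring
      _ ≤ 64 * ((r : ℝ) + 1) ^ 4 * (15 * (r + 1)) := by
          gcongr
          · exact cells_cost hR
          · linarith
      _ ≤ _ := by
          have : (0 : ℝ) ≤ ((r : ℝ) + 1) ^ 5 := by positivity
          nlinarith

theorem Inf.wt_sum {R H : Finset L} {Q : Finset P} {z z' : Z} (h : Inf A R H Q z z') (ρ : ℝ) :
    ∑ e : H × Q, (A z).wt ρ R e.1 e.2 = ∑ e : H × Q, (A z').wt ρ R e.1 e.2 :=
  Finset.sum_congr rfl fun e _ => Arr.wt_congr h.1 (fun σ hσ => (h.2 σ hσ).1 _ e.2.2)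
    fun σ hσ => ((h.2 σ hσ).2 _ e.1.2).2

end Recursion

section Recursion

variable {Z ι β : Type} {φ : ι → Z → Prop} {τ : Z → β} [Fintype ι]
variable {L P : Type} [Fintype L] [Fintype P] {A : Z → Arr L P}

/-- The sample sizes used to estimate the quality of a random sample of lines. -/
noncomputable def aSz (ρ W : ℝ) (i : ℕ) : ℝ := ρ ^ 10 + W / ρ ^ (29 * i)

theorem aSz_step {ρ W : ℝ} (hρ : 20 ≤ ρ) (i : ℕ) :
    aSz ρ W i + 1 ≤ ρ ^ 29 * aSz ρ W (i + 1) := by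
  unfold aSz
  have h0 : 0 < ρ := by linarith
  have e : ρ ^ 29 * (W / ρ ^ (29 * (i + 1))) = W / ρ ^ (29 * i) := by
    rw [show 29 * (i + 1) = 29 * i + 29 by ring, pow_add]
    field_simp
  have h1 : (20 : ℝ) ≤ ρ ^ 29 := hρ.trans (le_self_pow₀ (by linarith) (by norm_num))
  have h2 : (20 : ℝ) ≤ ρ ^ 10 := hρ.trans (le_self_pow₀ (by linarith) (by norm_num))
  nlinarith

variable (A) in
/-- The sample `R` is good for the input `z`: on average over the lines of `H` and the points of `Q`
the weights are bounded, that is, the cells of `R` have small conflict lists. -/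
def GoodAt (r : ℕ) (R H : Finset L) (Q : Finset P) (z : Z) : Prop :=
  ∑ e : H × Q, (A z).wt (r + 1) R e.1 e.2 ≤ 4 * 16 ^ 4 * (H.card * Q.card)

/-- Sample sizes with which a random sample of lines can be tested for quality in four rounds. -/
theorem sample_sizes {ρ N q W : ℝ} (hr : 20 ≤ ρ) (hN : 0 ≤ N) (hq : 0 ≤ q)
    (hHc : N ≤ 2 * ρ ^ 120) (hQc : q ≤ 2 * ρ ^ 120) (hW : W = 56000 * (N + q * ρ ^ 2 + ρ ^ 5)) :
    ∃ a : ℕ → ℕ, (∀ i, a (i + 1) ≤ a i) ∧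
      Real.exp (-((a 4 : ℝ) / (2 * ρ))) ≤ 1 / (2 * ((4 : ℕ) : ℝ)) ∧
      W + ((4 : ℕ) : ℝ) * ((a 1 : ℝ) * (1000 * ρ ^ 5)) ≤ (ρ ^ 39 - 2) * ((a 1 : ℝ) / (2 * ρ)) ∧
      (∀ i, 1 ≤ i → i < 4 → ((4 : ℕ) : ℝ) * ((a i : ℝ) * (1000 * ρ ^ 5)) ≤
        (ρ ^ 39 - 2) * ((a (i + 1) : ℝ) / (2 * ρ))) ∧
      (a 4 : ℝ) * (1000 * ρ ^ 5) ≤ ρ ^ 39 - 2 ∧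
      4 * ((a 1 : ℝ) * (1000 * ρ ^ 5)) ≤ W + 8000 * ρ ^ 15 := by
  have h0 : 0 < ρ := by linarith
  have h1 : 1 ≤ ρ := by linarith
  have pw : ∀ k : ℕ, 1 ≤ k → (20 : ℝ) ≤ ρ ^ k := fun k hk => hr.trans (le_self_pow₀ h1 (by omega))
  have hW0 : 0 ≤ W := by rw [hW]; positivity
  have ha0 : ∀ i, 0 ≤ aSz ρ W i := fun i => by unfold aSz; positivity
  obtain ⟨a, hle, hge, hanti⟩ : ∃ a : ℕ → ℕ, (∀ i, aSz ρ W i ≤ a i) ∧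
      (∀ i, (a i : ℝ) ≤ aSz ρ W i + 1) ∧ ∀ i, a (i + 1) ≤ a i := by
    refine ⟨fun i => ⌈aSz ρ W i⌉₊, fun i => Nat.le_ceil _,
      fun i => (Nat.ceil_lt_add_one (ha0 i)).le, fun i => Nat.ceil_mono ?_⟩
    unfold aSz
    gcongr
    exact Nat.le_succ i
  have ha10 : ∀ i, ρ ^ 10 ≤ aSz ρ W i := fun i => by
    unfold aSz; have : 0 ≤ W / ρ ^ (29 * i) := by positivity
    linarith
  -- the rate at which the potential pays for sampling
  have hD : ρ ^ 37 * 4 ≤ (ρ ^ 39 - 2) / (2 * ρ) := by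
    rw [le_div_iff₀ (by positivity)]
    have := pw 38 (by norm_num)
    have e : ρ ^ 39 = ρ ^ 38 * ρ := pow_succ _ _
    have e' : ρ ^ 37 * 4 * (2 * ρ) = 8 * ρ ^ 38 := by ring
    rw [e', e]; nlinarith
  have hstep : ∀ i, 4 * ((a i : ℝ) * (1000 * ρ ^ 5)) ≤
      (ρ ^ 39 - 2) * ((a (i + 1) : ℝ) / (2 * ρ)) := by
    intro i
    have e1 : (a i : ℝ) ≤ ρ ^ 29 * a (i + 1) := by
      refine (hge i).trans ((aSz_step hr i).trans ?_)
      gcongr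
      exact hle _
    have e2 : (0 : ℝ) ≤ a (i + 1) := Nat.cast_nonneg _
    have e3 : (4000 : ℝ) ≤ ρ ^ 3 * 4 := by
      have : (20 : ℝ) ^ 3 ≤ ρ ^ 3 := by gcongr
      linarith
    calc 4 * ((a i : ℝ) * (1000 * ρ ^ 5)) ≤ 4 * (ρ ^ 29 * a (i + 1) * (1000 * ρ ^ 5)) := by gcongr
      _ = (4000 * ρ ^ 34) * a (i + 1) := by ring
      _ ≤ (ρ ^ 3 * 4 * ρ ^ 34) * a (i + 1) := by gcongr
      _ = (ρ ^ 37 * 4) * a (i + 1) := by ring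
      _ ≤ ((ρ ^ 39 - 2) / (2 * ρ)) * a (i + 1) := by gcongr
      _ = _ := by ring
  have hWa : W ≤ ρ ^ 29 * a 1 := by
    have : W = ρ ^ 29 * (W / ρ ^ (29 * 1)) := by field_simp
    have h2 : W / ρ ^ (29 * 1) ≤ a 1 := by
      refine le_trans ?_ (hle 1)
      unfold aSz
      have : 0 ≤ ρ ^ 10 := by positivity
      linarith
    rw [this]; gcongr
  have ha1 : 4 * ((a 1 : ℝ) * (1000 * ρ ^ 5)) ≤ W + 8000 * ρ ^ 15 := by
    have e1 : (a 1 : ℝ) ≤ 2 * ρ ^ 10 + W / ρ ^ 29 := by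
      refine (hge 1).trans ?_
      unfold aSz
      have := pw 10 (by norm_num)
      simp only [mul_one]
      linarith
    have e2 : 4000 * ρ ^ 5 * (W / ρ ^ 29) ≤ W := by
      rw [show 4000 * ρ ^ 5 * (W / ρ ^ 29) = W * (4000 * ρ ^ 5) / ρ ^ 29 by ring,
        div_le_iff₀ (by positivity)]
      have e3 : (4000 : ℝ) ≤ ρ ^ 24 := by
        have : (20 : ℝ) ^ 24 ≤ ρ ^ 24 := by gcongr
        refine le_trans ?_ this
        norm_num
      have : 4000 * ρ ^ 5 ≤ ρ ^ 29 := by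
        calc 4000 * ρ ^ 5 ≤ ρ ^ 24 * ρ ^ 5 := by gcongr
          _ = _ := by ring
      gcongr
    calc 4 * ((a 1 : ℝ) * (1000 * ρ ^ 5)) ≤ 4 * ((2 * ρ ^ 10 + W / ρ ^ 29) * (1000 * ρ ^ 5)) := by
          gcongr
      _ = 8000 * ρ ^ 15 + 4000 * ρ ^ 5 * (W / ρ ^ 29) := by ring
      _ ≤ _ := by linarith
  have hak : Real.exp (-((a 4 : ℝ) / (2 * ρ))) ≤ 1 / (2 * ((4 : ℕ) : ℝ)) := by
    have e1 : (8 : ℝ) ≤ a 4 / (2 * ρ) := by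
      rw [le_div_iff₀ (by positivity)]
      have := (ha10 4).trans (hle 4)
      have e : ρ ^ 10 = ρ ^ 9 * ρ := pow_succ _ _
      have := pw 9 (by norm_num)
      nlinarith
    have e2 : Real.exp (-(a 4 / (2 * ρ))) ≤ Real.exp (-8) := Real.exp_le_exp.2 (by linarith)
    refine e2.trans ?_
    rw [Real.exp_neg, inv_eq_one_div]
    refine one_div_le_one_div_of_le (by norm_num) ?_
    have := Real.add_one_le_exp (8 : ℝ)
    push_cast
    linarith
  have hB0 : W + ((4 : ℕ) : ℝ) * ((a 1 : ℝ) * (1000 * ρ ^ 5)) ≤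
      (ρ ^ 39 - 2) * ((a 1 : ℝ) / (2 * ρ)) := by
    have e1 : (0 : ℝ) ≤ a 1 := Nat.cast_nonneg _
    have e3 : (4000 : ℝ) ≤ ρ ^ 24 := by
      have : (20 : ℝ) ^ 24 ≤ ρ ^ 24 := by gcongr
      refine le_trans ?_ this
      norm_num
    calc W + ((4 : ℕ) : ℝ) * (a 1 * (1000 * ρ ^ 5))
        ≤ ρ ^ 29 * a 1 + 4 * (a 1 * (1000 * ρ ^ 5)) := by push_cast; gcongr
      _ = (ρ ^ 29 + 4000 * ρ ^ 5) * a 1 := by ring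
      _ ≤ (ρ ^ 29 + ρ ^ 24 * ρ ^ 5) * a 1 := by gcongr
      _ = (2 * ρ ^ 29) * a 1 := by ring
      _ ≤ (ρ ^ 37 * 4) * a 1 := by
          refine mul_le_mul_of_nonneg_right ?_ e1
          have : ρ ^ 29 ≤ ρ ^ 37 := pow_le_pow_right₀ h1 (by norm_num)
          have : (0 : ℝ) ≤ ρ ^ 29 := by positivity
          linarith
      _ ≤ ((ρ ^ 39 - 2) / (2 * ρ)) * a 1 := by gcongr
      _ = _ := by ring
  have hB1 : ∀ i, 1 ≤ i → i < 4 → ((4 : ℕ) : ℝ) * ((a i : ℝ) * (1000 * ρ ^ 5)) ≤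
      (ρ ^ 39 - 2) * ((a (i + 1) : ℝ) / (2 * ρ)) := fun i _ _ => by
    rw [Nat.cast_ofNat]; exact hstep i
  have hBk : (a 4 : ℝ) * (1000 * ρ ^ 5) ≤ ρ ^ 39 - 2 := by
    have e1 : W ≤ 280000 * ρ ^ 122 := by
      have f1 : ρ ^ 5 ≤ ρ ^ 122 := pow_le_pow_right₀ h1 (by norm_num)
      have f2 : ρ ^ 120 ≤ ρ ^ 122 := pow_le_pow_right₀ h1 (by norm_num)
      have f3 : q * ρ ^ 2 ≤ 2 * ρ ^ 122 := by
        calc q * ρ ^ 2 ≤ 2 * ρ ^ 120 * ρ ^ 2 := by gcongr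
          _ = _ := by ring
      rw [hW]; linarith
    have e2 : W / ρ ^ (29 * 4) ≤ 280000 * ρ ^ 6 := by
      rw [div_le_iff₀ (by positivity)]
      calc W ≤ _ := e1
        _ = _ := by ring
    have e3 : (280000 : ℝ) * ρ ^ 6 ≤ 2 * ρ ^ 10 := by
      have : (20 : ℝ) ^ 4 ≤ ρ ^ 4 := by gcongr
      calc (280000 : ℝ) * ρ ^ 6 ≤ (2 * ρ ^ 4) * ρ ^ 6 := by gcongr; linarith
        _ = _ := by ring
    have e4 : (a 4 : ℝ) ≤ 4 * ρ ^ 10 := by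
      refine (hge 4).trans ?_
      unfold aSz
      have := pw 10 (by norm_num)
      linarith
    have e5 : (4000 : ℝ) ≤ ρ ^ 3 := by
      have : (20 : ℝ) ^ 3 ≤ ρ ^ 3 := by gcongr
      linarith
    calc (a 4 : ℝ) * (1000 * ρ ^ 5) ≤ 4 * ρ ^ 10 * (1000 * ρ ^ 5) := by gcongr
      _ = 4000 * ρ ^ 15 := by ring
      _ ≤ ρ ^ 3 * ρ ^ 15 := by gcongr
      _ = ρ ^ 18 := by ring
      _ ≤ ρ ^ 38 := pow_le_pow_right₀ h1 (by norm_num)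
      _ ≤ ρ ^ 39 - 2 := by
          have := pw 38 (by norm_num)
          have e : ρ ^ 39 = ρ ^ 38 * ρ := pow_succ _ _
          nlinarith
  exact ⟨a, hanti, hak, hB0, hB1, hBk, ha1⟩

theorem Tests.sample (hT : Tests φ A) {r : ℕ} (hr : 20 ≤ (r : ℝ) + 1) (H : Finset L) (Q : Finset P)
    (hH : H.Nonempty) (hQ : Q.Nonempty) (hHc : (H.card : ℝ) ≤ 2 * ((r : ℝ) + 1) ^ 120)
    (hQc : (Q.card : ℝ) ≤ 2 * ((r : ℝ) + 1) ^ 120) {S : Set Z} {c : ℝ} {rel : Z → Z → Prop}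
    (h : ∀ R : Finset L, R.card ≤ r → ∀ T ⊆ S, T.Nonempty → (∀ z ∈ T, GoodAt A r R H Q z) →
      Learn φ τ (((r : ℝ) + 1) ^ 39) c T rel) :
    Learn φ τ (((r : ℝ) + 1) ^ 39)
      (c + 120000 * (H.card + Q.card * ((r : ℝ) + 1) ^ 2 + ((r : ℝ) + 1) ^ 15)) S rel := by
  set ρ : ℝ := (r : ℝ) + 1 with hρ
  set W : ℝ := 56000 * (H.card + Q.card * ρ ^ 2 + ρ ^ 5) with hW
  have h0 : 0 < ρ := by linarith
  have h1 : 1 ≤ ρ := by linarith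
  have pw : ∀ k : ℕ, 1 ≤ k → (20 : ℝ) ≤ ρ ^ k := fun k hk => hr.trans (le_self_pow₀ h1 (by omega))
  have hW0 : 0 ≤ W := by positivity
  have : Nonempty H := hH.to_subtype
  have : Nonempty Q := hQ.to_subtype
  have hRc : ∀ R : Fin r → H, (Finset.univ.image fun j => (R j : L)).card ≤ r := fun R =>
    Finset.card_image_le.trans (by simp)
  obtain ⟨a, hanti, hak, hB0, hB1, hBk, ha1⟩ := sample_sizes hr (Nat.cast_nonneg _)
    (Nat.cast_nonneg _) hHc hQc hW
  have hsm := sampleGood (φ := φ) (τ := τ) (S := (Set.univ : Set Z)) (R := Fin r → H) (E := H × Q)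
    4 (by norm_num) a
    (fun R e z => (A z).wt ρ (Finset.univ.image fun j => (R j : L)) e.1 e.2)
    ρ (1000 * ρ ^ 5) W (ρ ^ 39) h0
    ((by norm_num : (2 : ℝ) ≤ 20).trans (pw 39 (by norm_num))) (by positivity)
    (fun R e z => Arr.wt_nonneg _ h0.le _ _ _)
    (fun R e z _ => Arr.wt_le _ (hRc R) _ _)
    (fun R e z _ z' _ hz => hT.wt_det _ _ _ _ hz)
    (fun R e => hT.wt_learn _ (hRc R) _ _)
    (fun R => (hT.info (hRc R) H Q).imp fun z _ z' _ hi => hi.wt_sum _)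
    (fun z _ => Arr.wt_avg _ r H Q)
    hanti hak hB0 hB1 hBk
  intro S' hS' hne K hK
  refine (hsm S' (Set.subset_univ _) hne (K + c) fun R S'' hS'' hne'' hg => ?_).mono subset_rfl ?_
  · refine h _ (hRc R) S'' (hS''.trans hS') hne'' (fun z hz => ?_) S'' subset_rfl hne'' K
      fun T hT hTne hrel => hK T (hT.trans hS'') hTne hrel
    have := hg z hz
    unfold GoodAt
    simpa using this
  · have f1 : ρ ^ 5 ≤ ρ ^ 15 := pow_le_pow_right₀ h1 (by norm_num)
    have f2 : (0 : ℝ) ≤ Q.card * ρ ^ 2 := by positivity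
    have f3 : (0 : ℝ) ≤ H.card := by positivity
    push_cast
    have : W + W + 8000 * ρ ^ 15 ≤ 120000 * (H.card + Q.card * ρ ^ 2 + ρ ^ 15) := by
      rw [hW]; linarith
    linarith

end Recursion

section Recursion

variable {Z ι β : Type} {φ : ι → Z → Prop} {τ : Z → β} [Fintype ι]
variable {L P : Type} [Fintype L] [Fintype P] {A : Z → Arr L P}

variable (A) in
/-- The inputs `z` and `z'` agree on which points of `Q` lie above which lines of `H`. -/
def Agree (H : Finset L) (Q : Finset P) (z z' : Z) : Prop :=
  ∀ p ∈ Q, ∀ h ∈ H, ((A z).ev (.inl h) ((A z).X p) ≤ (A z).Y p ↔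
    (A z').ev (.inl h) ((A z').X p) ≤ (A z').Y p)

/-- The batched algorithm, applied to groups of `s` points. -/
theorem Tests.groups (hT : Tests φ A) {s : ℕ} (hs : 1 ≤ s) (H : Finset L) (Q : Finset P) :
    Learn φ τ 2 (8 * H.card + 8 * (Q.card * H.card / s) + 6 * (s * Q.card)) Set.univ
      (Agree A H Q) := by
  have hs0 : (0 : ℝ) < s := by exact_mod_cast hs
  have hbat : ∀ Q : Finset P, Learn φ τ 2 (6 * (Q.card : ℝ) ^ 2 + 8 * H.card) Set.univ
      (Agree A H Q) := by
    intro Q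
    have hb := Learn.batch (φ := φ) (τ := τ) (S := Set.univ) Q H (fun q z => (A z).px (.inl q))
      (fun q z => (A z).py (.inl q)) (fun h z => (A z).sl (.inl h)) (fun h z => (A z).ic (.inl h))
      (fun i _ j _ => hT.t1 _ _) (fun i _ j _ => hT.t5 _ _)
      (fun i _ j _ k _ l _ => hT.t4 _ _ _ _) (fun a _ i _ j _ => hT.t3 (.inl a) _ _)
      (fun a _ i _ => hT.t2 (.inl a) _) (fun a _ i _ => hT.t2' (.inl a) _)
    exact hb.imp fun z _ z' _ h p hp a ha => (h a ha p hp).1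
  induction hn : Q.card using Nat.strong_induction_on generalizing Q with
  | _ n ih =>
    subst hn
    rcases le_or_gt Q.card s with h | h
    · refine (hbat Q).mono_cost ?_
      have h' : (Q.card : ℝ) ≤ s := by exact_mod_cast h
      have e1 : (Q.card : ℝ) ^ 2 ≤ s * Q.card := by
        rw [sq]; gcongr
      have e2 : (0 : ℝ) ≤ Q.card * H.card / s := by positivity
      linarith
    · obtain ⟨Q1, hQ1, hc⟩ := Finset.exists_subset_card_eq h.le
      have hc2 : (Q \ Q1).card = Q.card - s := by rw [Finset.card_sdiff_of_subset hQ1, hc]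
      have hc3 : ((Q.card - s : ℕ) : ℝ) = Q.card - s := by rw [Nat.cast_sub h.le]
      have := ih (Q.card - s) (by omega) (Q \ Q1) hc2
      refine (((hbat Q1).and fun T hT _ _ => this.mono_set hT).imp ?_).mono_cost ?_
      · intro z _ z' _ hz p hp
        by_cases hp1 : p ∈ Q1
        · exact hz.1 p hp1
        · exact hz.2 p (by simp [hp, hp1])
      · rw [hc, hc3]
        apply le_of_eq
        field_simp
        ring

/-- A crude constant, larger than all constants of a single level of the recursion. -/
noncomputable def kap : ℝ := 1000000000

theorem good_arith {ρ a b q N : ℝ} (hρ : 0 < ρ) (hq : 0 < q) (hN : 0 ≤ N) (ha : 0 ≤ a)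
    (hb : 0 ≤ b) (h : q * (a / (3456 * ρ)) + ρ / 576 * b ≤ 4 * 16 ^ 4 * (N * q)) :
    a ≤ 905969664 * (ρ * N) ∧ b ≤ 905969664 * (q * N / ρ) := by
  constructor
  · have h1 : q * (a / (3456 * ρ)) ≤ 4 * 16 ^ 4 * (N * q) := by
      have : 0 ≤ ρ / 576 * b := by positivity
      linarith
    have h2 : a / (3456 * ρ) ≤ 4 * 16 ^ 4 * N := by
      refine le_of_mul_le_mul_left ?_ hq
      linarith
    rw [div_le_iff₀ (by positivity)] at h2
    linarith
  · have h1 : ρ / 576 * b ≤ 4 * 16 ^ 4 * (N * q) := by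
      have : 0 ≤ q * (a / (3456 * ρ)) := by positivity
      linarith
    have h2 : b ≤ 150994944 * (q * N / ρ) := by
      rw [← mul_div_assoc, le_div_iff₀ hρ]
      linarith
    have : 0 ≤ q * N / ρ := by positivity
    linarith

theorem GoodAt.sums {r : ℕ} {R H : Finset L} {Q : Finset P} {z : Z} (h : GoodAt A r R H Q z)
    (hQ : Q.Nonempty) :
    ∑ σ ∈ (A z).cells R, ((H.filter fun l => ¬ (A z).Avoid σ (.inl l)).card : ℝ) ≤
      905969664 * (((r : ℝ) + 1) * H.card) ∧
    ∑ σ ∈ (A z).cells R, ((Q.filter fun p => (A z).Region σ ((A z).X p) ((A z).Y p)).card *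
      (H.filter fun l => ¬ (A z).Avoid σ (.inl l)).card : ℝ) ≤
      905969664 * (Q.card * H.card / ((r : ℝ) + 1)) := by
  have hρ : (0 : ℝ) < r + 1 := by positivity
  have hQ0 : (0 : ℝ) < Q.card := by exact_mod_cast hQ.card_pos
  have e1 : ∑ σ ∈ (A z).cells R, ((H.filter fun l => ¬ (A z).Avoid σ (.inl l)).card : ℝ) =
      ∑ l ∈ H, ((A z).confl Finset.univ R l : ℝ) := by
    unfold Arr.confl
    simp only [Finset.univ_inter, Finset.card_filter, Nat.cast_sum]
    rw [Finset.sum_comm]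
  have e2 : ∑ σ ∈ (A z).cells R, ((Q.filter fun p => (A z).Region σ ((A z).X p) ((A z).Y p)).card *
      (H.filter fun l => ¬ (A z).Avoid σ (.inl l)).card : ℝ) =
      ∑ l ∈ H, ∑ p ∈ Q, ((A z).confl ((A z).around p) R l : ℝ) := by
    have : ∀ l p, ((A z).confl ((A z).around p) R l : ℝ) = ∑ σ ∈ (A z).cells R,
        ((if (A z).Region σ ((A z).X p) ((A z).Y p) then (1 : ℝ) else 0) *
          (if ¬ (A z).Avoid σ (.inl l) then 1 else 0)) := by
      intro l p
      have : ((A z).around p ∩ (A z).cells R).filter (fun σ => ¬ (A z).Avoid σ (.inl l)) =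
          ((A z).cells R).filter fun σ => (A z).Region σ ((A z).X p) ((A z).Y p) ∧
            ¬ (A z).Avoid σ (.inl l) := by
        ext σ
        simp only [Arr.around, Finset.mem_filter, Finset.mem_inter, Finset.mem_univ, true_and]
        tauto
      unfold Arr.confl
      rw [this, Finset.card_filter]
      push_cast
      refine Finset.sum_congr rfl fun σ _ => ?_
      by_cases h1 : (A z).Region σ ((A z).X p) ((A z).Y p) <;> simp [h1]
    simp only [this]
    rw [Finset.sum_congr rfl fun l _ => Finset.sum_comm, Finset.sum_comm]
    refine Finset.sum_congr rfl fun σ _ => ?_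
    rw [Finset.card_filter, Finset.card_filter]
    push_cast
    rw [Finset.sum_mul_sum, Finset.sum_comm]
  have e3 : ∑ e : H × Q, (A z).wt (r + 1) R e.1 e.2 =
      ∑ l ∈ H, ∑ p ∈ Q, (A z).wt (r + 1) R l p := by
    rw [Fintype.sum_prod_type, ← Finset.sum_coe_sort H]
    refine Finset.sum_congr rfl fun l _ => ?_
    rw [← Finset.sum_coe_sort Q]
  unfold GoodAt at h
  rw [e3] at h
  unfold Arr.wt at h
  simp only [Finset.sum_add_distrib, Finset.sum_const, nsmul_eq_mul] at h
  rw [← Finset.mul_sum, ← Finset.sum_div, ← e1] at h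
  have e4 : ∑ l ∈ H, ∑ p ∈ Q, ((r : ℝ) + 1) * ((A z).confl ((A z).around p) R l : ℝ) / 576 =
      ((r : ℝ) + 1) / 576 * ∑ l ∈ H, ∑ p ∈ Q, ((A z).confl ((A z).around p) R l : ℝ) := by
    rw [Finset.mul_sum]
    refine Finset.sum_congr rfl fun l _ => ?_
    rw [Finset.mul_sum]
    exact Finset.sum_congr rfl fun p _ => by ring
  rw [e4, ← e2] at h
  exact good_arith hρ hQ0 (Nat.cast_nonneg _) (Finset.sum_nonneg fun _ _ => by positivity)
    (Finset.sum_nonneg fun _ _ => by positivity) h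

theorem sum_region (A : Arr L P) (R : Finset L) (Q : Finset P) :
    ∑ σ ∈ A.cells R, ((Q.filter fun p => A.Region σ (A.X p) (A.Y p)).card : ℝ) ≤ 9 * Q.card := by
  have : ∑ σ ∈ A.cells R, (Q.filter fun p => A.Region σ (A.X p) (A.Y p)).card =
      ∑ p ∈ Q, ((A.cells R).filter fun σ => A.Region σ (A.X p) (A.Y p)).card := by
    simp only [Finset.card_filter]
    rw [Finset.sum_comm]
  have h2 : ∑ p ∈ Q, ((A.cells R).filter fun σ => A.Region σ (A.X p) (A.Y p)).card ≤
      ∑ p ∈ Q, 9 := Finset.sum_le_sum fun p _ => Arr.card_cells_at R _ _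
  rw [← this, Finset.sum_const, smul_eq_mul] at h2
  have h3 : ∑ σ ∈ A.cells R, ((Q.filter fun p => A.Region σ (A.X p) (A.Y p)).card : ℝ) ≤
      Q.card * 9 := by exact_mod_cast h2
  linarith

/-- The number of tests used by `i` levels of the recursion on `N` lines and `q` points. -/
noncomputable def cost (ρ : ℝ) (i : ℕ) (q N : ℝ) : ℝ :=
  kap ^ (i + 1) * (ρ ^ i * N + q * N / (ρ ^ i * ρ ^ 40) + ρ ^ 40 * q + ρ ^ (2 * i) * ρ ^ 80)

theorem cost_nonneg {ρ q N : ℝ} (hρ : 0 ≤ ρ) (hq : 0 ≤ q) (hN : 0 ≤ N) (i : ℕ) :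
    0 ≤ cost ρ i q N := by
  unfold cost kap
  positivity

theorem cost_step {κ : Type} (C : Finset κ) (q N : κ → ℝ) {ρ q₀ N₀ : ℝ} (hρ : 20 ≤ ρ)
    (hq0 : 0 ≤ q₀) (hN0 : 0 ≤ N₀) (i : ℕ) (h1 : ∑ σ ∈ C, N σ ≤ 905969664 * (ρ * N₀))
    (h2 : ∑ σ ∈ C, q σ * N σ ≤ 905969664 * (q₀ * N₀ / ρ)) (h3 : ∑ σ ∈ C, q σ ≤ 9 * q₀)
    (h4 : (C.card : ℝ) ≤ 24 * ρ ^ 2) :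
    (56000 * (N₀ + q₀ * ρ ^ 2 + ρ ^ 5) + ∑ σ ∈ C, cost ρ i (q σ) (N σ)) +
      120000 * (N₀ + q₀ * ρ ^ 2 + ρ ^ 15) ≤ cost ρ (i + 1) q₀ N₀ := by
  have h0 : 0 < ρ := by linarith
  have hρ1 : 1 ≤ ρ := by linarith
  set k : ℝ := kap ^ (i + 1) with hk
  have hk1 : 1 ≤ k := one_le_pow₀ (by unfold kap; norm_num)
  set V : ℝ := ρ ^ (i + 1) * N₀ + q₀ * N₀ / (ρ ^ (i + 1) * ρ ^ 40) + ρ ^ 40 * q₀ +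
    ρ ^ (2 * (i + 1)) * ρ ^ 80 with hV
  have hp1 : 1 ≤ ρ ^ (i + 1) := one_le_pow₀ hρ1
  have hp2 : 1 ≤ ρ ^ (2 * (i + 1)) := one_le_pow₀ hρ1
  have t1 : N₀ ≤ ρ ^ (i + 1) * N₀ := le_mul_of_one_le_left hN0 hp1
  have t2 : 0 ≤ q₀ * N₀ / (ρ ^ (i + 1) * ρ ^ 40) := by positivity
  have t3 : q₀ * ρ ^ 2 ≤ ρ ^ 40 * q₀ := by
    rw [mul_comm]
    have : ρ ^ 2 ≤ ρ ^ 40 := pow_le_pow_right₀ hρ1 (by norm_num)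
    gcongr
  have t4 : ρ ^ 15 ≤ ρ ^ (2 * (i + 1)) * ρ ^ 80 := by
    have : ρ ^ 15 ≤ ρ ^ 80 := pow_le_pow_right₀ hρ1 (by norm_num)
    have : ρ ^ 80 ≤ ρ ^ (2 * (i + 1)) * ρ ^ 80 := le_mul_of_one_le_left (by positivity) hp2
    linarith
  have t5 : ρ ^ 5 ≤ ρ ^ 15 := pow_le_pow_right₀ hρ1 (by norm_num)
  have hV0 : 0 ≤ V := by positivity
  have hsum : ∑ σ ∈ C, cost ρ i (q σ) (N σ) ≤ k * (905969664 * V) := by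
    have e : ∑ σ ∈ C, cost ρ i (q σ) (N σ) = k * (ρ ^ i * ∑ σ ∈ C, N σ +
        (∑ σ ∈ C, q σ * N σ) / (ρ ^ i * ρ ^ 40) + ρ ^ 40 * ∑ σ ∈ C, q σ +
        C.card * (ρ ^ (2 * i) * ρ ^ 80)) := by
      unfold cost
      rw [← Finset.mul_sum, Finset.sum_add_distrib, Finset.sum_add_distrib,
        Finset.sum_add_distrib, Finset.sum_const, nsmul_eq_mul, ← Finset.mul_sum, ← Finset.mul_sum,
        Finset.sum_div]
    rw [e]
    refine mul_le_mul_of_nonneg_left ?_ (by linarith)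
    have u1 : ρ ^ i * ∑ σ ∈ C, N σ ≤ 905969664 * (ρ ^ (i + 1) * N₀) := by
      calc _ ≤ ρ ^ i * (905969664 * (ρ * N₀)) := by gcongr
        _ = _ := by ring
    have u2 : (∑ σ ∈ C, q σ * N σ) / (ρ ^ i * ρ ^ 40) ≤
        905969664 * (q₀ * N₀ / (ρ ^ (i + 1) * ρ ^ 40)) := by
      calc _ ≤ (905969664 * (q₀ * N₀ / ρ)) / (ρ ^ i * ρ ^ 40) := by gcongr
        _ = _ := by rw [pow_succ]; field_simp; ring
    have u3 : ρ ^ 40 * ∑ σ ∈ C, q σ ≤ 9 * (ρ ^ 40 * q₀) := by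
      calc _ ≤ ρ ^ 40 * (9 * q₀) := by gcongr
        _ = _ := by ring
    have u4 : C.card * (ρ ^ (2 * i) * ρ ^ 80) ≤ 24 * (ρ ^ (2 * (i + 1)) * ρ ^ 80) := by
      calc _ ≤ 24 * ρ ^ 2 * (ρ ^ (2 * i) * ρ ^ 80) := by gcongr
        _ = _ := by ring
    have v3 : 0 ≤ ρ ^ 40 * q₀ := by positivity
    have v4 : 0 ≤ ρ ^ (2 * (i + 1)) * ρ ^ 80 := by positivity
    rw [hV]
    linarith
  have hstep : 56000 * (N₀ + q₀ * ρ ^ 2 + ρ ^ 5) + 120000 * (N₀ + q₀ * ρ ^ 2 + ρ ^ 15) ≤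
      k * (176000 * V) := by
    have : 176000 * V ≤ k * (176000 * V) := le_mul_of_one_le_left (by positivity) hk1
    refine le_trans ?_ this
    rw [hV]
    linarith
  have hfin : cost ρ (i + 1) q₀ N₀ = k * (kap * V) := by
    unfold cost
    rw [pow_succ kap (i + 1)]
    ring
  have hkV : 0 ≤ k * V := by positivity
  rw [hfin]
  unfold kap
  linarith

/-- The recursion: sample, locate the points, and recurse into the cells. -/
theorem Tests.levels (hT : Tests φ A) {r : ℕ} (hr : 20 ≤ (r : ℝ) + 1)
    (hL : (Fintype.card L : ℝ) ≤ 2 * ((r : ℝ) + 1) ^ 120)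
    (hP : (Fintype.card P : ℝ) ≤ 2 * ((r : ℝ) + 1) ^ 120) (i : ℕ) (H : Finset L) (Q : Finset P) :
    Learn φ τ (((r : ℝ) + 1) ^ 39) (cost (r + 1) i Q.card H.card) Set.univ (Agree A H Q) := by
  have h1 : 1 ≤ (r : ℝ) + 1 := by linarith
  have hB : (2 : ℝ) ≤ ((r : ℝ) + 1) ^ 39 := by
    have : (r : ℝ) + 1 ≤ ((r : ℝ) + 1) ^ 39 := le_self_pow₀ h1 (by norm_num)
    linarith
  induction i generalizing H Q with
  | zero =>
    refine ((hT.groups (s := (r + 1) ^ 40) (Nat.one_le_pow _ _ (by omega)) H Q).mono_coef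
      hB).mono_cost ?_
    unfold cost kap
    push_cast
    simp only [pow_zero, one_mul, pow_one]
    have e1 : (0 : ℝ) ≤ H.card := by positivity
    have e2 : (0 : ℝ) ≤ (Q.card : ℝ) * H.card / ((r : ℝ) + 1) ^ 40 := by positivity
    have e3 : (0 : ℝ) ≤ ((r : ℝ) + 1) ^ 40 * Q.card := by positivity
    have e4 : (0 : ℝ) ≤ ((r : ℝ) + 1) ^ 80 := by positivity
    linarith
  | succ i ih =>
    rcases H.eq_empty_or_nonempty with rfl | hH
    · exact (Learn.const fun z _ z' _ p _ h hh => by simp at hh).mono_cost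
        (cost_nonneg (by linarith) (Nat.cast_nonneg _) (Nat.cast_nonneg _) _)
    rcases Q.eq_empty_or_nonempty with rfl | hQ
    · exact (Learn.const fun z _ z' _ p hp => by simp at hp).mono_cost
        (cost_nonneg (by linarith) (Nat.cast_nonneg _) (Nat.cast_nonneg _) _)
    have hHc : (H.card : ℝ) ≤ 2 * ((r : ℝ) + 1) ^ 120 :=
      le_trans (by exact_mod_cast Finset.card_le_univ H) hL
    have hQc : (Q.card : ℝ) ≤ 2 * ((r : ℝ) + 1) ^ 120 :=
      le_trans (by exact_mod_cast Finset.card_le_univ Q) hP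
    set V : ℝ := cost (r + 1) (i + 1) Q.card H.card -
      120000 * (H.card + Q.card * ((r : ℝ) + 1) ^ 2 + ((r : ℝ) + 1) ^ 15) with hV
    refine (hT.sample hr H Q hH hQ hHc hQc (c := V) fun R hR T _ hne hg => ?_).mono_cost
      (by rw [hV]; linarith)
    have hinf := (hT.info (τ := τ) hR H Q).mono_coef hB
    refine ((((hinf.mono_set (Set.subset_univ T)).and (r' := Agree A H Q)
      (c' := V - 56000 * (H.card + Q.card * ((r : ℝ) + 1) ^ 2 + ((r : ℝ) + 1) ^ 5))
      fun T' hT' hne' hI => ?_).imp fun z _ z' _ h => h.2).mono_cost (by linarith))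
    obtain ⟨z₀, hz₀⟩ := hne'
    have hgood := (hg z₀ (hT' hz₀)).sums hQ
    let Hs : Cfg L → Finset L := fun σ => H.filter fun l => ¬ (A z₀).Avoid σ (.inl l)
    let Qs : Cfg L → Finset P := fun σ =>
      Q.filter fun p => (A z₀).Region σ ((A z₀).X p) ((A z₀).Y p)
    have hrec := Learn.finset (φ := φ) (τ := τ) (S := Set.univ) ((A z₀).cells R)
      (r := fun σ => Agree A (Hs σ) (Qs σ)) fun σ _ => ih (Hs σ) (Qs σ)
    refine ((hrec.mono_set (Set.subset_univ T')).imp ?_).mono_cost ?_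
    · intro z hz z' hz' hag p hp h hh
      obtain ⟨σ, hσ, hreg⟩ := Arr.exists_cell (A := A z₀) R ((A z₀).X_lt p) ((A z₀).Y_lt p)
      have hσ' : σ ∈ (A z₀).cells R := Arr.mem_cells.2 hσ
      have hI1 := (hI z₀ hz₀ z hz).2 σ hσ'
      have hI2 := (hI z₀ hz₀ z' hz').2 σ hσ'
      by_cases hav : (A z₀).Avoid σ (.inl h)
      · rw [((hI1.2 h hh).2.1 hav).above ((hI1.1 p hp).1 hreg),
          ((hI2.2 h hh).2.1 hav).above ((hI2.1 p hp).1 hreg)]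
        exact (hI1.2 h hh).1.symm.trans (hI2.2 h hh).1
      · exact hag σ hσ' p (Finset.mem_filter.2 ⟨hp, hreg⟩) h (Finset.mem_filter.2 ⟨hh, hav⟩)
    · have hCc : (((A z₀).cells R).card : ℝ) ≤ 24 * ((r : ℝ) + 1) ^ 2 := by
        have h1 : (((A z₀).cells R).card : ℝ) ≤ 6 * ((R.card : ℝ) + 2) ^ 2 := by
          exact_mod_cast Arr.card_cells (A := A z₀) R
        have hRr : (R.card : ℝ) ≤ r := by exact_mod_cast hR
        calc _ ≤ _ := h1
          _ ≤ 6 * (2 * ((r : ℝ) + 1)) ^ 2 := by gcongr; linarith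
          _ = _ := by ring
      have := cost_step ((A z₀).cells R) (fun σ => ((Qs σ).card : ℝ)) (fun σ => ((Hs σ).card : ℝ))
        hr (Nat.cast_nonneg Q.card) (Nat.cast_nonneg H.card) i hgood.1 hgood.2
        (sum_region (A z₀) R Q) hCc
      linarith

end Recursion

/-! ### Counting sign patterns -/

section Warren

open MvPolynomial

variable {σ : Type} [Fintype σ]

theorem totalDegree_pderiv_le (j : σ) (p : MvPolynomial σ ℝ) :
    (pderiv j p).totalDegree ≤ p.totalDegree := by
  conv_lhs => rw [p.as_sum, map_sum]
  refine (totalDegree_finsetSum _ _).trans (Finset.sup_le fun s hs => ?_)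
  rw [pderiv_monomial]
  refine (totalDegree_monomial_le _ _).trans (le_trans ?_ (le_totalDegree hs))
  rw [Finsupp.sum_fintype _ _ fun _ => rfl, Finsupp.sum_fintype _ _ fun _ => rfl]
  exact Finset.sum_le_sum fun i _ => by simp

theorem hasDerivAt_eval_update (p : MvPolynomial σ ℝ) (x : σ → ℝ) (j : σ) (t : ℝ) :
    HasDerivAt (fun t => eval (Function.update x j t) p)
      (eval (Function.update x j t) (pderiv j p)) t := by
  induction p using MvPolynomial.induction_on with
  | C a => simpa using hasDerivAt_const t a
  | add p q hp hq =>
    simp only [map_add]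
    exact hp.add hq
  | mul_X p i hp =>
    by_cases hi : i = j
    · subst hi
      have := hp.mul (hasDerivAt_id t)
      simp only [Derivation.leibniz, pderiv_X_self, smul_eq_mul, map_add, map_mul, eval_X,
        Function.update_self, mul_one]
      refine (this.congr_deriv ?_)
      simp; ring
    · simp only [Derivation.leibniz, pderiv_X_of_ne hi, smul_eq_mul, map_mul, eval_X,
        mul_zero, zero_add, Function.update_of_ne hi]
      rw [mul_comm]
      exact hp.mul_const _

theorem exists_pos_small {κ : Type} (I : Finset κ) (a b : κ → ℝ) (h : ∀ c ∈ I, 0 < a c) :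
    ∃ ε : ℝ, 0 < ε ∧ ∀ c ∈ I, ε * b c < a c := by
  have : ∀ᶠ ε in nhdsWithin (0 : ℝ) (Set.Ioi 0), ∀ c ∈ I, ε * b c < a c := by
    rw [Filter.eventually_all_finset]
    intro c hc
    have ht : Filter.Tendsto (fun ε : ℝ => ε * b c) (nhds 0) (nhds (0 * b c)) :=
      (continuous_id.mul continuous_const).tendsto 0
    rw [zero_mul] at ht
    exact (ht.eventually_lt_const (h c hc)).filter_mono nhdsWithin_le_nhds
  obtain ⟨ε, h1, h2⟩ := (this.and self_mem_nhdsWithin).exists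
  exact ⟨ε, h2, h1⟩

theorem abs_eval_le (p : MvPolynomial σ ℝ) {d : ℕ} (hd : p.totalDegree ≤ d) :
    ∃ a : ℝ, 0 ≤ a ∧ ∀ x : σ → ℝ, |eval x p| ≤ a * (max 1 ‖x‖) ^ d := by
  refine ⟨∑ s ∈ p.support, |coeff s p|, Finset.sum_nonneg fun _ _ => abs_nonneg _, fun x => ?_⟩
  rw [eval_eq, Finset.sum_mul]
  refine (Finset.abs_sum_le_sum_abs _ _).trans (Finset.sum_le_sum fun s hs => ?_)
  rw [abs_mul]
  refine mul_le_mul_of_nonneg_left ?_ (abs_nonneg _)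
  rw [Finset.abs_prod]
  calc ∏ i ∈ s.support, |x i ^ s i| ≤ ∏ i ∈ s.support, (max 1 ‖x‖) ^ s i := by
        refine Finset.prod_le_prod (fun _ _ => abs_nonneg _) fun i _ => ?_
        rw [abs_pow]
        gcongr
        exact (norm_le_pi_norm x i).trans (le_max_right _ _)
    _ = (max 1 ‖x‖) ^ (s.sum fun _ e => e) := by rw [Finset.prod_pow_eq_pow_sum]; rfl
    _ ≤ _ := pow_le_pow_right₀ (le_max_left _ _) ((le_totalDegree hs).trans hd)

/-- A finite set on which each power `x_j ^ e` agrees with a polynomial of smaller degree has at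
most `e ^ N` elements: the monomials with all exponents below `e` span all functions on it. -/
theorem card_le_of_lead (W : Finset (σ → ℝ)) {e : ℕ} (q : σ → MvPolynomial σ ℝ)
    (hq : ∀ j, (q j).totalDegree < e) (h : ∀ w ∈ W, ∀ j, w j ^ e = eval w (q j)) :
    W.card ≤ e ^ Fintype.card σ := by
  let ev : MvPolynomial σ ℝ →ₗ[ℝ] (W → ℝ) :=
    { toFun := fun p w => eval w.1 p
      map_add' := fun p q => by ext; simp
      map_smul' := fun c p => by ext; simp [smul_eval] }
  let b : (σ → Fin e) → (W → ℝ) := fun a w => ∏ i, w.1 i ^ (a i : ℕ)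
  let V := Submodule.span ℝ (Set.range b)
  have hmon : ∀ (n : ℕ) (s : σ →₀ ℕ), (∑ i, s i) = n → ev (monomial s 1) ∈ V := by
    intro n
    induction n using Nat.strong_induction_on with
    | _ n ih =>
      intro s hs
      by_cases hsm : ∀ i, s i < e
      · have : ev (monomial s 1) = b fun i => ⟨s i, hsm i⟩ := by
          ext w
          simp [ev, b, eval_monomial, Finsupp.prod_fintype]
        rw [this]
        exact Submodule.subset_span ⟨_, rfl⟩
      · push Not at hsm
        obtain ⟨j, hj⟩ := hsm
        set t : σ →₀ ℕ := s - Finsupp.single j e with ht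
        have hst : s = t + Finsupp.single j e := by
          rw [ht, tsub_add_cancel_of_le]
          rwa [Finsupp.single_le_iff]
        have hsum : ∑ i, s i = ∑ i, t i + e := by
          conv_lhs => rw [hst]
          simp only [Finsupp.add_apply, Finset.sum_add_distrib]
          congr 1
          rw [Finset.sum_eq_single j] <;> simp +contextual
        have hev : ev (monomial s 1) = ∑ u ∈ (q j).support, coeff u (q j) • ev (monomial (t + u) 1) := by
          have h1 : ev (monomial s 1) = ev (monomial t 1 * q j) := by
            ext w
            have h3 := h w.1 w.2 j
            have h2 : monomial s (1 : ℝ) = monomial t 1 * X j ^ e := by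
              rw [hst, X_pow_eq_monomial, monomial_mul, one_mul]
            simp only [ev, LinearMap.coe_mk, AddHom.coe_mk, h2, map_mul, map_pow, eval_X, h3]
          rw [h1]
          conv_lhs => rw [(q j).as_sum, Finset.mul_sum, map_sum]
          refine Finset.sum_congr rfl fun u _ => ?_
          rw [← map_smul, monomial_mul, one_mul, smul_monomial, smul_eq_mul, mul_one]
        rw [hev]
        refine Submodule.sum_mem _ fun u hu => Submodule.smul_mem _ _ ?_
        refine ih (∑ i, (t + u) i) ?_ _ rfl
        have hu' := le_totalDegree hu
        rw [Finsupp.sum_fintype _ _ fun _ => rfl] at hu'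
        have := hq j
        simp only [Finsupp.add_apply, Finset.sum_add_distrib]
        omega
  have hall : ∀ p, ev p ∈ V := by
    intro p
    rw [p.as_sum, map_sum]
    refine Submodule.sum_mem _ fun s _ => ?_
    have : monomial s (coeff s p) = coeff s p • monomial s (1 : ℝ) := by
      rw [smul_monomial, smul_eq_mul, mul_one]
    rw [this, map_smul]
    exact Submodule.smul_mem _ _ (hmon _ s rfl)
  have hind : ∀ w : W, Pi.single w (1 : ℝ) ∈ V := by
    intro w
    let p : MvPolynomial σ ℝ := ∏ w' ∈ W.erase w, ∑ j, (X j - MvPolynomial.C (w' j)) ^ 2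
    have hev : ∀ x : σ → ℝ, eval x p = ∏ w' ∈ W.erase w, ∑ j, (x j - w' j) ^ 2 := by
      intro x; simp [p, map_prod, map_sum]
    have hne : eval w.1 p ≠ 0 := by
      rw [hev, Finset.prod_ne_zero_iff]
      intro w' hw' h0
      rw [Finset.sum_eq_zero_iff_of_nonneg fun _ _ => sq_nonneg _] at h0
      refine (Finset.mem_erase.1 hw').1 (funext fun j => ?_)
      have := h0 j (Finset.mem_univ _)
      rw [sq_eq_zero_iff, sub_eq_zero] at this
      exact this.symm
    have : Pi.single w (1 : ℝ) = (eval w.1 p)⁻¹ • ev p := by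
      ext w'
      by_cases hw : w' = w
      · subst hw
        simp [ev, hne]
      · have : eval w'.1 p = 0 := by
          rw [hev]
          refine Finset.prod_eq_zero (i := w'.1) ?_ (by simp)
          exact Finset.mem_erase.2 ⟨fun h => hw (Subtype.ext h), w'.2⟩
        simp [ev, hw, this]
    rw [this]
    exact Submodule.smul_mem _ _ (hall p)
  have htop : V = ⊤ := by
    rw [eq_top_iff]
    intro f _
    have : f = ∑ w, f w • Pi.single w (1 : ℝ) := by
      ext w
      simp [Finset.sum_apply, Pi.single_apply]
    rw [this]
    exact Submodule.sum_mem _ fun w _ => Submodule.smul_mem _ _ (hind w)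
  have hr := finrank_range_le_card (R := ℝ) b
  have h1 : Set.finrank ℝ (Set.range b) = W.card := by
    change Module.finrank ℝ V = _
    rw [htop, finrank_top, Module.finrank_fintype_fun_eq_card, Fintype.card_coe]
  rw [h1] at hr
  simpa using hr

/-- The auxiliary polynomial whose critical points are counted. -/
noncomputable def auxPoly (F : MvPolynomial σ ℝ) (ε : ℝ) (D : ℕ) : MvPolynomial σ ℝ :=
  F ^ 2 - MvPolynomial.C ε * ∑ j, X j ^ (2 * D + 2)

theorem eval_auxPoly (F : MvPolynomial σ ℝ) (ε : ℝ) (D : ℕ) (x : σ → ℝ) :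
    eval x (auxPoly F ε D) = (eval x F) ^ 2 - ε * ∑ j, x j ^ (2 * D + 2) := by
  simp [auxPoly, map_sum]

theorem auxPoly_bounded {F : MvPolynomial σ ℝ} {ε : ℝ} (hε : 0 < ε) {D : ℕ}
    (hF : F.totalDegree ≤ D) : ∃ B : ℝ, ∀ x, 0 ≤ eval x (auxPoly F ε D) → ‖x‖ ≤ B := by
  obtain ⟨a, ha, hb⟩ := abs_eval_le F hF
  refine ⟨a ^ 2 / ε + 1, fun x hx => ?_⟩
  by_contra hlt
  push Not at hlt
  rw [eval_auxPoly] at hx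
  have h0 : 0 ≤ a ^ 2 / ε := by positivity
  have h1 : 1 ≤ ‖x‖ := by linarith
  have hn : 0 < ‖x‖ := by linarith
  have hFx : (eval x F) ^ 2 ≤ a ^ 2 * ‖x‖ ^ (2 * D) := by
    have := hb x
    rw [max_eq_right h1] at this
    calc (eval x F) ^ 2 = |eval x F| ^ 2 := (sq_abs _).symm
      _ ≤ (a * ‖x‖ ^ D) ^ 2 := by gcongr
      _ = _ := by ring
  have hlt' : a ^ 2 * ‖x‖ ^ (2 * D) < ε * ‖x‖ ^ (2 * D + 2) := by
    have : a ^ 2 < ε * ‖x‖ ^ 2 := by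
      have h3 : a ^ 2 / ε < ‖x‖ := by linarith
      rw [div_lt_iff₀ hε] at h3
      nlinarith
    calc a ^ 2 * ‖x‖ ^ (2 * D) < ε * ‖x‖ ^ 2 * ‖x‖ ^ (2 * D) := by gcongr
      _ = _ := by ring
  have hj : ∀ j, ‖x j‖ < ‖x‖ := by
    intro j
    have h2 : x j ^ (2 * D + 2) ≤ ∑ j, x j ^ (2 * D + 2) :=
      Finset.single_le_sum (f := fun j => x j ^ (2 * D + 2))
        (fun i _ => Even.pow_nonneg ⟨D + 1, by ring⟩ _) (Finset.mem_univ j)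
    have h3 : ε * x j ^ (2 * D + 2) < ε * ‖x‖ ^ (2 * D + 2) := by
      have := mul_le_mul_of_nonneg_left h2 hε.le
      linarith
    have h4 := lt_of_mul_lt_mul_left h3 hε.le
    rw [← Even.pow_abs ⟨D + 1, by ring⟩] at h4
    exact lt_of_pow_lt_pow_left₀ _ hn.le h4
  exact lt_irrefl _ ((pi_norm_lt_iff hn).2 hj)

/-- The auxiliary polynomial has a critical point in every sign region where it is somewhere
positive. -/
theorem exists_critical {ι : Type} [Fintype ι] (f : ι → MvPolynomial σ ℝ) {ε : ℝ} (hε : 0 < ε)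
    {D : ℕ} (hF : (∏ i, f i).totalDegree ≤ D) {z : σ → ℝ}
    (hz : 0 < eval z (auxPoly (∏ i, f i) ε D)) :
    ∃ w, (∀ i, 0 < eval z (f i) * eval w (f i)) ∧
      ∀ j, eval w (pderiv j (auxPoly (∏ i, f i) ε D)) = 0 := by
  set Q := auxPoly (∏ i, f i) ε D with hQ
  let S : Set (σ → ℝ) := {x | (∀ i, 0 ≤ eval z (f i) * eval x (f i)) ∧ eval z Q ≤ eval x Q}
  have hcl : IsClosed S := by
    have h1 : IsClosed {x | ∀ i, 0 ≤ eval z (f i) * eval x (f i)} := by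
      have : {x | ∀ i, 0 ≤ eval z (f i) * eval x (f i)} =
          ⋂ i, {x | 0 ≤ eval z (f i) * eval x (f i)} := by ext; simp
      rw [this]
      exact isClosed_iInter fun i =>
        isClosed_le continuous_const (continuous_const.mul (continuous_eval _))
    exact h1.inter (isClosed_le continuous_const (continuous_eval _))
  obtain ⟨B, hB⟩ := auxPoly_bounded hε hF
  have hbd : Bornology.IsBounded S := by
    refine (Metric.isBounded_closedBall (x := (0 : σ → ℝ)) (r := B)).subset fun x hx => ?_
    rw [mem_closedBall_zero_iff]
    exact hB x (hz.le.trans hx.2)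
  have hzS : z ∈ S := ⟨fun i => mul_self_nonneg _, le_rfl⟩
  obtain ⟨w, hwS, hw⟩ := (Metric.isCompact_of_isClosed_isBounded hcl hbd).exists_isMaxOn ⟨z, hzS⟩
    (continuous_eval Q).continuousOn
  have hne : ∀ x, 0 < eval x Q → ∀ i, eval x (f i) ≠ 0 := by
    intro x hx i hi
    rw [hQ, eval_auxPoly, map_prod, Finset.prod_eq_zero (Finset.mem_univ i) hi] at hx
    have : 0 ≤ ε * ∑ j, x j ^ (2 * D + 2) :=
      mul_nonneg hε.le (Finset.sum_nonneg fun i _ => Even.pow_nonneg ⟨D + 1, by ring⟩ _)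
    linarith
  have hpos : ∀ i, 0 < eval z (f i) * eval w (f i) := fun i =>
    lt_of_le_of_ne (hwS.1 i) (mul_ne_zero (hne z hz i) (hne w (hz.trans_le hwS.2) i)).symm
  refine ⟨w, hpos, fun j => ?_⟩
  have hloc : ∀ᶠ x in nhds w, eval x Q ≤ eval w Q := by
    have : ∀ᶠ x in nhds w, ∀ i, 0 < eval z (f i) * eval x (f i) :=
      Filter.eventually_all.2 fun i => (continuous_const.mul
        (continuous_eval (f i))).continuousAt.eventually_const_lt (hpos i)
    filter_upwards [this] with x hx
    by_cases h : eval z Q ≤ eval x Q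
    · exact hw ⟨fun i => (hx i).le, h⟩
    · exact (not_le.1 h).le.trans hwS.2
  have hd := hasDerivAt_eval_update Q w j (w j)
  rw [Function.update_eq_self] at hd
  have hmax : IsLocalMax (fun t => eval (Function.update w j t) Q) (w j) := by
    have hc : Continuous fun t => Function.update w j t := continuous_const.update j continuous_id
    have := hc.continuousAt.tendsto (x := w j)
    rw [Function.update_eq_self] at this
    have := this.eventually hloc
    refine Filter.Eventually.mono this fun t ht => ?_
    simpa only [Function.update_eq_self] using ht
  exact hmax.hasDerivAt_eq_zero hd

theorem pderiv_auxPoly (F : MvPolynomial σ ℝ) (ε : ℝ) (D : ℕ) (j : σ) :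
    pderiv j (auxPoly F ε D) = pderiv j (F ^ 2) -
      MvPolynomial.C (ε * (2 * D + 2)) * X j ^ (2 * D + 1) := by
  unfold auxPoly
  rw [map_sub, ← smul_eq_C_mul, Derivation.map_smul, map_sum, Finset.sum_eq_single j]
  · have h : pderiv j (X j ^ (2 * D + 2) : MvPolynomial σ ℝ) =
        MvPolynomial.C (2 * D + 2 : ℝ) * X j ^ (2 * D + 1) := by
      have h2 : (MvPolynomial.C (2 : ℝ) : MvPolynomial σ ℝ) = 2 := map_ofNat _ _
      rw [pderiv_pow, pderiv_X_self]
      simp [h2]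
    rw [h, smul_eq_C_mul, ← mul_assoc, ← map_mul]
  · intro i _ hi
    rw [pderiv_pow, pderiv_X_of_ne hi, mul_zero]
  · simp

/-- The number of sign patterns of `m` polynomials of degree at most `d` in `N` variables is at
most `(2 m d + 1) ^ N`. After a perturbation no polynomial vanishes at the chosen representatives
of the patterns. The square of the product of the polynomials, with a small multiple of a higher
power sum subtracted, has a critical point in each of their regions. -/
theorem warren {ι : Type} [Fintype ι] (g : ι → MvPolynomial σ ℝ) {d : ℕ}
    (hd : ∀ i, (g i).totalDegree ≤ d) :
    numPat (fun i x => 0 ≤ eval x (g i)) Set.univ ≤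
      (2 * (Fintype.card ι * d) + 1) ^ Fintype.card σ := by
  set pat : (σ → ℝ) → (ι → Prop) := fun x i => 0 ≤ eval x (g i) with hpat
  have hfin : (pat '' Set.univ).Finite := Set.toFinite _
  -- representatives of the patterns
  choose! rep hrep using (fun c (hc : c ∈ pat '' Set.univ) =>
    (⟨hc.choose, hc.choose_spec.2⟩ : ∃ x, pat x = c))
  set C : Finset (ι → Prop) := hfin.toFinset with hC
  have hrepC : ∀ c ∈ C, pat (rep c) = c := fun c hc => hrep c (hfin.mem_toFinset.1 hc)
  obtain ⟨δ, hδ, hδ'⟩ : ∃ δ : ℝ, 0 < δ ∧ ∀ ci ∈ C ×ˢ (Finset.univ : Finset ι),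
      eval (rep ci.1) (g ci.2) < 0 → eval (rep ci.1) (g ci.2) < -δ := by
    obtain ⟨δ, h0, h⟩ := exists_pos_small ((C ×ˢ (Finset.univ : Finset ι)).filter fun ci =>
      eval (rep ci.1) (g ci.2) < 0) (fun ci => -eval (rep ci.1) (g ci.2)) (fun _ => 1)
      fun ci hci => by linarith [(Finset.mem_filter.1 hci).2]
    refine ⟨δ, h0, fun ci hci hlt => ?_⟩
    linarith [h ci (Finset.mem_filter.2 ⟨hci, hlt⟩)]
  let f : ι → MvPolynomial σ ℝ := fun i => g i + MvPolynomial.C δ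
  have hev : ∀ x i, eval x (f i) = eval x (g i) + δ := fun x i => by simp [f]
  have hsg : ∀ c ∈ C, ∀ i, (c i ↔ 0 < eval (rep c) (f i)) ∧ eval (rep c) (f i) ≠ 0 := by
    intro c hc i
    have h1 : c i ↔ 0 ≤ eval (rep c) (g i) := by
      conv_lhs => rw [← hrepC c hc]
    rw [h1, hev]
    by_cases h : 0 ≤ eval (rep c) (g i)
    · exact ⟨iff_of_true h (by linarith), by linarith⟩
    · have := hδ' (c, i) (by simp [hc]) (not_le.1 h)
      simp only at this
      exact ⟨iff_of_false h (by linarith), by linarith⟩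
  set D := Fintype.card ι * d with hD
  have hF : (∏ i, f i).totalDegree ≤ D := by
    refine (totalDegree_finsetProd _ _).trans ?_
    refine (Finset.sum_le_sum (g := fun _ => d) fun i _ => ?_).trans (by simp [hD])
    refine (totalDegree_add _ _).trans ?_
    simp [hd i]
  obtain ⟨ε, hε, hε'⟩ := exists_pos_small C (fun c => (eval (rep c) (∏ i, f i)) ^ 2)
    (fun c => ∑ j, rep c j ^ (2 * D + 2)) fun c hc => by
      rw [map_prod]
      exact sq_pos_of_ne_zero (Finset.prod_ne_zero_iff.2 fun i _ => (hsg c hc i).2)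
  have hcrit : ∀ c ∈ C, ∃ w, (∀ i, 0 < eval (rep c) (f i) * eval w (f i)) ∧
      ∀ j, eval w (pderiv j (auxPoly (∏ i, f i) ε D)) = 0 := fun c hc =>
    exists_critical f hε hF (by rw [eval_auxPoly]; linarith [hε' c hc])
  choose! w hw1 hw2 using hcrit
  have hinj : Set.InjOn w C := by
    intro c hc c' hc' h
    ext i
    rw [(hsg c hc i).1, (hsg c' hc' i).1]
    have h1 := hw1 c hc i
    have h2 := hw1 c' hc' i
    rw [← h] at h2
    rcases lt_or_ge 0 (eval (w c) (f i)) with h3 | h3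
    · exact iff_of_true (pos_of_mul_pos_left h1 h3.le) (pos_of_mul_pos_left h2 h3.le)
    · refine iff_of_false (fun h4 => ?_) (fun h4 => ?_) <;> nlinarith
  have hcard : (C.image w).card = C.card := Finset.card_image_of_injOn hinj
  have hnum : numPat (fun i x => 0 ≤ eval x (g i)) Set.univ = C.card := by
    rw [numPat, Set.ncard_eq_toFinset_card _ hfin]
  rw [hnum, ← hcard]
  have hε2 : ε * (2 * (D : ℝ) + 2) ≠ 0 := by positivity
  refine card_le_of_lead _ (fun j => (ε * (2 * (D : ℝ) + 2))⁻¹ • pderiv j ((∏ i, f i) ^ 2))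
    (fun j => ?_) fun x hx j => ?_
  · refine lt_of_le_of_lt ((totalDegree_smul_le _ _).trans ((totalDegree_pderiv_le _ _).trans
      (totalDegree_pow _ _))) ?_
    omega
  · obtain ⟨c, hc, rfl⟩ := Finset.mem_image.1 hx
    have := hw2 c hc j
    rw [pderiv_auxPoly] at this
    simp only [map_sub, map_mul, eval_C, map_pow, eval_X] at this
    rw [smul_eval, sub_eq_zero.1 this]
    field_simp

end Warren

/-! ### Rational functions and polynomial curves -/

section Rational

open MvPolynomial

variable {σ W : Type} {pt : W → σ → ℝ}

variable (pt) in
/-- The function `f` of `w` is a quotient of two polynomials of degree at most `d` in the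
coordinates of `pt w`, the denominator being nonzero everywhere. -/
def IsRat (d : ℕ) (f : W → ℝ) : Prop :=
  ∃ p q : MvPolynomial σ ℝ, p.totalDegree ≤ d ∧ q.totalDegree ≤ d ∧
    ∀ w, eval (pt w) q ≠ 0 ∧ f w = eval (pt w) p / eval (pt w) q

namespace IsRat

variable {d e : ℕ} {f g : W → ℝ}

theorem coord (s : σ) : IsRat pt 1 fun w => pt w s :=
  ⟨X s, 1, (totalDegree_X s).le, by simp, fun w => by simp⟩

theorem const (c : ℝ) : IsRat pt 0 fun _ => c :=
  ⟨MvPolynomial.C c, 1, by simp, by simp, fun w => by simp⟩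

theorem neg (hf : IsRat pt d f) : IsRat pt d fun w => -f w := by
  obtain ⟨p, q, hp, hq, h⟩ := hf
  refine ⟨-p, q, by rwa [totalDegree_neg], hq, fun w => ⟨(h w).1, ?_⟩⟩
  simp only [(h w).2, map_neg, neg_div]

theorem add (hf : IsRat pt d f) (hg : IsRat pt e g) : IsRat pt (d + e) fun w => f w + g w := by
  obtain ⟨p, q, hp, hq, h⟩ := hf
  obtain ⟨p', q', hp', hq', h'⟩ := hg
  refine ⟨p * q' + q * p', q * q', ?_, (totalDegree_mul _ _).trans (add_le_add hq hq'),
    fun w => ⟨?_, ?_⟩⟩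
  · exact (totalDegree_add _ _).trans (max_le ((totalDegree_mul _ _).trans (add_le_add hp hq'))
      ((totalDegree_mul _ _).trans (add_le_add hq hp')))
  · rw [map_mul]
    exact mul_ne_zero (h w).1 (h' w).1
  · simp only [(h w).2, (h' w).2, div_add_div _ _ (h w).1 (h' w).1, map_add, map_mul]

theorem sub (hf : IsRat pt d f) (hg : IsRat pt e g) : IsRat pt (d + e) fun w => f w - g w := by
  simpa only [sub_eq_add_neg] using hf.add hg.neg

theorem mul (hf : IsRat pt d f) (hg : IsRat pt e g) : IsRat pt (d + e) fun w => f w * g w := by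
  obtain ⟨p, q, hp, hq, h⟩ := hf
  obtain ⟨p', q', hp', hq', h'⟩ := hg
  refine ⟨p * p', q * q', (totalDegree_mul _ _).trans (add_le_add hp hp'),
    (totalDegree_mul _ _).trans (add_le_add hq hq'), fun w => ⟨?_, ?_⟩⟩
  · rw [map_mul]
    exact mul_ne_zero (h w).1 (h' w).1
  · simp only [(h w).2, (h' w).2, div_mul_div_comm, map_mul]

theorem div (hf : IsRat pt d f) (hg : IsRat pt e g) (h0 : ∀ w, g w ≠ 0) :
    IsRat pt (d + e) fun w => f w / g w := by
  obtain ⟨p, q, hp, hq, h⟩ := hf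
  obtain ⟨p', q', hp', hq', h'⟩ := hg
  refine ⟨p * q', q * p', (totalDegree_mul _ _).trans (add_le_add hp hq'),
    (totalDegree_mul _ _).trans (add_le_add hq hp'), fun w => ⟨?_, ?_⟩⟩
  · rw [map_mul]
    refine mul_ne_zero (h w).1 fun h1 => h0 w ?_
    rw [(h' w).2, h1, zero_div]
  · simp only [(h w).2, (h' w).2, div_div_div_eq, map_mul]

theorem mono (hf : IsRat pt d f) (hd : d ≤ e) : IsRat pt e f := by
  obtain ⟨p, q, hp, hq, h⟩ := hf
  exact ⟨p, q, hp.trans hd, hq.trans hd, h⟩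

/-- The sign of a quotient is the sign of a product. -/
theorem nonneg (hf : IsRat pt d f) :
    ∃ p : MvPolynomial σ ℝ, p.totalDegree ≤ d + d ∧ ∀ w, 0 ≤ f w ↔ 0 ≤ eval (pt w) p := by
  obtain ⟨p, q, hp, hq, h⟩ := hf
  refine ⟨p * q, (totalDegree_mul _ _).trans (add_le_add hp hq), fun w => ?_⟩
  rw [(h w).2, map_mul]
  rcases lt_or_gt_of_ne (h w).1 with h1 | h1
  · constructor
    · intro h2
      have := mul_nonneg h2 (mul_self_nonneg (eval (pt w) q))
      have e : eval (pt w) p / eval (pt w) q * (eval (pt w) q * eval (pt w) q) =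
        eval (pt w) p * eval (pt w) q := by field_simp
      rwa [e] at this
    · intro h2
      have : eval (pt w) p ≤ 0 := by
        by_contra h3
        linarith [mul_neg_of_pos_of_neg (not_le.1 h3) h1]
      exact div_nonneg_of_nonpos this h1.le
  · rw [le_div_iff₀ h1, zero_mul, mul_nonneg_iff_of_pos_right h1]

end IsRat

variable {N : ℕ} (b : σ → Polynomial (MvPolynomial (Fin N) ℝ))

/-- The curve in the parameter `t` whose coordinates are polynomials in `t` with coefficients
polynomial in `x`. -/
noncomputable def curve (x : Fin N → ℝ) (t : ℝ) : σ → ℝ :=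
  fun s => ((b s).map (eval x)).eval t

theorem eval_curve (g : MvPolynomial σ ℝ) (x : Fin N → ℝ) (t : ℝ) :
    eval (curve b x t) g = ((aeval b g).map (eval x)).eval t := by
  induction g using MvPolynomial.induction_on with
  | C a =>
    simp [Polynomial.algebraMap_apply]
  | add p q hp hq => simp only [map_add, Polynomial.map_add, Polynomial.eval_add, hp, hq]
  | mul_X p s hp =>
    simp only [map_mul, Polynomial.map_mul, Polynomial.eval_mul, hp, eval_X, aeval_X]
    rfl

/-- The degree in `t` is at most `K d` and the coefficients have degree at most `d`. -/
def CurveDeg (K d : ℕ) (f : Polynomial (MvPolynomial (Fin N) ℝ)) : Prop :=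
  f.natDegree ≤ K * d ∧ ∀ k, (f.coeff k).totalDegree ≤ d

theorem CurveDeg.mul {K d e : ℕ} {f g : Polynomial (MvPolynomial (Fin N) ℝ)}
    (hf : CurveDeg K d f) (hg : CurveDeg K e g) : CurveDeg K (d + e) (f * g) := by
  refine ⟨Polynomial.natDegree_mul_le.trans ?_, fun k => ?_⟩
  · rw [mul_add]
    exact add_le_add hf.1 hg.1
  · rw [Polynomial.coeff_mul]
    refine (totalDegree_finsetSum _ _).trans (Finset.sup_le fun s _ => ?_)
    exact (totalDegree_mul _ _).trans (add_le_add (hf.2 _) (hg.2 _))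

theorem CurveDeg.pow {K d : ℕ} {f : Polynomial (MvPolynomial (Fin N) ℝ)}
    (hf : CurveDeg K d f) (m : ℕ) : CurveDeg K (m * d) (f ^ m) := by
  induction m with
  | zero =>
    refine ⟨by simp, fun k => ?_⟩
    rw [pow_zero, Polynomial.coeff_one]
    split_ifs <;> simp
  | succ m ih =>
    rw [pow_succ, add_mul, one_mul]
    exact ih.mul hf

theorem CurveDeg.prod {κ : Type} {K : ℕ} (I : Finset κ) {d : κ → ℕ}
    {f : κ → Polynomial (MvPolynomial (Fin N) ℝ)} (hf : ∀ i ∈ I, CurveDeg K (d i) (f i)) :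
    CurveDeg K (∑ i ∈ I, d i) (∏ i ∈ I, f i) := by
  induction I using Finset.induction_on with
  | empty =>
    refine ⟨by simp, fun k => ?_⟩
    rw [Finset.prod_empty, Polynomial.coeff_one]
    split_ifs <;> simp
  | insert a I ha ih =>
    rw [Finset.sum_insert ha, Finset.prod_insert ha]
    exact (hf a (Finset.mem_insert_self _ _)).mul
      (ih fun i hi => hf i (Finset.mem_insert_of_mem hi))

theorem CurveDeg.sum {κ : Type} {K d : ℕ} (I : Finset κ)
    {f : κ → Polynomial (MvPolynomial (Fin N) ℝ)} (hf : ∀ i ∈ I, CurveDeg K d (f i)) :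
    CurveDeg K d (∑ i ∈ I, f i) := by
  refine ⟨Polynomial.natDegree_sum_le_of_forall_le _ _ fun i hi => (hf i hi).1, fun k => ?_⟩
  rw [Polynomial.finsetSum_coeff]
  exact (totalDegree_finsetSum _ _).trans (Finset.sup_le fun i hi => (hf i hi).2 k)

theorem CurveDeg.mono {K d e : ℕ} {f : Polynomial (MvPolynomial (Fin N) ℝ)}
    (hf : CurveDeg K d f) (h : d ≤ e) : CurveDeg K e f :=
  ⟨hf.1.trans (Nat.mul_le_mul_left _ h), fun k => (hf.2 k).trans h⟩

theorem CurveDeg.aeval {K d : ℕ} {b : σ → Polynomial (MvPolynomial (Fin N) ℝ)}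
    (hb : ∀ s, CurveDeg K 1 (b s)) {g : MvPolynomial σ ℝ} (hg : g.totalDegree ≤ d) :
    CurveDeg K d (aeval b g) := by
  rw [g.as_sum, map_sum]
  refine CurveDeg.sum _ fun s hs => ?_
  rw [aeval_monomial]
  have h1 : CurveDeg K 0 (algebraMap ℝ (Polynomial (MvPolynomial (Fin N) ℝ)) (coeff s g)) := by
    refine ⟨by simp [Polynomial.algebraMap_apply], fun k => ?_⟩
    rw [Polynomial.algebraMap_apply, Polynomial.coeff_C]
    split_ifs <;> simp [algebraMap_eq]
  have h2 : CurveDeg K (∑ i ∈ s.support, s i * 1) (∏ i ∈ s.support, b i ^ s i) :=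
    CurveDeg.prod _ fun i _ => (hb i).pow _
  refine (h1.mul h2).mono (le_trans ?_ ((le_totalDegree hs).trans hg))
  simp [Finsupp.sum]

end Rational

theorem eventually_nonneg_iff (P : Polynomial ℝ) :
    ∀ᶠ t in Filter.atTop, (0 ≤ P.eval t ↔ 0 ≤ P.leadingCoeff) := by
  by_cases hd : 0 < P.degree
  · rcases le_or_gt 0 P.leadingCoeff with h | h
    · filter_upwards [(P.tendsto_atTop_of_leadingCoeff_nonneg hd h).eventually_ge_atTop 0] with t ht
      exact iff_of_true ht h
    · filter_upwards [(P.tendsto_atBot_of_leadingCoeff_nonpos hd h.le).eventually_lt_atBot 0]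
        with t ht
      exact iff_of_false (not_le.2 ht) (not_le.2 h)
  · have := Polynomial.eq_C_of_degree_le_zero (not_lt.1 hd)
    refine Filter.Eventually.of_forall fun t => ?_
    rw [this]
    simp

/-! ### From binary test trees to algebraic decision trees -/

namespace ADT

variable {N : ℕ} {β : Type}

/-- The tree that finds the sign of the leading coefficient in `t` of a polynomial of degree less
than `k` in `t`, and continues with `yes` if it is nonnegative and with `no` otherwise. -/
noncomputable def lead (Q : Polynomial (MvPolynomial (Fin N) ℝ)) (yes no : ADT N β) : ℕ → ADT N β
  | 0 => yes
  | k + 1 => node (Q.coeff k) no (lead Q yes no k) yes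

variable {Q : Polynomial (MvPolynomial (Fin N) ℝ)} {yes no : ADT N β}

theorem lead_degLE {D : ℕ} (hQ : ∀ k, (Q.coeff k).totalDegree ≤ D) (hy : yes.DegLE D)
    (hn : no.DegLE D) (k : ℕ) : (lead Q yes no k).DegLE D := by
  induction k with
  | zero => exact hy
  | succ k ih => exact ⟨hQ k, hn, ih, hy⟩

theorem lead_depth {d : ℕ} (hy : yes.depth ≤ d) (hn : no.depth ≤ d) (k : ℕ) :
    (lead Q yes no k).depth ≤ k + d := by
  induction k with
  | zero => simpa [lead] using hy
  | succ k ih =>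
    simp only [lead, depth]
    omega

theorem lead_eval (x : Fin N → ℝ) (k : ℕ) (hk : (Q.map (MvPolynomial.eval x)).degree < k) :
    (lead Q yes no k).eval x =
      if 0 ≤ (Q.map (MvPolynomial.eval x)).leadingCoeff then yes.eval x else no.eval x := by
  induction k with
  | zero =>
    have : Q.map (MvPolynomial.eval x) = 0 := by
      by_contra h
      rw [Polynomial.degree_eq_natDegree h] at hk
      exact absurd hk (by simp)
    simp [lead, this]
  | succ k ih =>
    have hc : (Q.map (MvPolynomial.eval x)).coeff k = MvPolynomial.eval x (Q.coeff k) :=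
      Polynomial.coeff_map _ _
    simp only [lead, eval]
    by_cases h0 : MvPolynomial.eval x (Q.coeff k) = 0
    · rw [if_neg h0.not_lt, if_pos h0]
      refine ih ?_
      rw [Polynomial.degree_lt_iff_coeff_zero]
      intro m hm
      rcases hm.eq_or_lt with rfl | hm
      · rw [hc, h0]
      · exact Polynomial.coeff_eq_zero_of_degree_lt (hk.trans_le (by exact_mod_cast hm))
    · have hl : (Q.map (MvPolynomial.eval x)).leadingCoeff = MvPolynomial.eval x (Q.coeff k) := by
        rw [← hc, Polynomial.leadingCoeff]
        congr 1
        have hne : Q.map (MvPolynomial.eval x) ≠ 0 := by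
          rintro h
          rw [h, Polynomial.coeff_zero] at hc
          exact h0 hc.symm
        rw [Polynomial.degree_eq_natDegree hne] at hk
        have hk' : (Q.map (MvPolynomial.eval x)).natDegree < k + 1 := by exact_mod_cast hk
        exact le_antisymm (by omega) (Polynomial.le_natDegree_of_ne_zero (by rwa [hc]))
      rw [hl, if_neg h0]
      by_cases h1 : MvPolynomial.eval x (Q.coeff k) < 0
      · rw [if_pos h1, if_neg (not_le.2 h1)]
      · rw [if_neg h1, if_pos (not_lt.1 h1)]

end ADT

/-- A binary test tree whose tests are signs of leading coefficients becomes an algebraic decision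
tree, a test being replaced by at most `k` sign evaluations. -/
theorem Solv.toADT {Z ι : Type} {N D k : ℕ} {φ : ι → Z → Prop} {τ : Z → ℕ} (vec : Z → Fin N → ℝ)
    (Q : ι → Polynomial (MvPolynomial (Fin N) ℝ))
    (hQ : ∀ i j, ((Q i).coeff j).totalDegree ≤ D) (hk : ∀ i, (Q i).natDegree < k)
    (hφ : ∀ i z, φ i z ↔ 0 ≤ ((Q i).map (MvPolynomial.eval (vec z))).leadingCoeff)
    {S : Set Z} {d : ℕ} (h : Solv φ τ S d) :
    ∃ T : ADT N ℕ, T.DegLE D ∧ T.depth ≤ k * d ∧ ∀ z ∈ S, T.eval (vec z) = τ z := by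
  induction h with
  | leaf S d hS =>
    by_cases hne : S.Nonempty
    · obtain ⟨z, hz⟩ := hne
      exact ⟨.leaf (τ z), trivial, Nat.zero_le _, fun z' hz' => hS z hz z' hz'⟩
    · exact ⟨.leaf 0, trivial, Nat.zero_le _, fun z hz => (hne ⟨z, hz⟩).elim⟩
  | node S d i _ _ ih1 ih2 =>
    obtain ⟨T1, a1, b1, c1⟩ := ih1
    obtain ⟨T2, a2, b2, c2⟩ := ih2
    refine ⟨ADT.lead (Q i) T1 T2 k, ADT.lead_degLE (hQ i) a1 a2 k, ?_, fun z hz => ?_⟩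
    · refine (ADT.lead_depth b1 b2 k).trans (le_of_eq ?_)
      ring
    · have hdeg : ((Q i).map (MvPolynomial.eval (vec z))).degree < k := by
        refine Polynomial.degree_map_le.trans_lt (Polynomial.degree_le_natDegree.trans_lt ?_)
        exact_mod_cast hk i
      rw [ADT.lead_eval _ _ hdeg]
      by_cases h : φ i z
      · rw [if_pos ((hφ i z).1 h)]
        exact c1 z ⟨hz, h⟩
      · rw [if_neg fun h' => h ((hφ i z).2 h')]
        exact c2 z ⟨hz, h⟩

/-! ### The arrangement of a configuration of segments -/

section Values

variable {L P : Type}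

/-- Names of the primitive comparisons: a kind, a line and four points, of which a kind of
comparison may ignore some. -/
abbrev TestName (L P : Type) := Fin 6 × Ln L × (Pt L P × Pt L P) × (Pt L P × Pt L P)

/-- The real number whose nonnegativity is the outcome of a primitive comparison. -/
noncomputable def Arr.val (A : Arr L P) : TestName L P → ℝ :=
  fun ⟨c, g, ⟨i, j⟩, ⟨k, l⟩⟩ =>
    ![A.px j - A.px i,
      A.py j - A.py i,
      (A.py l - A.py k) * (A.px j - A.px i) - (A.py j - A.py i) * (A.px l - A.px k),
      (A.py j - A.sl g * A.px j) - (A.py i - A.sl g * A.px i),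
      A.py i - (A.sl g * A.px i + A.ic g),
      (A.sl g * A.px i + A.ic g) - A.py i] c

theorem Tests.of_val {Z : Type} [Nonempty (Pt L P)] [Nonempty (Ln L)] {A : Z → Arr L P}
    {φ : TestName L P → Z → Prop} (h : ∀ i z, φ i z ↔ 0 ≤ (A z).val i) : Tests φ A := by
  obtain ⟨o⟩ := ‹Nonempty (Pt L P)›
  obtain ⟨g0⟩ := ‹Nonempty (Ln L)›
  constructor
  · exact fun q q' => ⟨(0, g0, (q, q'), (o, o)), fun z _ => by simp [h, Arr.val]⟩
  · exact fun q q' => ⟨(1, g0, (q, q'), (o, o)), fun z _ => by simp [h, Arr.val]⟩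
  · exact fun i j k l => ⟨(2, g0, (i, j), (k, l)), fun z _ => by simp [h, Arr.val]⟩
  · exact fun g i j => ⟨(3, g, (i, j), (o, o)), fun z _ => by simp [h, Arr.val]⟩
  · exact fun g q => ⟨(4, g, (q, o), (o, o)), fun z _ => by simp [h, Arr.val]⟩
  · exact fun g q => ⟨(5, g, (q, o), (o, o)), fun z _ => by simp [h, Arr.val]⟩

end Values

/-- Names of the coordinates of a configuration: the four coordinates of the endpoints of each
segment, and the half-width (`false`) and half-height (`true`) of the bounding box. -/
abbrev Co (n : ℕ) := (Fin n × Fin 4) ⊕ Bool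

namespace Co

variable {n : ℕ}

section Raw

variable (y : Co n → ℝ)

def dx (i : Fin n) : ℝ := y (.inl (i, 2)) - y (.inl (i, 0))
def dy (i : Fin n) : ℝ := y (.inl (i, 3)) - y (.inl (i, 1))

noncomputable def slope (i : Fin n) : ℝ := dy y i / dx y i
noncomputable def icpt (i : Fin n) : ℝ := y (.inl (i, 1)) - slope y i * y (.inl (i, 0))

/-- The abscissa of the first (`true`) or second (`false`) endpoint of a segment. -/
def ex (p : Fin n × Bool) : ℝ := if p.2 then y (.inl (p.1, 0)) else y (.inl (p.1, 2))

/-- The ordinate of the first (`true`) or second (`false`) endpoint of a segment. -/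
def ey (p : Fin n × Bool) : ℝ := if p.2 then y (.inl (p.1, 1)) else y (.inl (p.1, 3))

/-- The lines through the segments are not vertical, no two are parallel, no three are concurrent,
and the box contains the endpoints and the crossings, the lines leaving it through the left and
right sides. -/
structure Generic : Prop where
  dx_ne : ∀ i, dx y i ≠ 0
  m_pos : 0 < y (.inr false)
  slope_inj : Function.Injective (slope y)
  conc : ∀ i j k, i ≠ j → i ≠ k → j ≠ k →
    (icpt y j - icpt y i) / (slope y i - slope y j) ≠
      (icpt y k - icpt y i) / (slope y i - slope y k)
  cross_lt : ∀ i j, i ≠ j → |(icpt y j - icpt y i) / (slope y i - slope y j)| < y (.inr false)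
  ex_lt : ∀ p, |ex y p| < y (.inr false)
  ey_lt : ∀ p, |ey y p| < y (.inr true)
  line_lt : ∀ i x, |x| ≤ y (.inr false) → |slope y i * x + icpt y i| < y (.inr true)
  M_pos : 0 < y (.inr true)

end Raw

/-- The generic configurations of `n` segments. -/
abbrev Gen (n : ℕ) := {y : Co n → ℝ // Generic y}

/-- The lines and the endpoints of the segments of a generic configuration. -/
noncomputable def arr (w : Gen n) : Arr (Fin n) (Fin n × Bool) where
  α := slope w.1
  β := icpt w.1
  X := ex w.1
  Y := ey w.1
  m := w.1 (.inr false)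
  M := w.1 (.inr true)
  m_pos := w.2.m_pos
  α_inj := w.2.slope_inj
  conc := w.2.conc
  cross_lt := w.2.cross_lt
  X_lt := w.2.ex_lt
  Y_lt := w.2.ey_lt
  line_lt := w.2.line_lt
  M_pos := w.2.M_pos

/-- The vector of coordinates of a generic configuration. -/
def pt (w : Gen n) : Co n → ℝ := w.1

theorem rat_slope (i : Fin n) : IsRat pt 4 fun w => (arr w).α i :=
  ((IsRat.coord _).sub (IsRat.coord _)).div ((IsRat.coord _).sub (IsRat.coord _))
    fun w => w.2.dx_ne i

theorem rat_icpt (i : Fin n) : IsRat pt 6 fun w => (arr w).β i :=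
  (IsRat.coord (pt := pt) (Sum.inl (i, 1))).sub ((rat_slope i).mul (IsRat.coord (pt := pt) (Sum.inl (i, 0))))

theorem rat_sl (g : Ln (Fin n)) : IsRat pt 4 fun w => (arr w).sl g := by
  rcases g with i | s
  · exact rat_slope i
  · exact (IsRat.const 0).mono (by norm_num)

theorem rat_ic (g : Ln (Fin n)) : IsRat pt 6 fun w => (arr w).ic g := by
  rcases g with i | s | s
  · exact rat_icpt i
  · exact (IsRat.coord (pt := pt (n := n)) (Sum.inr true)).neg.mono (by norm_num)
  · exact (IsRat.coord (pt := pt (n := n)) (Sum.inr true)).mono (by norm_num)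

theorem rat_wx (v : Wall (Fin n)) : IsRat pt 20 fun w => (arr w).wx v := by
  rcases v with (s | s) | ⟨i, j⟩
  · exact (IsRat.coord (pt := pt (n := n)) (Sum.inr false)).neg.mono (by norm_num)
  · exact (IsRat.coord (pt := pt (n := n)) (Sum.inr false)).mono (by norm_num)
  · by_cases h : i = j
    · subst h
      simpa [Arr.wx] using (IsRat.const (pt := pt (n := n)) 0).mono (Nat.zero_le 20)
    · exact ((rat_icpt j).sub (rat_icpt i)).div ((rat_slope i).sub (rat_slope j))
        fun w => sub_ne_zero.2 fun h' => h (w.2.slope_inj h')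

theorem rat_px (q : Pt (Fin n) (Fin n × Bool)) : IsRat pt 20 fun w => (arr w).px q := by
  rcases q with ⟨i, s | s⟩ | ⟨v, g⟩
  · exact (IsRat.coord (pt := pt) (Sum.inl (i, 2))).mono (by norm_num)
  · exact (IsRat.coord (pt := pt) (Sum.inl (i, 0))).mono (by norm_num)
  · exact rat_wx v

theorem rat_py (q : Pt (Fin n) (Fin n × Bool)) : IsRat pt 30 fun w => (arr w).py q := by
  rcases q with ⟨i, s | s⟩ | ⟨v, g⟩
  · exact (IsRat.coord (pt := pt) (Sum.inl (i, 3))).mono (by norm_num)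
  · exact (IsRat.coord (pt := pt) (Sum.inl (i, 1))).mono (by norm_num)
  · exact ((rat_sl g).mul (rat_wx v)).add (rat_ic g)

theorem rat_val (c : TestName (Fin n) (Fin n × Bool)) :
    IsRat pt 200 fun w => (arr w).val c := by
  obtain ⟨k, g, ⟨i, j⟩, ⟨k', l⟩⟩ := c
  fin_cases k
  · exact ((rat_px j).sub (rat_px i)).mono (by norm_num)
  · exact ((rat_py j).sub (rat_py i)).mono (by norm_num)
  · exact ((((rat_py l).sub (rat_py k')).mul ((rat_px j).sub (rat_px i))).sub
      (((rat_py j).sub (rat_py i)).mul ((rat_px l).sub (rat_px k')))).mono (by norm_num)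
  · exact (((rat_py j).sub ((rat_sl g).mul (rat_px j))).sub
      ((rat_py i).sub ((rat_sl g).mul (rat_px i)))).mono (by norm_num)
  · exact ((rat_py i).sub (((rat_sl g).mul (rat_px i)).add (rat_ic g))).mono (by norm_num)
  · exact ((((rat_sl g).mul (rat_px i)).add (rat_ic g)).sub (rat_py i)).mono (by norm_num)

/-- The polynomial deciding a primitive comparison. -/
noncomputable def poly (c : TestName (Fin n) (Fin n × Bool)) : MvPolynomial (Co n) ℝ :=
  (rat_val c).nonneg.choose

theorem poly_degree (c : TestName (Fin n) (Fin n × Bool)) : (poly c).totalDegree ≤ 400 :=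
  (rat_val c).nonneg.choose_spec.1

theorem poly_iff (c : TestName (Fin n) (Fin n × Bool)) (w : Gen n) :
    0 ≤ (arr w).val c ↔ 0 ≤ MvPolynomial.eval (pt w) (poly c) :=
  (rat_val c).nonneg.choose_spec.2 w

end Co

/-! ### Perturbation to a generic configuration -/

theorem eventually_abs_div_lt {p q : Polynomial ℝ} (hq : q ≠ 0) {k : ℕ} (hp : p.natDegree < k) :
    ∀ᶠ t in Filter.atTop, |p.eval t / q.eval t| < t ^ k := by
  have hd : p.degree < (Polynomial.X ^ k * q).degree := by
    rw [Polynomial.degree_mul, Polynomial.degree_X_pow, Polynomial.degree_eq_natDegree hq]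
    refine Polynomial.degree_le_natDegree.trans_lt ?_
    exact_mod_cast (by omega : p.natDegree < k + q.natDegree)
  have h := (Polynomial.div_tendsto_atTop_zero_of_degree_lt p (Polynomial.X ^ k * q) hd).abs
  rw [abs_zero] at h
  filter_upwards [h.eventually_lt_const zero_lt_one, Filter.eventually_gt_atTop 0] with t ht h0
  have h0 : 0 < t ^ k := pow_pos h0 k
  simp only [Polynomial.eval_mul, Polynomial.eval_pow, Polynomial.eval_X] at ht
  rw [mul_comm, ← div_div, abs_div, abs_of_pos h0, div_lt_one h0] at ht
  exact ht

namespace Co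

variable {n : ℕ}

/-- The coordinates of a fixed generic configuration: segment `i` lies on the tangent of slope `2 i`
to a parabola. -/
noncomputable def off (i : Fin n) : Fin 4 → ℝ :=
  ![0, -(i : ℝ) ^ 2, 1, 2 * i - (i : ℝ) ^ 2]

/-- The curve that follows `t` times the input, translated by the fixed generic configuration, in a
box whose sides are powers of `t`. -/
noncomputable def path (n : ℕ) : Co n → Polynomial (MvPolynomial (Fin (4 * n)) ℝ)
  | .inl (i, c) => Polynomial.C (MvPolynomial.X (segIdx n i c)) * Polynomial.X +
      Polynomial.C (MvPolynomial.C (off i c))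
  | .inr false => Polynomial.X ^ 4
  | .inr true => Polynomial.X ^ 7

theorem path_deg (s : Co n) : CurveDeg 7 1 (path n s) := by
  rcases s with ⟨i, c⟩ | s | s
  · refine ⟨?_, fun k => ?_⟩
    · exact Polynomial.natDegree_linear_le.trans (by norm_num)
    · simp only [path, Polynomial.coeff_add, Polynomial.coeff_C_mul, Polynomial.coeff_X,
        Polynomial.coeff_C]
      refine (MvPolynomial.totalDegree_add _ _).trans (max_le ?_ ?_)
      · split_ifs <;> simp
      · split_ifs <;> simp
  all_goals
    refine ⟨by simp [path], fun k => ?_⟩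
    simp only [path, Polynomial.coeff_X_pow]
    split_ifs <;> simp

section Fixed

variable (x : Fin (4 * n) → ℝ)

theorem curve_inl (t : ℝ) (i : Fin n) (c : Fin 4) :
    curve (path n) x t (.inl (i, c)) = x (segIdx n i c) * t + off i c := by
  simp [curve, path]

theorem curve_m (t : ℝ) : curve (path n) x t (.inr false) = t ^ 4 := by simp [curve, path]

theorem curve_M (t : ℝ) : curve (path n) x t (.inr true) = t ^ 7 := by simp [curve, path]

open Polynomial

/-- A coordinate of a segment along the curve. -/
noncomputable def co (i : Fin n) (c : Fin 4) : ℝ[X] := C (x (segIdx n i c)) * X + C (off i c)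

noncomputable def pdx (i : Fin n) : ℝ[X] := co x i 2 - co x i 0
noncomputable def pdy (i : Fin n) : ℝ[X] := co x i 3 - co x i 1

/-- The numerator of the intercept. -/
noncomputable def pic (i : Fin n) : ℝ[X] := co x i 1 * pdx x i - pdy x i * co x i 0

/-- The denominator of the abscissa of a crossing. -/
noncomputable def pdet (i j : Fin n) : ℝ[X] := pdy x i * pdx x j - pdy x j * pdx x i

/-- The numerator of the abscissa of a crossing. -/
noncomputable def pnum (i j : Fin n) : ℝ[X] := pic x j * pdx x i - pic x i * pdx x j

theorem natDegree_co (i : Fin n) (c : Fin 4) : (co x i c).natDegree ≤ 1 := natDegree_linear_le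

theorem natDegree_pdx (i : Fin n) : (pdx x i).natDegree ≤ 1 :=
  natDegree_sub_le_of_le (natDegree_co x i 2) (natDegree_co x i 0)

theorem natDegree_pdy (i : Fin n) : (pdy x i).natDegree ≤ 1 :=
  natDegree_sub_le_of_le (natDegree_co x i 3) (natDegree_co x i 1)

theorem natDegree_pic (i : Fin n) : (pic x i).natDegree ≤ 2 :=
  natDegree_sub_le_of_le (natDegree_mul_le_of_le (natDegree_co x i 1) (natDegree_pdx x i))
    (natDegree_mul_le_of_le (natDegree_pdy x i) (natDegree_co x i 0))

theorem natDegree_pnum (i j : Fin n) : (pnum x i j).natDegree ≤ 3 :=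
  natDegree_sub_le_of_le (natDegree_mul_le_of_le (natDegree_pic x j) (natDegree_pdx x i))
    (natDegree_mul_le_of_le (natDegree_pic x i) (natDegree_pdx x j))

theorem eval_pdx_zero (i : Fin n) : (pdx x i).eval 0 = 1 := by simp [pdx, co, off]

theorem eval_pdy_zero (i : Fin n) : (pdy x i).eval 0 = 2 * i := by simp [pdy, co, off]

theorem eval_pic_zero (i : Fin n) : (pic x i).eval 0 = -(i : ℝ) ^ 2 := by
  rw [pic, eval_sub, eval_mul, eval_mul, eval_pdx_zero, eval_pdy_zero]
  simp [co, off]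

theorem eval_pdet_zero (i j : Fin n) : (pdet x i j).eval 0 = 2 * (i - j) := by
  rw [pdet, eval_sub, eval_mul, eval_mul, eval_pdx_zero, eval_pdy_zero, eval_pdx_zero,
    eval_pdy_zero]
  ring

theorem eval_pnum_zero (i j : Fin n) : (pnum x i j).eval 0 = (i : ℝ) ^ 2 - (j : ℝ) ^ 2 := by
  rw [pnum, eval_sub, eval_mul, eval_mul, eval_pdx_zero, eval_pic_zero, eval_pdx_zero,
    eval_pic_zero]
  ring

theorem ne_zero_of_eval_zero {p : ℝ[X]} (h : p.eval 0 ≠ 0) : p ≠ 0 := by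
  rintro rfl
  simp at h

theorem sub_coe_ne {i j : Fin n} (h : i ≠ j) : ((i : ℕ) : ℝ) - ((j : ℕ) : ℝ) ≠ 0 := by
  rw [sub_ne_zero]
  exact_mod_cast fun h' => h (Fin.ext h')

theorem pdx_ne (i : Fin n) : pdx x i ≠ 0 :=
  ne_zero_of_eval_zero (by simp [eval_pdx_zero])

theorem pdet_ne {i j : Fin n} (h : i ≠ j) : pdet x i j ≠ 0 :=
  ne_zero_of_eval_zero (by
    rw [eval_pdet_zero]
    exact mul_ne_zero two_ne_zero (sub_coe_ne h))

theorem pconc_ne {i j k : Fin n} (hij : i ≠ j) (hik : i ≠ k) (hjk : j ≠ k) :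
    pnum x i j * pdet x i k - pnum x i k * pdet x i j ≠ 0 := by
  refine ne_zero_of_eval_zero ?_
  rw [eval_sub, eval_mul, eval_mul, eval_pdet_zero, eval_pdet_zero, eval_pnum_zero, eval_pnum_zero]
  have h : ((i : ℝ) ^ 2 - (j : ℝ) ^ 2) * (2 * (i - k)) - ((i : ℝ) ^ 2 - (k : ℝ) ^ 2) *
      (2 * (i - j)) = 2 * (i - j) * (i - k) * (j - k) := by ring
  rw [h]
  exact mul_ne_zero (mul_ne_zero (mul_ne_zero two_ne_zero (sub_coe_ne hij)) (sub_coe_ne hik))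
    (sub_coe_ne hjk)

theorem eventually_generic : ∀ᶠ t in Filter.atTop, Generic (curve (path n) x t) := by
  have e1 : ∀ᶠ t in Filter.atTop, ∀ i, (pdx x i).eval t ≠ 0 :=
    Filter.eventually_all.2 fun i => eventually_atTop_not_isRoot _ (pdx_ne x i)
  have e2 : ∀ᶠ t in Filter.atTop, ∀ i j, i ≠ j → (pdet x i j).eval t ≠ 0 :=
    Filter.eventually_all.2 fun i => Filter.eventually_all.2 fun j => by
      by_cases h : i = j
      · exact Filter.Eventually.of_forall fun _ h' => (h' h).elim
      · exact (eventually_atTop_not_isRoot _ (pdet_ne x h)).mono fun _ h _ => h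
  have e3 : ∀ᶠ t in Filter.atTop, ∀ i j k, (i ≠ j ∧ i ≠ k ∧ j ≠ k) →
      (pnum x i j * pdet x i k - pnum x i k * pdet x i j).eval t ≠ 0 :=
    Filter.eventually_all.2 fun i => Filter.eventually_all.2 fun j =>
      Filter.eventually_all.2 fun k => by
      by_cases h : i ≠ j ∧ i ≠ k ∧ j ≠ k
      · exact (eventually_atTop_not_isRoot _ (pconc_ne x h.1 h.2.1 h.2.2)).mono fun _ h _ => h
      · exact Filter.Eventually.of_forall fun _ h' => (h h').elim
  have e4 : ∀ᶠ t in Filter.atTop, ∀ i, |(pdy x i).eval t / (pdx x i).eval t| < t ^ 2 :=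
    Filter.eventually_all.2 fun i => eventually_abs_div_lt (pdx_ne x i)
      (Nat.lt_succ_of_le (natDegree_pdy x i))
  have e5 : ∀ᶠ t in Filter.atTop, ∀ i, |(pic x i).eval t / (pdx x i).eval t| < t ^ 3 :=
    Filter.eventually_all.2 fun i => eventually_abs_div_lt (pdx_ne x i)
      (Nat.lt_succ_of_le (natDegree_pic x i))
  have e6 : ∀ᶠ t in Filter.atTop, ∀ i j, i ≠ j →
      |(pnum x i j).eval t / (pdet x i j).eval t| < t ^ 4 :=
    Filter.eventually_all.2 fun i => Filter.eventually_all.2 fun j => by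
      by_cases h : i = j
      · exact Filter.Eventually.of_forall fun _ h' => (h' h).elim
      · exact (eventually_abs_div_lt (pdet_ne x h)
          (Nat.lt_succ_of_le (natDegree_pnum x i j))).mono fun _ h _ => h
  have e7 : ∀ᶠ t in Filter.atTop, ∀ i c, |(co x i c).eval t| < t ^ 2 :=
    Filter.eventually_all.2 fun i => Filter.eventually_all.2 fun c => by
      have := eventually_abs_div_lt (one_ne_zero (α := ℝ[X]))
        (Nat.lt_succ_of_le (natDegree_co x i c))
      simpa using this
  filter_upwards [e1, e2, e3, e4, e5, e6, e7, Filter.eventually_ge_atTop 2]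
    with t h1 h2 h3 h4 h5 h6 h7 ht
  have hco : ∀ i c, curve (path n) x t (.inl (i, c)) = (co x i c).eval t := fun i c => by
    rw [curve_inl]
    simp [co]
  have hdx : ∀ i, dx (curve (path n) x t) i = (pdx x i).eval t := fun i => by
    rw [dx, hco, hco, pdx, eval_sub]
  have hdy : ∀ i, dy (curve (path n) x t) i = (pdy x i).eval t := fun i => by
    rw [dy, hco, hco, pdy, eval_sub]
  have hsl : ∀ i, slope (curve (path n) x t) i = (pdy x i).eval t / (pdx x i).eval t := fun i => by
    rw [slope, hdx, hdy]
  have hic : ∀ i, icpt (curve (path n) x t) i = (pic x i).eval t / (pdx x i).eval t := fun i => by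
    rw [icpt, hsl, hco, hco, pic, eval_sub, eval_mul, eval_mul]
    field_simp [h1 i]
  have hdet : ∀ i j, slope (curve (path n) x t) i - slope (curve (path n) x t) j =
      (pdet x i j).eval t / ((pdx x i).eval t * (pdx x j).eval t) := fun i j => by
    rw [hsl, hsl, div_sub_div _ _ (h1 i) (h1 j), pdet, eval_sub, eval_mul, eval_mul]
    ring
  have hnum : ∀ i j, icpt (curve (path n) x t) j - icpt (curve (path n) x t) i =
      (pnum x i j).eval t / ((pdx x i).eval t * (pdx x j).eval t) := fun i j => by
    rw [hic, hic, div_sub_div _ _ (h1 j) (h1 i), pnum, eval_sub, eval_mul, eval_mul]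
    ring
  have hcr : ∀ i j, (icpt (curve (path n) x t) j - icpt (curve (path n) x t) i) /
      (slope (curve (path n) x t) i - slope (curve (path n) x t) j) =
      (pnum x i j).eval t / (pdet x i j).eval t := fun i j => by
    rw [hdet, hnum, div_div_div_cancel_right₀ (mul_ne_zero (h1 i) (h1 j))]
  have hpow : t ^ 2 ≤ t ^ 4 := pow_le_pow_right₀ (by linarith) (by norm_num)
  have hpow' : t ^ 2 ≤ t ^ 7 := pow_le_pow_right₀ (by linarith) (by norm_num)
  have ht0 : (0 : ℝ) < t := by linarith
  refine ⟨fun i => ?_, ?_, ?_, ?_, ?_, ?_, ?_, ?_, ?_⟩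
  · rw [hdx]
    exact h1 i
  · rw [curve_m]
    exact pow_pos ht0 4
  · intro i j hij
    by_contra h
    have := hdet i j
    rw [sub_eq_zero.2 hij] at this
    exact div_ne_zero (h2 i j h) (mul_ne_zero (h1 i) (h1 j)) this.symm
  · intro i j k hij hik hjk h
    rw [hcr, hcr, div_eq_div_iff (h2 i j hij) (h2 i k hik)] at h
    refine h3 i j k ⟨hij, hik, hjk⟩ ?_
    rw [eval_sub, eval_mul, eval_mul, h, sub_self]
  · intro i j hij
    rw [hcr, curve_m]
    exact h6 i j hij
  · rintro ⟨i, s⟩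
    rw [curve_m]
    cases s
    · exact ((hco i 2).symm ▸ h7 i 2).trans_le hpow
    · exact ((hco i 0).symm ▸ h7 i 0).trans_le hpow
  · rintro ⟨i, s⟩
    rw [curve_M]
    cases s
    · exact ((hco i 3).symm ▸ h7 i 3).trans_le hpow'
    · exact ((hco i 1).symm ▸ h7 i 1).trans_le hpow'
  · intro i u hu
    rw [curve_m] at hu
    rw [curve_M, hsl, hic]
    have a1 : |(pdy x i).eval t / (pdx x i).eval t * u| ≤ t ^ 2 * t ^ 4 := by
      rw [abs_mul]
      exact mul_le_mul (h4 i).le hu (abs_nonneg _) (by positivity)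
    have a2 : t ^ 3 ≤ t ^ 6 := pow_le_pow_right₀ (by linarith) (by norm_num)
    have a3 : 2 * t ^ 6 ≤ t * t ^ 6 := mul_le_mul_of_nonneg_right ht (by positivity)
    have a4 := abs_add_le ((pdy x i).eval t / (pdx x i).eval t * u)
      ((pic x i).eval t / (pdx x i).eval t)
    have a5 := h5 i
    have a6 : t ^ 2 * t ^ 4 = t ^ 6 := by ring
    have a7 : t ^ 7 = t * t ^ 6 := by ring
    linarith
  · rw [curve_M]
    exact pow_pos ht0 7

end Fixed

end Co

/-! ### Intersection of segments in general position -/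

/-- The orientation of the triangle `a b p`. -/
def ori (a b p : ℝ × ℝ) : ℝ := (p.2 - a.2) * (b.1 - a.1) - (b.2 - a.2) * (p.1 - a.1)

theorem mem_seg {u v p : ℝ × ℝ} : p ∈ segment ℝ u v ↔
    ∃ θ : ℝ, 0 ≤ θ ∧ θ ≤ 1 ∧ p.1 = (1 - θ) * u.1 + θ * v.1 ∧ p.2 = (1 - θ) * u.2 + θ * v.2 := by
  rw [segment_eq_image]
  constructor
  · rintro ⟨θ, ⟨h0, h1⟩, rfl⟩
    exact ⟨θ, h0, h1, by simp, by simp⟩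
  · rintro ⟨θ, h0, h1, e1, e2⟩
    exact ⟨θ, ⟨h0, h1⟩, Prod.ext (by simp [e1]) (by simp [e2])⟩

theorem exists_param {a b p : ℝ × ℝ} (hab : a ≠ b) (h : ori a b p = 0) :
    ∃ s : ℝ, p.1 = (1 - s) * a.1 + s * b.1 ∧ p.2 = (1 - s) * a.2 + s * b.2 := by
  unfold ori at h
  by_cases h1 : b.1 - a.1 = 0
  · have h2 : b.2 - a.2 ≠ 0 := fun h2 => hab (Prod.ext (by linarith) (by linarith))
    have h3 : p.1 - a.1 = 0 := by
      rw [h1, mul_zero, zero_sub, neg_eq_zero] at h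
      exact (mul_eq_zero.1 h).resolve_left h2
    refine ⟨(p.2 - a.2) / (b.2 - a.2), ?_, ?_⟩
    · have : b.1 = a.1 := by linarith
      rw [this]
      linarith
    · field_simp
      ring
  · refine ⟨(p.1 - a.1) / (b.1 - a.1), ?_, ?_⟩
    · field_simp
      ring
    · field_simp
      linarith

/-- A segment that meets `[a, b]` crosses the line through `a` and `b` transversally, provided that
no endpoint of one segment lies on the other. -/
theorem ori_mul_neg {u v a b : ℝ × ℝ} (hab : a ≠ b) (hu : u ∉ segment ℝ a b)
    (hv : v ∉ segment ℝ a b) (ha : a ∉ segment ℝ u v)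
    (h : (segment ℝ u v ∩ segment ℝ a b).Nonempty) : ori a b u * ori a b v < 0 := by
  obtain ⟨p, hp1, hp2⟩ := h
  obtain ⟨θ, h0, h1, e1, e2⟩ := mem_seg.1 hp1
  obtain ⟨c, c0, c1, f1, f2⟩ := mem_seg.1 hp2
  have hlin : (1 - θ) * ori a b u + θ * ori a b v = 0 := by
    have : ori a b p = 0 := by
      unfold ori
      rw [f1, f2]
      ring
    rw [← this]
    unfold ori
    rw [e1, e2]
    ring
  have hθ0 : θ ≠ 0 := by
    rintro rfl
    exact hu ((Prod.ext (by simpa using e1) (by simpa using e2) : p = u) ▸ hp2)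
  have hθ1 : 1 - θ ≠ 0 := by
    intro h
    have : θ = 1 := by linarith
    subst this
    exact hv ((Prod.ext (by simpa using e1) (by simpa using e2) : p = v) ▸ hp2)
  have hpos : 0 < θ := lt_of_le_of_ne h0 hθ0.symm
  have hpos' : 0 < 1 - θ := lt_of_le_of_ne (by linarith) hθ1.symm
  by_cases hz : ori a b u = 0
  · -- all four endpoints are collinear
    exfalso
    have hz' : ori a b v = 0 := by
      rw [hz, mul_zero, zero_add] at hlin
      exact (mul_eq_zero.1 hlin).resolve_left hθ0
    obtain ⟨s, s1, s2⟩ := exists_param hab hz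
    obtain ⟨r, r1, r2⟩ := exists_param hab hz'
    have hs : ¬ (0 ≤ s ∧ s ≤ 1) := fun h => hu (mem_seg.2 ⟨s, h.1, h.2, s1, s2⟩)
    have hr : ¬ (0 ≤ r ∧ r ≤ 1) := fun h => hv (mem_seg.2 ⟨r, h.1, h.2, r1, r2⟩)
    have hc : c = (1 - θ) * s + θ * r := by
      have g1 : (c - ((1 - θ) * s + θ * r)) * (b.1 - a.1) = 0 := by
        have := f1.symm.trans e1
        rw [s1, r1] at this
        linarith
      have g2 : (c - ((1 - θ) * s + θ * r)) * (b.2 - a.2) = 0 := by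
        have := f2.symm.trans e2
        rw [s2, r2] at this
        linarith
      by_contra hne
      have hne' : c - ((1 - θ) * s + θ * r) ≠ 0 := fun h => hne (by linarith)
      exact hab (Prod.ext (by linarith [(mul_eq_zero.1 g1).resolve_left hne'])
        (by linarith [(mul_eq_zero.1 g2).resolve_left hne']))
    -- the parameters of `u` and `v` lie on opposite sides of `[0, 1]`, hence of `0`
    have hsr : (s < 0 ∧ 0 < r) ∨ (r < 0 ∧ 0 < s) := by
      rcases lt_or_ge s 0 with h | h
      · refine Or.inl ⟨h, ?_⟩
        by_contra h'
        have : θ * r ≤ 0 := mul_nonpos_of_nonneg_of_nonpos h0 (not_lt.1 h')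
        have : (1 - θ) * s < 0 := mul_neg_of_pos_of_neg hpos' h
        linarith
      · have hs1 : 1 < s := by
          by_contra h'
          exact hs ⟨h, not_lt.1 h'⟩
        refine Or.inr ⟨?_, by linarith⟩
        by_contra h'
        have hr1 : 1 < r := by
          by_contra h''
          exact hr ⟨not_lt.1 h', not_lt.1 h''⟩
        have g1 : (1 - θ) * 1 < (1 - θ) * s := mul_lt_mul_of_pos_left hs1 hpos'
        have g2 : θ * 1 < θ * r := mul_lt_mul_of_pos_left hr1 hpos
        linarith
    have hne : r - s ≠ 0 := by
      rcases hsr with h | h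
      · exact (by linarith [h.1, h.2] : 0 < r - s).ne'
      · exact (by linarith [h.1, h.2] : r - s < 0).ne
    refine ha (mem_seg.2 ⟨-s / (r - s), ?_, ?_, ?_, ?_⟩)
    · rcases hsr with h | h
      · exact div_nonneg (by linarith) (by linarith)
      · exact div_nonneg_of_nonpos (by linarith) (by linarith)
    · rcases hsr with h | h
      · rw [div_le_one (by linarith)]
        linarith
      · rw [div_le_one_of_neg (by linarith)]
        linarith
    · rw [s1, r1]
      field_simp
      ring
    · rw [s2, r2]
      field_simp
      ring
  · have e : ori a b u * ori a b v * θ = -((1 - θ) * (ori a b u * ori a b u)) := by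
      have : θ * ori a b v = -((1 - θ) * ori a b u) := by linarith
      calc _ = ori a b u * (θ * ori a b v) := by ring
        _ = _ := by rw [this]; ring
    have : 0 < (1 - θ) * (ori a b u * ori a b u) := mul_pos hpos' (mul_self_pos.2 hz)
    by_contra h
    have := mul_nonneg (not_lt.1 h) h0
    linarith

theorem eventually_quad (o b c : ℝ) (ho : o ≠ 0) :
    ∀ᶠ t : ℝ in Filter.atTop, 0 < (t ^ 2 * o + t * b + c) * o := by
  have ho' : 0 < |o| := abs_pos.2 ho
  filter_upwards [Filter.eventually_ge_atTop 1, Filter.eventually_gt_atTop ((|b| + |c|) / |o|)]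
    with t h1 h2
  rw [div_lt_iff₀ ho'] at h2
  have a1 : -(|b| * |o|) ≤ b * o := by rw [← abs_mul]; exact neg_abs_le _
  have a2 : -(|c| * |o|) ≤ c * o := by rw [← abs_mul]; exact neg_abs_le _
  have a3 : o * o = |o| * |o| := (abs_mul_abs_self o).symm
  have e : (t ^ 2 * o + t * b + c) * o = t * (t * (o * o)) + t * (b * o) + c * o := by ring
  rw [e, a3]
  have a4 : t * -(|b| * |o|) ≤ t * (b * o) := mul_le_mul_of_nonneg_left a1 (by linarith)
  have a5 : t * ((|b| + |c|) * |o|) < t * (t * (|o| * |o|)) := by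
    refine mul_lt_mul_of_pos_left ?_ (by linarith)
    rw [← mul_assoc]
    exact mul_lt_mul_of_pos_right h2 ho'
  have a6 : 1 * (|c| * |o|) ≤ t * (|c| * |o|) := mul_le_mul_of_nonneg_right h1 (by positivity)
  have a7 : t * ((|b| + |c|) * |o|) = t * (|b| * |o|) + t * (|c| * |o|) := by ring
  linarith

namespace Co

variable {n : ℕ}

/-- The endpoint `p` lies on or above the line through the segment `j`. -/
def Above (y : Co n → ℝ) (p : Fin n × Bool) (j : Fin n) : Prop :=
  slope y j * ex y p + icpt y j ≤ ey y p

/-- The line through the segment `j` separates the endpoints of the segment `i`. -/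
def Cross (y : Co n → ℝ) (i j : Fin n) : Prop := Above y (i, true) j ↔ ¬ Above y (i, false) j

theorem exists_zero {e f : ℝ} (h : 0 ≤ e ↔ ¬ 0 ≤ f) :
    ∃ θ : ℝ, 0 ≤ θ ∧ θ ≤ 1 ∧ (1 - θ) * e + θ * f = 0 := by
  by_cases he : 0 ≤ e
  · have hf := not_le.1 (h.1 he)
    refine ⟨e / (e - f), div_nonneg he (by linarith), ?_, ?_⟩
    · rw [div_le_one (by linarith)]
      linarith
    · have : e - f ≠ 0 := by linarith
      field_simp
      ring
  · have hf : 0 ≤ f := by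
      by_contra hf
      exact he (h.2 hf)
    have he' := not_le.1 he
    refine ⟨e / (e - f), div_nonneg_of_nonpos he'.le (by linarith), ?_, ?_⟩
    · rw [div_le_one_of_neg (by linarith)]
      linarith
    · have : e - f ≠ 0 := by linarith
      field_simp
      ring

theorem on_line {y : Co n → ℝ} (hy : Generic y) (i : Fin n) (s : Bool) :
    ey y (i, s) = slope y i * ex y (i, s) + icpt y i := by
  cases s
  · have h := hy.dx_ne i
    have : slope y i * dx y i = dy y i := div_mul_cancel₀ _ h
    simp only [ex, ey, icpt, Bool.false_eq_true, if_false]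
    unfold dx dy at this
    linarith
  · simp [ex, ey, icpt]

theorem exists_common {y : Co n → ℝ} (hy : Generic y) {i j : Fin n} (hij : i ≠ j)
    (h1 : Cross y i j) (h2 : Cross y j i) :
    ∃ θ μ : ℝ, (0 ≤ θ ∧ θ ≤ 1) ∧ (0 ≤ μ ∧ μ ≤ 1) ∧
      (1 - θ) * ex y (i, true) + θ * ex y (i, false) =
        (1 - μ) * ex y (j, true) + μ * ex y (j, false) ∧
      (1 - θ) * ey y (i, true) + θ * ey y (i, false) =
        (1 - μ) * ey y (j, true) + μ * ey y (j, false) := by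
  have key : ∀ i j, Cross y i j → ∃ θ : ℝ, (0 ≤ θ ∧ θ ≤ 1) ∧
      (1 - θ) * ey y (i, true) + θ * ey y (i, false) =
        slope y j * ((1 - θ) * ex y (i, true) + θ * ex y (i, false)) + icpt y j := by
    intro i j h
    unfold Cross Above at h
    rw [← sub_nonneg, ← sub_nonneg (b := slope y j * ex y (i, false) + icpt y j)] at h
    obtain ⟨θ, a, b, e⟩ := exists_zero h
    exact ⟨θ, ⟨a, b⟩, by linarith⟩
  obtain ⟨θ, hθ, e1⟩ := key i j h1
  obtain ⟨μ, hμ, e2⟩ := key j i h2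
  have e3 : (1 - θ) * ey y (i, true) + θ * ey y (i, false) =
      slope y i * ((1 - θ) * ex y (i, true) + θ * ex y (i, false)) + icpt y i := by
    rw [on_line hy, on_line hy]
    ring
  have e4 : (1 - μ) * ey y (j, true) + μ * ey y (j, false) =
      slope y j * ((1 - μ) * ex y (j, true) + μ * ex y (j, false)) + icpt y j := by
    rw [on_line hy, on_line hy]
    ring
  have hne : slope y i - slope y j ≠ 0 := sub_ne_zero.2 fun h => hij (hy.slope_inj h)
  have hx : (1 - θ) * ex y (i, true) + θ * ex y (i, false) =
      (1 - μ) * ex y (j, true) + μ * ex y (j, false) := by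
    refine sub_eq_zero.1 ((mul_eq_zero.1 ?_).resolve_left hne)
    linarith
  refine ⟨θ, μ, hθ, hμ, hx, ?_⟩
  rw [e3, e2, hx]

end Co

/-- The input is in general position. -/
def GenPos (n : ℕ) (x : Fin (4 * n) → ℝ) : Prop :=
  (Function.Injective fun ic : Fin n × Bool => if ic.2 then segU n x ic.1 else segV n x ic.1) ∧
    ∀ i j : Fin n, i ≠ j → segU n x i ∉ segment ℝ (segU n x j) (segV n x j) ∧
      segV n x i ∉ segment ℝ (segU n x j) (segV n x j)

namespace Co

variable {n : ℕ}

/-- The orientation of an endpoint with respect to the segment `j`. -/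
def oc (y : Co n → ℝ) (j : Fin n) (p : Fin n × Bool) : ℝ :=
  (ey y p - y (.inl (j, 1))) * dx y j - dy y j * (ex y p - y (.inl (j, 0)))

theorem cross_of_neg {y : Co n → ℝ} (hy : Generic y) {i j : Fin n}
    (h : oc y j (i, true) * oc y j (i, false) < 0) : Cross y i j := by
  have hd := hy.dx_ne j
  have key : ∀ p, oc y j p = (ey y p - (slope y j * ex y p + icpt y j)) * dx y j := by
    intro p
    have : slope y j * dx y j = dy y j := div_mul_cancel₀ _ hd
    unfold oc icpt
    rw [← this]
    ring
  rw [key, key] at h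
  unfold Cross Above
  rw [← sub_nonneg, ← sub_nonneg (b := slope y j * ex y (i, false) + icpt y j)]
  generalize ey y (i, true) - (slope y j * ex y (i, true) + icpt y j) = e at *
  generalize ey y (i, false) - (slope y j * ex y (i, false) + icpt y j) = f at *
  have h' : e * f < 0 := by
    by_contra h0
    have := mul_nonneg (not_lt.1 h0) (mul_self_nonneg (dx y j))
    linarith
  constructor
  · intro he hf
    linarith [mul_nonneg he hf]
  · intro hf
    by_contra he
    linarith [mul_pos_of_neg_of_neg (not_le.1 he) (not_le.1 hf)]

variable (x : Fin (4 * n) → ℝ)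

theorem oc_curve (i j : Fin n) (s : Bool) : ∃ b c : ℝ, ∀ t : ℝ,
    oc (curve (path n) x t) j (i, s) = t ^ 2 * ori (segU n x j) (segV n x j)
      (if s then segU n x i else segV n x i) + t * b + c := by
  have key : ∀ p1 p2 q1 q2 r1 r2 a1 a2 b1 b2 c1 c2 : ℝ, ∃ b c : ℝ, ∀ t : ℝ,
      ((r2 * t + c2) - (p2 * t + a2)) * ((q1 * t + b1) - (p1 * t + a1)) -
        ((q2 * t + b2) - (p2 * t + a2)) * ((r1 * t + c1) - (p1 * t + a1)) =
      t ^ 2 * ori (p1, p2) (q1, q2) (r1, r2) + t * b + c := by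
    intro p1 p2 q1 q2 r1 r2 a1 a2 b1 b2 c1 c2
    refine ⟨(r2 - p2) * (b1 - a1) + (c2 - a2) * (q1 - p1) - (q2 - p2) * (c1 - a1) -
      (b2 - a2) * (r1 - p1), (c2 - a2) * (b1 - a1) - (b2 - a2) * (c1 - a1), fun t => ?_⟩
    unfold ori
    ring
  cases s
  · obtain ⟨b, c, h⟩ := key (x (segIdx n j 0)) (x (segIdx n j 1)) (x (segIdx n j 2))
      (x (segIdx n j 3)) (x (segIdx n i 2)) (x (segIdx n i 3)) (off j 0) (off j 1) (off j 2)
      (off j 3) (off i 2) (off i 3)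
    refine ⟨b, c, fun t => ?_⟩
    simp only [oc, ex, ey, dx, dy, curve_inl, Bool.false_eq_true, if_false]
    exact h t
  · obtain ⟨b, c, h⟩ := key (x (segIdx n j 0)) (x (segIdx n j 1)) (x (segIdx n j 2))
      (x (segIdx n j 3)) (x (segIdx n i 0)) (x (segIdx n i 1)) (off j 0) (off j 1) (off j 2)
      (off j 3) (off i 0) (off i 1)
    refine ⟨b, c, fun t => ?_⟩
    simp only [oc, ex, ey, dx, dy, curve_inl, if_true]
    exact h t

variable {x}

theorem eventually_cross (hx : GenPos n x) {i j : Fin n} (hij : i ≠ j)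
    (h : (segment ℝ (segU n x i) (segV n x i) ∩ segment ℝ (segU n x j) (segV n x j)).Nonempty) :
    ∀ᶠ t in Filter.atTop, Cross (curve (path n) x t) i j := by
  have hne : segU n x j ≠ segV n x j := fun h => by
    have := @hx.1 (j, true) (j, false) (by simpa using h)
    simp at this
  have hneg := ori_mul_neg hne (hx.2 i j hij).1 (hx.2 i j hij).2 (hx.2 j i hij.symm).1 h
  obtain ⟨b, c, e⟩ := oc_curve x i j true
  obtain ⟨b', c', e'⟩ := oc_curve x i j false
  have h1 : ori (segU n x j) (segV n x j) (segU n x i) ≠ 0 := fun h => by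
    rw [h, zero_mul] at hneg
    exact hneg.false
  have h2 : ori (segU n x j) (segV n x j) (segV n x i) ≠ 0 := fun h => by
    rw [h, mul_zero] at hneg
    exact hneg.false
  filter_upwards [eventually_generic x, eventually_quad _ b c h1, eventually_quad _ b' c' h2]
    with t hg a1 a2
  refine cross_of_neg hg ?_
  have e1 := e t
  have e2 := e' t
  simp only [if_true, Bool.false_eq_true, if_false] at e1 e2
  rw [← e1] at a1
  rw [← e2] at a2
  have := mul_pos a1 a2
  by_contra h0
  have h3 := mul_nonpos_of_nonneg_of_nonpos (not_lt.1 h0) hneg.le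
  linarith

theorem abs_off_le (i : Fin n) (c : Fin 4) : |off i c| ≤ (n : ℝ) ^ 2 + 2 * n + 1 := by
  have h1 : ((i : ℕ) : ℝ) ≤ n := by exact_mod_cast i.2.le
  have h0 : (0 : ℝ) ≤ ((i : ℕ) : ℝ) := Nat.cast_nonneg _
  have h2 : ((i : ℕ) : ℝ) ^ 2 ≤ (n : ℝ) ^ 2 := pow_le_pow_left₀ h0 h1 2
  have h3 : 0 ≤ ((i : ℕ) : ℝ) ^ 2 := sq_nonneg _
  fin_cases c <;> simp only [off, abs_le] <;> constructor <;> simp <;> linarith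

theorem abs_convex {a b B θ : ℝ} (ha : |a| ≤ B) (hb : |b| ≤ B) (h : 0 ≤ θ ∧ θ ≤ 1) :
    |(1 - θ) * a + θ * b| ≤ B := by
  rw [abs_le] at *
  constructor
  · have := mul_le_mul_of_nonneg_left ha.1 (by linarith : (0 : ℝ) ≤ 1 - θ)
    have := mul_le_mul_of_nonneg_left hb.1 h.1
    linarith
  · have := mul_le_mul_of_nonneg_left ha.2 (by linarith : (0 : ℝ) ≤ 1 - θ)
    have := mul_le_mul_of_nonneg_left hb.2 h.1
    linarith

/-- Disjoint segments have a positive distance, so they stay disjoint under a small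
perturbation. -/
theorem eventually_not_cross {i j : Fin n} (hij : i ≠ j)
    (h : ¬ (segment ℝ (segU n x i) (segV n x i) ∩ segment ℝ (segU n x j) (segV n x j)).Nonempty) :
    ∀ᶠ t in Filter.atTop, ¬ (Cross (curve (path n) x t) i j ∧ Cross (curve (path n) x t) j i) := by
  have hcomp : ∀ u v : ℝ × ℝ, IsCompact (segment ℝ u v) := fun u v => by
    rw [segment_eq_image]
    exact isCompact_Icc.image (by fun_prop)
  obtain ⟨δ, hδ, hd⟩ := (Set.disjoint_iff_inter_eq_empty.2 (Set.not_nonempty_iff_eq_empty.1 h)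
    ).exists_thickenings (hcomp _ _) (hcomp _ _).isClosed
  set B : ℝ := (n : ℝ) ^ 2 + 2 * n + 1 with hB
  filter_upwards [eventually_generic x, Filter.eventually_gt_atTop (2 * B / δ),
    Filter.eventually_gt_atTop 0] with t hg ht ht0 hcr
  rw [div_lt_iff₀ hδ] at ht
  obtain ⟨θ, μ, hθ, hμ, e1, e2⟩ := exists_common hg hij hcr.1 hcr.2
  simp only [ex, ey, curve_inl, if_true, Bool.false_eq_true, if_false] at e1 e2
  have key : ∀ c c' : Fin 4,
      (1 - θ) * (x (segIdx n i c) * t + off i c) + θ * (x (segIdx n i c') * t + off i c') =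
        (1 - μ) * (x (segIdx n j c) * t + off j c) + μ * (x (segIdx n j c') * t + off j c') →
      |((1 - θ) * x (segIdx n i c) + θ * x (segIdx n i c')) -
        ((1 - μ) * x (segIdx n j c) + μ * x (segIdx n j c'))| < δ := by
    intro c c' e
    have a1 := abs_convex (abs_off_le i c) (abs_off_le i c') hθ
    have a2 := abs_convex (abs_off_le j c) (abs_off_le j c') hμ
    generalize (1 - θ) * off i c + θ * off i c' = p at *
    have e3 : t * (((1 - θ) * x (segIdx n i c) + θ * x (segIdx n i c')) -
        ((1 - μ) * x (segIdx n j c) + μ * x (segIdx n j c'))) =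
        ((1 - μ) * off j c + μ * off j c') - ((1 - θ) * off i c + θ * off i c') := by linarith
    have a1' := abs_convex (abs_off_le i c) (abs_off_le i c') hθ
    have a3 := abs_sub ((1 - μ) * off j c + μ * off j c') ((1 - θ) * off i c + θ * off i c')
    rw [← e3, abs_mul, abs_of_pos ht0] at a3
    by_contra h0
    have := mul_le_mul_of_nonneg_left (not_lt.1 h0) ht0.le
    linarith
  let p : ℝ × ℝ := ((1 - θ) * (segU n x i).1 + θ * (segV n x i).1,
    (1 - θ) * (segU n x i).2 + θ * (segV n x i).2)
  let q : ℝ × ℝ := ((1 - μ) * (segU n x j).1 + μ * (segV n x j).1,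
    (1 - μ) * (segU n x j).2 + μ * (segV n x j).2)
  have hp : p ∈ segment ℝ (segU n x i) (segV n x i) := mem_seg.2 ⟨θ, hθ.1, hθ.2, rfl, rfl⟩
  have hq : q ∈ segment ℝ (segU n x j) (segV n x j) := mem_seg.2 ⟨μ, hμ.1, hμ.2, rfl, rfl⟩
  have hdist : dist p q < δ := by
    rw [Prod.dist_eq, Real.dist_eq, Real.dist_eq]
    exact max_lt (key 0 2 e1) (key 1 3 e2)
  exact Set.disjoint_left.1 hd (Metric.mem_thickening_iff.2 ⟨p, hp, by rwa [dist_self]⟩)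
    (Metric.mem_thickening_iff.2 ⟨q, hq, hdist⟩)

/-- Intersection of the given segments is read off from the sides of the perturbed lines on which
the perturbed endpoints lie. -/
theorem eventually_inter_iff (hx : GenPos n x) {i j : Fin n} (hij : i ≠ j) :
    ∀ᶠ t in Filter.atTop,
      ((segment ℝ (segU n x i) (segV n x i) ∩ segment ℝ (segU n x j) (segV n x j)).Nonempty ↔
        Cross (curve (path n) x t) i j ∧ Cross (curve (path n) x t) j i) := by
  by_cases h : (segment ℝ (segU n x i) (segV n x i) ∩
      segment ℝ (segU n x j) (segV n x j)).Nonempty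
  · filter_upwards [eventually_cross hx hij h,
      eventually_cross hx hij.symm (by rwa [Set.inter_comm])] with t h1 h2
    exact iff_of_true h ⟨h1, h2⟩
  · filter_upwards [eventually_not_cross hij h] with t h1
    exact iff_of_false h h1

end Co

/-! ### Assembly -/

section Numeric

theorem card_testName_le {n : ℕ} (hn : 1 ≤ n) :
    Fintype.card (TestName (Fin n) (Fin n × Bool)) ≤ 263538 * n ^ 13 := by
  have hp : Fintype.card (Pt (Fin n) (Fin n × Bool)) ≤ 11 * n ^ 3 := by
    simp only [Pt, Wall, Ln, Fintype.card_sum, Fintype.card_prod, Fintype.card_fin,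
      Fintype.card_bool]
    have h2 : n ≤ n ^ 2 := Nat.le_self_pow (by norm_num) n
    have h3 : n ≤ n ^ 3 := Nat.le_self_pow (by norm_num) n
    calc n * 2 + (2 + n * n) * (n + 2) ≤ n ^ 3 * 2 + (3 * n ^ 2) * (3 * n) := by
          gcongr
          · nlinarith
          · omega
      _ = 11 * n ^ 3 := by ring
  have hl : Fintype.card (Ln (Fin n)) ≤ 3 * n := by
    simp only [Ln, Fintype.card_sum, Fintype.card_fin, Fintype.card_bool]
    omega
  simp only [TestName, Fintype.card_prod, Fintype.card_fin] at hp hl ⊢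
  calc _ ≤ 6 * ((3 * n) * (((11 * n ^ 3) * (11 * n ^ 3)) * ((11 * n ^ 3) * (11 * n ^ 3)))) := by
        gcongr
    _ = 263538 * n ^ 13 := by ring

/-- The number of sign patterns is at most exponential in `n log n`, and `log n = O(ρ)`. -/
theorem patterns_le {n ρ c m : ℕ} (hn : 1 ≤ n) (hρ : n ≤ ρ ^ 120) (hc : c ≤ 263538 * n ^ 13)
    (hm : m ≤ (2 * (c * 400) + 1) ^ (n * 4 + 2)) : m ≤ 2 ^ ((28 + 1560 * ρ) * (6 * n)) := by
  have hn13 : 1 ≤ n ^ 13 := Nat.one_le_pow _ _ hn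
  have h1 : 2 * (c * 400) + 1 ≤ 2 ^ 28 * n ^ 13 := by norm_num; omega
  have h2 : n ≤ 2 ^ (120 * ρ) := by
    calc n ≤ ρ ^ 120 := hρ
      _ ≤ (2 ^ ρ) ^ 120 := Nat.pow_le_pow_left Nat.lt_two_pow_self.le _
      _ = _ := by rw [← pow_mul, mul_comm]
  calc m ≤ (2 * (c * 400) + 1) ^ (n * 4 + 2) := hm
    _ ≤ (2 * (c * 400) + 1) ^ (6 * n) := Nat.pow_le_pow_right (by omega) (by omega)
    _ ≤ (2 ^ 28 * (2 ^ (120 * ρ)) ^ 13) ^ (6 * n) := by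
        refine Nat.pow_le_pow_left (h1.trans ?_) _
        gcongr
    _ = _ := by rw [← pow_mul, ← pow_add, ← pow_mul]; congr 2; ring

theorem exists_ratio {n : ℕ} (hn : 1 ≤ n) :
    ∃ r : ℕ, 20 ≤ (r : ℝ) + 1 ∧ (n : ℝ) ≤ ((r : ℝ) + 1) ^ 120 ∧
      ((r : ℝ) + 1) ^ 160 ≤ 22 ^ 160 * (n : ℝ) ^ ((4 : ℝ) / 3) := by
  have hn' : (1 : ℝ) ≤ n := by exact_mod_cast hn
  set s : ℝ := (n : ℝ) ^ ((1 : ℝ) / 120) with hs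
  have hs1 : 1 ≤ s := Real.one_le_rpow hn' (by norm_num)
  have hs120 : s ^ 120 = n := by
    rw [hs, ← Real.rpow_natCast, ← Real.rpow_mul (by linarith)]
    norm_num
  have hs160 : s ^ 160 = (n : ℝ) ^ ((4 : ℝ) / 3) := by
    rw [hs, ← Real.rpow_natCast, ← Real.rpow_mul (by linarith)]
    norm_num
  refine ⟨⌈s⌉₊ + 19, ?_, ?_, ?_⟩
  · push_cast
    linarith [Nat.cast_nonneg (α := ℝ) ⌈s⌉₊]
  · rw [← hs120]
    refine pow_le_pow_left₀ (by linarith) ?_ _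
    push_cast
    linarith [Nat.le_ceil s]
  · rw [← hs160, ← mul_pow]
    refine pow_le_pow_left₀ (by positivity) ?_ _
    push_cast
    linarith [Nat.ceil_lt_add_one (show 0 ≤ s by linarith)]

/-- The constant of the depth bound. -/
noncomputable def totalConst : ℝ := kap ^ 41 * 6 + 9372

theorem totalConst_nonneg : 0 ≤ totalConst := by
  have h : 0 < kap := by unfold kap; positivity
  unfold totalConst
  positivity

/-- With `ρ ≈ n ^ (1/120)` and `40` levels, every term of the cost is `O(ρ ^ 160)`. -/
theorem total_le {ρ n l : ℝ} (hρ : 20 ≤ ρ) (hn : 0 ≤ n) (h : n ≤ ρ ^ 120)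
    (hl : l ≤ (28 + 1560 * ρ) * (6 * n)) :
    0 + cost ρ 40 (n * 2) n + ρ ^ 39 * l ≤ totalConst * ρ ^ 160 := by
  have hρ0 : 0 < ρ := by linarith
  have e1 : ρ ^ 40 * n ≤ ρ ^ 160 := by
    calc ρ ^ 40 * n ≤ ρ ^ 40 * ρ ^ 120 := by gcongr
      _ = _ := by ring
  have e2 : n * 2 * n / (ρ ^ 40 * ρ ^ 40) ≤ 2 * ρ ^ 160 := by
    rw [div_le_iff₀ (by positivity)]
    calc n * 2 * n ≤ ρ ^ 120 * 2 * ρ ^ 120 := by gcongr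
      _ = _ := by ring
  have e3 : ρ ^ 39 * l ≤ 9372 * ρ ^ 160 := by
    calc ρ ^ 39 * l ≤ ρ ^ 39 * ((1562 * ρ) * (6 * n)) := by
          gcongr
          refine hl.trans ?_
          gcongr
          linarith
      _ = 9372 * (ρ ^ 40 * n) := by ring
      _ ≤ _ := by gcongr
  have e4 : cost ρ 40 (n * 2) n ≤ kap ^ 41 * (6 * ρ ^ 160) := by
    unfold cost
    have hk : 0 ≤ kap ^ (40 + 1) := by unfold kap; positivity
    refine mul_le_mul_of_nonneg_left ?_ hk
    have e5 : ρ ^ (2 * 40) * ρ ^ 80 = ρ ^ 160 := by ring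
    rw [e5]
    linarith
  unfold totalConst
  linarith

theorem depth_arith {c e t d ρ y : ℝ} (hc : 0 ≤ c) (ht : t ≤ 2801 * d) (hd : d ≤ c * ρ)
    (hρ : ρ ≤ e * y) : t ≤ 2801 * (c * e) * y := by
  have := mul_le_mul_of_nonneg_left hρ hc
  linarith

end Numeric

section Assembly

variable {n : ℕ}

/-- The number of intersecting pairs. -/
noncomputable def crossings (n : ℕ) (x : Fin (4 * n) → ℝ) : ℕ :=
  ((Finset.univ : Finset (Fin n × Fin n)).filter fun ij =>
    ij.1 < ij.2 ∧
      (segment ℝ (segU n x ij.1) (segV n x ij.1) ∩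
        segment ℝ (segU n x ij.2) (segV n x ij.2)).Nonempty).card

/-- The polynomial deciding a primitive comparison, along the path of perturbations of an input. The
sign of its leading coefficient is the outcome of the comparison far along the path. -/
noncomputable def leadPoly (c : TestName (Fin n) (Fin n × Bool)) :
    Polynomial (MvPolynomial (Fin (4 * n)) ℝ) :=
  MvPolynomial.aeval (Co.path n) (Co.poly c)

theorem leadPoly_deg (c : TestName (Fin n) (Fin n × Bool)) : CurveDeg 7 400 (leadPoly c) :=
  CurveDeg.aeval Co.path_deg (Co.poly_degree c)

/-- The primitive comparison `c` on the unperturbed input. -/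
def leadTest (c : TestName (Fin n) (Fin n × Bool)) (z : {x : Fin (4 * n) → ℝ // GenPos n x}) :
    Prop :=
  0 ≤ ((leadPoly c).map (MvPolynomial.eval z.1)).leadingCoeff

/-- Far enough along its path every input becomes generic, without changing the outcome of a
comparison or the intersecting pairs. -/
theorem exists_perturbation (z : {x : Fin (4 * n) → ℝ // GenPos n x}) :
    ∃ w : Co.Gen n, (∀ c, leadTest c z ↔ 0 ≤ (Co.arr w).val c) ∧
      ∀ i j : Fin n, i ≠ j →
        ((segment ℝ (segU n z.1 i) (segV n z.1 i) ∩
          segment ℝ (segU n z.1 j) (segV n z.1 j)).Nonempty ↔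
            Co.Cross w.1 i j ∧ Co.Cross w.1 j i) := by
  have h2 : ∀ᶠ t in Filter.atTop, ∀ c : TestName (Fin n) (Fin n × Bool),
      (0 ≤ MvPolynomial.eval (curve (Co.path n) z.1 t) (Co.poly c) ↔ leadTest c z) := by
    refine Filter.eventually_all.2 fun c => ?_
    filter_upwards [eventually_nonneg_iff ((leadPoly c).map (MvPolynomial.eval z.1))] with t ht
    rw [eval_curve]
    exact ht
  have h3 : ∀ᶠ t in Filter.atTop, ∀ i j : Fin n, i ≠ j →
      ((segment ℝ (segU n z.1 i) (segV n z.1 i) ∩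
        segment ℝ (segU n z.1 j) (segV n z.1 j)).Nonempty ↔
          Co.Cross (curve (Co.path n) z.1 t) i j ∧ Co.Cross (curve (Co.path n) z.1 t) j i) := by
    refine Filter.eventually_all.2 fun i => Filter.eventually_all.2 fun j => ?_
    by_cases hij : i = j
    · exact Filter.Eventually.of_forall fun t h => absurd hij h
    · filter_upwards [Co.eventually_inter_iff z.2 hij] with t ht _
      exact ht
  obtain ⟨t, ht1, ht2, ht3⟩ := ((Co.eventually_generic z.1).and (h2.and h3)).exists
  refine ⟨⟨curve (Co.path n) z.1 t, ht1⟩, fun c => ?_, ht3⟩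
  rw [Co.poly_iff]
  exact (ht2 c).symm

theorem solv_crossings (hn : 1 ≤ n) {r : ℕ} (hr : 20 ≤ (r : ℝ) + 1) (hnr : (n : ℝ) ≤ ((r : ℝ) + 1) ^ 120) :
    SolvR (leadTest (n := n)) (fun z => crossings n z.1) Set.univ
      (totalConst * ((r : ℝ) + 1) ^ 160) := by
  rcases (Set.univ : Set {x : Fin (4 * n) → ℝ // GenPos n x}).eq_empty_or_nonempty with h0 | hne
  · rw [h0]
    refine ⟨0, ?_, .leaf _ _ (by simp)⟩
    rw [Nat.cast_zero]
    have h1 : (0 : ℝ) ≤ ((r : ℝ) + 1) ^ 160 := pow_nonneg (by linarith) _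
    exact mul_nonneg totalConst_nonneg h1
  choose w hw1 hw2 using exists_perturbation (n := n)
  have : Nonempty (Ln (Fin n)) := ⟨Sum.inr true⟩
  have : Nonempty (Pt (Fin n) (Fin n × Bool)) := ⟨Sum.inr (Sum.inl true, Sum.inr true)⟩
  have hT : Tests leadTest fun z => Co.arr (w z) := Tests.of_val fun c z => hw1 z c
  -- the number of patterns is bounded by that of the deciding polynomials on the whole space
  have hpat : numPat (leadTest (n := n)) Set.univ ≤
      (2 * (Fintype.card (TestName (Fin n) (Fin n × Bool)) * 400) + 1) ^ (n * 4 + 2) := by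
    have h := warren (fun c => Co.poly (n := n) c) Co.poly_degree
    have hcard : Fintype.card (Co n) = n * 4 + 2 := by simp [Co]
    rw [hcard] at h
    refine le_trans (Set.ncard_le_ncard ?_ (Set.toFinite _)) h
    rintro _ ⟨z, -, rfl⟩
    refine ⟨(w z).1, trivial, ?_⟩
    funext c
    exact propext ((Co.poly_iff c (w z)).symm.trans (hw1 z c).symm)
  have hlg : lgPat (leadTest (n := n)) Set.univ ≤ (28 + 1560 * ((r : ℝ) + 1)) * (6 * n) := by
    have h := patterns_le (ρ := r + 1) hn (by exact_mod_cast hnr) (card_testName_le hn) hpat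
    have hpos : 0 < numPat (leadTest (n := n)) Set.univ := numPat_pos hne
    have h' : (numPat (leadTest (n := n)) Set.univ : ℝ) ≤
        (2 : ℝ) ^ ((28 + 1560 * (r + 1)) * (6 * n)) := by exact_mod_cast h
    have h2 := Real.logb_le_logb_of_le (b := 2) (by norm_num) (by exact_mod_cast hpos) h'
    rw [Real.logb_pow, Real.logb_self_eq_one (by norm_num)] at h2
    push_cast at h2
    unfold lgPat
    linarith
  have hb : (0 : ℝ) ≤ (n : ℝ) := Nat.cast_nonneg n
  have hcP : (Fintype.card (Fin n × Bool) : ℝ) = n * 2 := by simp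
  have hcL : (Fintype.card (Fin n) : ℝ) = n := by simp
  have hlev := hT.levels (τ := fun z => crossings n z.1) hr
    (by rw [hcL]; linarith [pow_nonneg (show (0 : ℝ) ≤ (r : ℝ) + 1 by linarith) 120])
    (by rw [hcP]; linarith) 40 Finset.univ Finset.univ
  rw [Finset.card_univ, Finset.card_univ, hcP, hcL] at hlev
  refine (hlev Set.univ subset_rfl hne 0 ?_).mono subset_rfl
    (total_le hr hb hnr hlg)
  intro S _ hS hagree
  refine ⟨0, ?_, .leaf _ _ fun z hz z' hz' => ?_⟩
  · have := lgPat_nonneg (φ := leadTest (n := n)) hS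
    push_cast
    have h1 : (0 : ℝ) ≤ ((r : ℝ) + 1) ^ 39 := by positivity
    nlinarith [mul_nonneg h1 this]
  · have hab : ∀ p j, Co.Above (w z).1 p j ↔ Co.Above (w z').1 p j := fun p j =>
      hagree z hz z' hz' p (Finset.mem_univ _) j (Finset.mem_univ _)
    have hcr : ∀ i j, Co.Cross (w z).1 i j ↔ Co.Cross (w z').1 i j := fun i j => by
      unfold Co.Cross
      rw [hab, hab]
    change crossings n z.1 = crossings n z'.1
    unfold crossings
    congr 1
    refine Finset.filter_congr fun ij _ => and_congr_right fun hlt => ?_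
    rw [hw2 z _ _ hlt.ne, hw2 z' _ _ hlt.ne, hcr, hcr]

/-- A decision procedure using the comparisons is an algebraic decision tree: each comparison needs
the signs of at most `7 * 400 + 1` coefficients. -/
theorem exists_tree {d : ℕ}
    (h : Solv (leadTest (n := n)) (fun z => crossings n z.1) Set.univ d) :
    ∃ T : ADT (4 * n) ℕ, T.DegLE 400 ∧ T.depth ≤ 2801 * d ∧
      ∀ x, GenPos n x → T.eval x = crossings n x := by
  have hnat : ∀ c, (leadPoly (n := n) c).natDegree < 2801 := fun c => by
    have := (leadPoly_deg c).1
    omega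
  have hcoef : ∀ c j, ((leadPoly (n := n) c).coeff j).totalDegree ≤ 400 := fun c =>
    (leadPoly_deg c).2
  have hiff : ∀ c (z : {x : Fin (4 * n) → ℝ // GenPos n x}), leadTest c z ↔
      0 ≤ ((leadPoly c).map (MvPolynomial.eval z.1)).leadingCoeff := fun _ _ => Iff.rfl
  obtain ⟨T, h1, h2, h3⟩ := Solv.toADT _ leadPoly hcoef hnat hiff h
  exact ⟨T, h1, h2, fun x hx => h3 ⟨x, hx⟩ (Set.mem_univ _)⟩

end Assembly

/-- **Decision-tree complexity of line segment intersection counting in the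
plane:** an algebraic decision tree of constant degree and depth `O(n^{4/3})`
counting the intersecting pairs among `n` segments in general position. -/
theorem segment_intersection_counting_decision_tree :
    ∃ (C : ℝ) (D : ℕ), ∀ n : ℕ, 1 ≤ n →
      ∃ T : ADT (4 * n) ℕ,
        T.DegLE D ∧
        (T.depth : ℝ) ≤ C * (n : ℝ) ^ ((4 : ℝ) / 3) ∧
        ∀ x : Fin (4 * n) → ℝ,
          (Function.Injective fun ic : Fin n × Bool =>
            if ic.2 then segU n x ic.1 else segV n x ic.1) →
          (∀ i j : Fin n, i ≠ j →
            segU n x i ∉ segment ℝ (segU n x j) (segV n x j) ∧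
            segV n x i ∉ segment ℝ (segU n x j) (segV n x j)) →
          T.eval x =
            ((Finset.univ : Finset (Fin n × Fin n)).filter fun ij =>
              ij.1 < ij.2 ∧
                (segment ℝ (segU n x ij.1) (segV n x ij.1) ∩
                  segment ℝ (segU n x ij.2) (segV n x ij.2)).Nonempty).card := by
  refine ⟨2801 * (totalConst * 22 ^ 160), 400, fun n hn => ?_⟩
  obtain ⟨r, hr, hnr, hr160⟩ := exists_ratio hn
  obtain ⟨d, hd, hsolv⟩ := solv_crossings hn hr hnr
  obtain ⟨T, hdeg, hdepth, hT⟩ := exists_tree hsolv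
  refine ⟨T, hdeg, ?_, fun x hx1 hx2 => hT x ⟨hx1, hx2⟩⟩
  have h1 : (T.depth : ℝ) ≤ 2801 * d := by exact_mod_cast hdepth
  exact depth_arith totalConst_nonneg h1 hd hr160
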